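/- Let L = L_{−1} ⊕ L_0 ⊕ ... ⊕ L_k be a graded Lie subalgebra of Vect_pol(E) (a finite direct sum, hence finite-dimensional). Then L is a maximal subalgebra of Vect_pol(E) if and only if: (1) L_{−1} = Vect_{−1}(E), i.e. L contains all constant vector fields; (2) L is irreducible; (3) L_1 ≠ 0; and (4) in the case 𝕂 = ℝ, the representation (L_{−1}, ad|_{L_0}) admits no complex structure. -/

import Mathlib

/-!
A vector field is a derivation `D` of `K[x₁, …, xₙ]`; `H K n k` is the space of fields with
homogeneous coefficients of degree `k`, which is `Vect_{k-1}`, and `cmpt k` is the projection onto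
it. `cst v` is the constant field `v` and `lin A` the linear field `x ↦ A x`.

*Necessity.* If one of the conditions fails, `L` is strictly contained in a proper subalgebra. If
the constant fields in `L` form a proper subspace `F`, take the stabilizer of the ideal of `F` (`cst_mem_of_maximal`); if a
proper nonzero subspace `F` is invariant, the fields preserving the foliation parallel to `F`
(`irreducible_of_maximal`); if `L₁ = 0`, the projective algebra (`exists_H_two_of_maximal`); if `J`
is a complex structure, the `J`-holomorphic fields (`not_complex_of_maximal`).

*Sufficiency over an algebraically closed field* (`Std.maximal`). Let `M ⊇ L`. A nonzero abelian
ideal of `L` would contain all constant fields, which is incompatible with a nonzero quadratic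
field; hence `L + K euler` is semisimple, so perfect, so equal to `L`, and `euler ∈ L`. Thus `M` is
graded.

If `M` is finite-dimensional it is semisimple too. Its Killing form pairs `M₋₁` with `M₁`, so
`dim M₁ = n = dim L₁`, and then the orthogonal of `L` in `M` vanishes degree by degree: `M = L`
(`Std.eq_of_finiteDimensional`).

If `M` is infinite-dimensional, its annihilator under the pairing `⟨f, g⟩ = f(∂) g (0)` is a
submodule of a free module over the polynomial ring, of infinite codimension, and the
Nullstellensatz yields a nonzero point where its values do not span; equivalently, `M` contains
`ξ ^ k ∂_w` for all `k`, for some `ξ, w ≠ 0` (`exists_pow_smul_cst`). In particular `M₀` is an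
irreducible linear Lie algebra containing the identity and a rank one element `w ⊗ ξ`. Since the
trace cannot vanish on `⁅∂_w, L₁⁆` (`Std.exists_tau_ne_zero`), `M₀ = gl n`: if `ξ w ≠ 0` this is
elementary, and if `ξ w = 0` one completes `w ⊗ ξ` to an `sl₂`-triple; the alternative to `gl n` is
that the weight one part carries an invariant skew form, for which elements of the first
prolongation are traceless (`eq_top_of_op_mem`). With `gl n` and all `ξ ^ k ∂_w`, `M` contains all
divergence-free fields by the Koszul formula, and the quadratic field of nonzero divergence then
gives everything (`eq_top_of_pow_smul_cst_mem`).

*Sufficiency over the reals* (`Std.maximal_of_cplx`). The complexification of `L` satisfies the same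
conditions; an invariant complex subspace of `ℂⁿ` that is neither `0` nor everything would be the
graph of a complex structure (`irr_cplx`). So `L ⊗ ℂ` is maximal, and hence so is `L`.
-/

open MvPolynomial

/-- The Lie algebra of polynomial vector fields on `E = 𝕜^n`, realized as the
derivations of the polynomial algebra `𝕜[x_1, …, x_n]`. -/
abbrev Vect (𝕜 : Type*) [Field 𝕜] (n : ℕ) : Type _ :=
  Derivation 𝕜 (MvPolynomial (Fin n) 𝕜) (MvPolynomial (Fin n) 𝕜)

variable (𝕜 : Type*) [Field 𝕜] (n : ℕ)

/-- The Euler vector field `ℰ = Σ x^j ∂_j`. -/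
noncomputable def euler : Vect 𝕜 n :=
  MvPolynomial.mkDerivation 𝕜 fun i => MvPolynomial.X i

/-- `Vect_p(E)`: the eigenspace of `ad(ℰ)` for the eigenvalue `p`, i.e. the vector fields
with homogeneous coefficients of degree `p+1`. -/
noncomputable def VectP (p : ℤ) : Submodule 𝕜 (Vect 𝕜 n) :=
  Module.End.eigenspace (LieAlgebra.ad 𝕜 (Vect 𝕜 n) (euler 𝕜 n)) ((p : 𝕜))

/-- A Lie subalgebra `L` of `Vect_pol(E)` is graded if `L = ⊕_{p ≥ -1} (L ∩ Vect_p(E))`. -/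
def IsGradedSubalg (L : LieSubalgebra 𝕜 (Vect 𝕜 n)) : Prop :=
  L.toSubmodule = ⨆ p ≥ (-1 : ℤ), (L.toSubmodule ⊓ VectP 𝕜 n p)

/-- A Lie subalgebra `L` of `Vect_pol(E)` is maximal if the only subalgebras containing it
are `L` itself and `Vect_pol(E)`. -/
def IsMaxSubalg (L : LieSubalgebra 𝕜 (Vect 𝕜 n)) : Prop :=
  ∀ L' : LieSubalgebra 𝕜 (Vect 𝕜 n), L ≤ L' → L' = L ∨ L' = ⊤

/-- A graded subalgebra `L` is irreducible if the representation of `L₀ = L ∩ Vect_0(E)` on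
`L₋₁ = L ∩ Vect_{-1}(E)` given by the adjoint action is irreducible. -/
def IsIrreducibleRep (L : LieSubalgebra 𝕜 (Vect 𝕜 n)) : Prop :=
  L.toSubmodule ⊓ VectP 𝕜 n (-1) ≠ ⊥ ∧
    ∀ F : Submodule 𝕜 (Vect 𝕜 n), F ≤ L.toSubmodule ⊓ VectP 𝕜 n (-1) →
      (∀ x ∈ L.toSubmodule ⊓ VectP 𝕜 n 0, ∀ y ∈ F, ⁅x, y⁆ ∈ F) →
      F = ⊥ ∨ F = L.toSubmodule ⊓ VectP 𝕜 n (-1)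

/-- The representation `(L₋₁, ad|_{L₀})` admits a complex structure: a linear map `J` with
`J ∘ J = -id` on `L₋₁`, preserving `L₋₁` and commuting with the adjoint action of `L₀`. -/
def HasComplexStructureRep (L : LieSubalgebra 𝕜 (Vect 𝕜 n)) : Prop :=
  ∃ J : Vect 𝕜 n →ₗ[𝕜] Vect 𝕜 n,
    (∀ y ∈ L.toSubmodule ⊓ VectP 𝕜 n (-1), J y ∈ L.toSubmodule ⊓ VectP 𝕜 n (-1)) ∧
    (∀ y ∈ L.toSubmodule ⊓ VectP 𝕜 n (-1), J (J y) = -y) ∧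
    (∀ x ∈ L.toSubmodule ⊓ VectP 𝕜 n 0, ∀ y ∈ L.toSubmodule ⊓ VectP 𝕜 n (-1),
      J ⁅x, y⁆ = ⁅x, J y⁆)

namespace PolyVect

/-! ### Linear forms, constant and linear vector fields -/

section Basics

variable {K : Type*} [Field K] {n : ℕ}

/-- A linear form `ξ` on `Kⁿ`, viewed as a polynomial. -/
noncomputable def lf : Module.Dual K (Fin n → K) →ₗ[K] MvPolynomial (Fin n) K where
  toFun ξ := ∑ j, C (ξ (Pi.single j 1)) * X j
  map_add' ξ η := by simp [add_mul, Finset.sum_add_distrib]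
  map_smul' a ξ := by simp [Finset.smul_sum, smul_eq_C_mul, mul_assoc]

/-- The constant vector field with value `v`. -/
noncomputable def cst : (Fin n → K) →ₗ[K] Vect K n where
  toFun v := mkDerivation K fun i => C (v i)
  map_add' v w := by apply derivation_ext; intro i; simp
  map_smul' a v := by apply derivation_ext; intro i; simp [smul_eq_C_mul]

/-- The linear vector field `x ↦ A x`. -/
noncomputable def lin : Module.End K (Fin n → K) →ₗ[K] Vect K n where
  toFun A := mkDerivation K fun i => lf (LinearMap.proj i ∘ₗ A)
  map_add' A B := by apply derivation_ext; intro i; simp [LinearMap.comp_add]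
  map_smul' a A := by apply derivation_ext; intro i; simp [LinearMap.comp_smul]

theorem lf_apply (ξ : Module.Dual K (Fin n → K)) :
    lf ξ = ∑ j, C (ξ (Pi.single j 1)) * X j := rfl

@[simp] theorem cst_X (v : Fin n → K) (i : Fin n) : cst v (X i) = C (v i) := by
  simp [cst]

@[simp] theorem lin_X (A : Module.End K (Fin n → K)) (i : Fin n) :
    lin A (X i) = lf (LinearMap.proj i ∘ₗ A) := by
  simp [lin]

@[simp] theorem euler_X (i : Fin n) : euler K n (X i) = X i := by
  simp [euler]

theorem dual_apply_eq_sum (ξ : Module.Dual K (Fin n → K)) (v : Fin n → K) :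
    ξ v = ∑ j, v j * ξ (Pi.single j 1) := by
  have h : v = ∑ j, v j • (Pi.single j 1 : Fin n → K) := by
    ext i; simp [Pi.single_apply]
  conv_lhs => rw [h]
  simp only [map_sum, map_smul, smul_eq_mul]

@[simp] theorem cst_lf (v : Fin n → K) (ξ : Module.Dual K (Fin n → K)) :
    cst v (lf ξ) = C (ξ v) := by
  rw [lf_apply, dual_apply_eq_sum ξ v]
  simp [Derivation.leibniz, mul_comm]

theorem lf_proj (i : Fin n) : lf (LinearMap.proj i : (Fin n → K) →ₗ[K] K) = X i := by
  rw [lf_apply]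
  simp [Pi.single_apply]

@[simp] theorem lin_lf (A : Module.End K (Fin n → K)) (ξ : Module.Dual K (Fin n → K)) :
    lin A (lf ξ) = lf (ξ ∘ₗ A) := by
  have h : ξ ∘ₗ A = ∑ j, ξ (Pi.single j 1) • (LinearMap.proj j ∘ₗ A) := by
    refine LinearMap.ext fun v => ?_
    rw [LinearMap.comp_apply, dual_apply_eq_sum ξ (A v)]
    simp [mul_comm]
  rw [h, map_sum, lf_apply]
  simp [Derivation.leibniz, smul_eq_C_mul]

theorem sum_apply {ι : Type*} (s : Finset ι) (F : ι → Vect K n) (f : MvPolynomial (Fin n) K) :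
    (∑ k ∈ s, F k) f = ∑ k ∈ s, F k f := by
  induction s using Finset.cons_induction with
  | empty => simp
  | cons a s ha ih => rw [Finset.sum_cons, Finset.sum_cons, Derivation.add_apply, ih]

theorem lie_X (D D' : Vect K n) (i : Fin n) :
    ⁅D, D'⁆ (X i) = D (D' (X i)) - D' (D (X i)) := rfl

@[simp] theorem lie_cst_apply_X (v : Fin n → K) (D : Vect K n) (i : Fin n) :
    ⁅cst v, D⁆ (X i) = cst v (D (X i)) := by
  simp [Derivation.commutator_apply]

@[simp] theorem lie_cst_cst (v w : Fin n → K) : ⁅cst v, cst w⁆ = 0 := by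
  apply derivation_ext; intro i; simp

@[simp] theorem lie_cst_lin (v : Fin n → K) (A : Module.End K (Fin n → K)) :
    ⁅cst v, lin A⁆ = cst (A v) := by
  apply derivation_ext; intro i; simp

@[simp] theorem lie_lin_cst (v : Fin n → K) (A : Module.End K (Fin n → K)) :
    ⁅lin A, cst v⁆ = - cst (A v) := by
  rw [← lie_skew, lie_cst_lin]

theorem lie_lin_lin (A B : Module.End K (Fin n → K)) :
    ⁅lin A, lin B⁆ = lin ⁅B, A⁆ := by
  apply derivation_ext; intro i
  rw [lie_X]
  rw [lin_X, lin_X, lin_X, lin_lf, lin_lf, Ring.lie_def, LinearMap.comp_sub, map_sub]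
  rfl

theorem lin_smulRight (ξ : Module.Dual K (Fin n → K)) (w : Fin n → K) :
    lin (ξ.smulRight w) = lf ξ • cst w := by
  apply derivation_ext; intro i
  have : LinearMap.proj i ∘ₗ ξ.smulRight w = w i • ξ := by
    ext v; simp [mul_comm]
  rw [lin_X, this]
  simp [smul_eq_C_mul, mul_comm]

theorem lin_one : lin (1 : Module.End K (Fin n → K)) = euler K n := by
  apply derivation_ext; intro i
  rw [lin_X, euler_X, ← lf_proj (K := K) i]
  rfl

theorem euler_monomial (a : Fin n →₀ ℕ) (b : K) :
    euler K n (monomial a b) = (a.degree : K) • monomial a b := by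
  have : (a.sum fun i k => (monomial (a - Finsupp.single i 1) (k : K) :
      MvPolynomial (Fin n) K) • (X i : MvPolynomial (Fin n) K)) =
      a.sum fun i k => (monomial a (k : K)) := by
    apply Finsupp.sum_congr
    intro i hi
    rw [smul_eq_mul, X, monomial_mul, mul_one]
    congr 2
    apply tsub_add_cancel_of_le
    simpa [Finsupp.single_le_iff, Nat.one_le_iff_ne_zero] using hi
  simp only [euler, mkDerivation_monomial]
  rw [this, Finsupp.sum, ← map_sum, ← Nat.cast_sum, ← Finsupp.degree_apply]
  simp [smul_monomial, mul_comm]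

theorem coeff_euler (f : MvPolynomial (Fin n) K) (m : Fin n →₀ ℕ) :
    coeff m (euler K n f) = (m.degree : K) * coeff m f := by
  induction f using MvPolynomial.induction_on' with
  | monomial a b =>
    rw [euler_monomial, coeff_smul, coeff_monomial]
    split_ifs with h
    · rw [h, smul_eq_mul]
    · simp
  | add p q hp hq => rw [map_add, coeff_add, coeff_add, hp, hq, mul_add]

theorem add_lieV (a b c : Vect K n) : ⁅a + b, c⁆ = ⁅a, c⁆ + ⁅b, c⁆ := add_lie a b c

theorem lie_addV (a b c : Vect K n) : ⁅a, b + c⁆ = ⁅a, b⁆ + ⁅a, c⁆ := lie_add a b c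

theorem sub_lieV (a b c : Vect K n) : ⁅a - b, c⁆ = ⁅a, c⁆ - ⁅b, c⁆ := sub_lie a b c

theorem lie_subV (a b c : Vect K n) : ⁅a, b - c⁆ = ⁅a, b⁆ - ⁅a, c⁆ := lie_sub a b c

theorem neg_lieV (a b : Vect K n) : ⁅-a, b⁆ = -⁅a, b⁆ := neg_lie a b

theorem lie_negV (a b : Vect K n) : ⁅a, -b⁆ = -⁅a, b⁆ := lie_neg a b

theorem zero_lieV (a : Vect K n) : ⁅(0 : Vect K n), a⁆ = 0 := zero_lie a

theorem lie_zeroV (a : Vect K n) : ⁅a, (0 : Vect K n)⁆ = 0 := lie_zero a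

theorem smul_lieV (t : K) (a b : Vect K n) : ⁅t • a, b⁆ = t • ⁅a, b⁆ := smul_lie t a b

theorem lie_smulV (t : K) (a b : Vect K n) : ⁅a, t • b⁆ = t • ⁅a, b⁆ := lie_smul t a b

theorem lie_lieV (a b c : Vect K n) : ⁅⁅a, b⁆, c⁆ = ⁅a, ⁅b, c⁆⁆ - ⁅b, ⁅a, c⁆⁆ := lie_lie a b c

theorem leibniz_lieV (a b c : Vect K n) : ⁅a, ⁅b, c⁆⁆ = ⁅⁅a, b⁆, c⁆ + ⁅b, ⁅a, c⁆⁆ :=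
  by rw [lie_lieV]; abel

theorem psub_smul (f g : MvPolynomial (Fin n) K) (D : Vect K n) : (f - g) • D = f • D - g • D := by
  ext1; simp [sub_mul]

theorem padd_smul (f g : MvPolynomial (Fin n) K) (D : Vect K n) : (f + g) • D = f • D + g • D := by
  ext1; simp [add_mul]

theorem C_smul (a : K) (D : Vect K n) : (C a : MvPolynomial (Fin n) K) • D = a • D := by
  ext1; simp [smul_eq_C_mul]

end Basics

/-! ### The grading by degree -/

section Grading

variable {K : Type*} [Field K] {n : ℕ}

/-- The vector fields with homogeneous coefficients of degree `k`, i.e. `Vect_{k-1}`. The index is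
shifted by one with respect to the usual grading so that it is a natural number. -/
noncomputable def H (K : Type*) [Field K] (n : ℕ) (k : ℕ) : Submodule K (Vect K n) where
  carrier := {D | ∀ i, (D (X i)).IsHomogeneous k}
  add_mem' h1 h2 i := (h1 i).add (h2 i)
  zero_mem' i := isHomogeneous_zero _ _ _
  smul_mem' a D h i := by
    rw [Derivation.smul_apply]
    exact (homogeneousSubmodule (Fin n) K k).smul_mem a (h i)

theorem mem_H {k : ℕ} {D : Vect K n} : D ∈ H K n k ↔ ∀ i, (D (X i)).IsHomogeneous k := Iff.rfl

/-- The component of a vector field in `H k`. -/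
noncomputable def cmpt (k : ℕ) : Vect K n →ₗ[K] Vect K n where
  toFun D := mkDerivation K fun i => homogeneousComponent k (D (X i))
  map_add' D D' := by apply derivation_ext; intro i; simp
  map_smul' a D := by apply derivation_ext; intro i; simp

@[simp] theorem cmpt_X (k : ℕ) (D : Vect K n) (i : Fin n) :
    cmpt k D (X i) = homogeneousComponent k (D (X i)) := by simp [cmpt]

theorem cmpt_mem (k : ℕ) (D : Vect K n) : cmpt k D ∈ H K n k := fun i => by
  rw [cmpt_X]; exact homogeneousComponent_isHomogeneous _ _

theorem cmpt_of_mem {k : ℕ} {D : Vect K n} (h : D ∈ H K n k) : cmpt k D = D := by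
  apply derivation_ext; intro i
  rw [cmpt_X, homogeneousComponent_of_mem (h i), if_pos rfl]

theorem cmpt_of_mem_ne {k l : ℕ} {D : Vect K n} (h : D ∈ H K n l) (hkl : k ≠ l) :
    cmpt k D = 0 := by
  apply derivation_ext; intro i
  rw [cmpt_X, homogeneousComponent_of_mem (h i), if_neg hkl]; rfl

theorem exists_sum_cmpt (D : Vect K n) :
    ∃ N, D = ∑ k ∈ Finset.range N, cmpt k D ∧ ∀ k, N ≤ k → cmpt k D = 0 := by
  refine ⟨(Finset.univ.sup fun i => (D (X i)).totalDegree) + 1, ?_, ?_⟩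
  · apply derivation_ext; intro i
    have hs : (∑ k ∈ Finset.range ((Finset.univ.sup fun i => (D (X i)).totalDegree) + 1),
        cmpt k D) (X i) = ∑ k ∈ Finset.range ((Finset.univ.sup fun i => (D (X i)).totalDegree) + 1),
        homogeneousComponent k (D (X i)) := by
      simp [sum_apply]
    rw [hs]
    conv_lhs => rw [← sum_homogeneousComponent (D (X i))]
    apply Finset.sum_subset
    · intro k hk
      have := Finset.le_sup (f := fun i => (D (X i)).totalDegree) (Finset.mem_univ i)
      simp only [Finset.mem_range] at hk ⊢
      omega
    · intro k _ hk
      apply homogeneousComponent_eq_zero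
      simp only [Finset.mem_range] at hk
      omega
  · intro k hk
    apply derivation_ext; intro i
    have := Finset.le_sup (f := fun i => (D (X i)).totalDegree) (Finset.mem_univ i)
    rw [cmpt_X, homogeneousComponent_eq_zero]
    · rfl
    · omega

theorem eq_zero_of_cmpt {D : Vect K n} (h : ∀ k, cmpt k D = 0) : D = 0 := by
  obtain ⟨N, hN, _⟩ := exists_sum_cmpt D
  rw [hN]; exact Finset.sum_eq_zero fun k _ => h k

theorem mem_of_cmpt_mem {M : Submodule K (Vect K n)} {D : Vect K n} (h : ∀ k, cmpt k D ∈ M) :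
    D ∈ M := by
  obtain ⟨N, hN, _⟩ := exists_sum_cmpt D
  rw [hN]; exact M.sum_mem fun k _ => h k

theorem deriv_eq_sum (D : Vect K n) : D = ∑ i, D (X i) • cst (Pi.single i 1) := by
  apply derivation_ext; intro j
  simp [sum_apply, Pi.single_apply]

theorem deriv_apply_eq_sum (D : Vect K n) (f : MvPolynomial (Fin n) K) :
    D f = ∑ i, D (X i) * cst (Pi.single i 1) f := by
  conv_lhs => rw [deriv_eq_sum D]
  simp [sum_apply]

theorem cst_single (i : Fin n) : cst (Pi.single i 1) = (pderiv i : Vect K n) := by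
  apply derivation_ext; intro j
  simp [Pi.single_apply, pderiv_X]

theorem cst_isHomogeneous {f : MvPolynomial (Fin n) K} {d : ℕ} (hf : f.IsHomogeneous d)
    (v : Fin n → K) : (cst v f).IsHomogeneous (d - 1) := by
  rw [deriv_apply_eq_sum]
  apply IsHomogeneous.sum
  intro i _
  rw [cst_X, cst_single]
  have := (isHomogeneous_C (Fin n) (v i)).mul (hf.pderiv (i := i))
  simpa using this

theorem cst_of_isHomogeneous_zero {f : MvPolynomial (Fin n) K} (hf : f.IsHomogeneous 0)
    (D : Vect K n) : D f = 0 := by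
  rw [← totalDegree_zero_iff_isHomogeneous, totalDegree_eq_zero_iff_eq_C] at hf
  rw [hf, derivation_C]

theorem apply_isHomogeneous {D : Vect K n} {k : ℕ} (hD : D ∈ H K n k)
    {f : MvPolynomial (Fin n) K} {d : ℕ} (hf : f.IsHomogeneous (d + 1)) :
    (D f).IsHomogeneous (k + d) := by
  rw [deriv_apply_eq_sum]
  apply IsHomogeneous.sum
  intro i _
  exact (hD i).mul (cst_isHomogeneous hf _)

theorem mem_H_zero {D : Vect K n} : D ∈ H K n 0 ↔ ∃ v, D = cst v := by
  constructor
  · intro h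
    refine ⟨fun i => coeff 0 (D (X i)), ?_⟩
    apply derivation_ext; intro i
    rw [cst_X]
    have := h i
    rwa [← totalDegree_zero_iff_isHomogeneous, totalDegree_eq_zero_iff_eq_C] at this
  · rintro ⟨v, rfl⟩ i
    rw [cst_X]; exact isHomogeneous_C _ _

theorem cst_mem (v : Fin n → K) : cst v ∈ H K n 0 := mem_H_zero.2 ⟨v, rfl⟩

theorem lf_isHomogeneous (ξ : Module.Dual K (Fin n → K)) : (lf ξ).IsHomogeneous 1 := by
  rw [lf_apply]
  apply IsHomogeneous.sum
  intro i _
  simpa using (isHomogeneous_C (Fin n) (ξ (Pi.single i 1))).mul (isHomogeneous_X K i)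

theorem eq_sum_of_isHomogeneous_one {f : MvPolynomial (Fin n) K} (hf : f.IsHomogeneous 1) :
    f = ∑ j, coeff (Finsupp.single j 1) f • X j := by
  ext m
  simp only [coeff_sum, coeff_smul, coeff_X, smul_eq_mul, mul_ite, mul_one, mul_zero]
  by_cases hm : m.degree = 1
  · obtain ⟨j, rfl⟩ : ∃ j, m = Finsupp.single j 1 := by
      have h0 : m ≠ 0 := by rintro rfl; simp at hm
      obtain ⟨j, hj⟩ := Finsupp.ne_iff.1 h0
      have hle : Finsupp.single j 1 ≤ m := by
        rw [Finsupp.single_le_iff]; exact Nat.one_le_iff_ne_zero.2 hj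
      have hd := congrArg Finsupp.degree (tsub_add_cancel_of_le hle)
      rw [map_add, hm, Finsupp.degree_single] at hd
      have hz : m - Finsupp.single j 1 = 0 :=
        (Finsupp.degree_eq_zero_iff _).1 (by omega)
      refine ⟨j, ?_⟩
      rw [← tsub_add_cancel_of_le hle, hz, zero_add]
    simp [Finsupp.single_left_inj]
  · rw [hf.coeff_eq_zero hm, Finset.sum_eq_zero]
    intro j _
    rw [if_neg]
    rintro rfl
    exact hm (Finsupp.degree_single j 1)

theorem mem_H_one {D : Vect K n} : D ∈ H K n 1 ↔ ∃ A, D = lin A := by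
  constructor
  · intro h
    refine ⟨LinearMap.pi fun i => ∑ j, coeff (Finsupp.single j 1) (D (X i)) • LinearMap.proj j, ?_⟩
    apply derivation_ext; intro i
    rw [lin_X, LinearMap.proj_pi, map_sum]
    simp only [map_smul, lf_proj]
    exact eq_sum_of_isHomogeneous_one (h i)
  · rintro ⟨A, rfl⟩ i
    rw [lin_X]; exact lf_isHomogeneous _

theorem lin_mem (A : Module.End K (Fin n → K)) : lin A ∈ H K n 1 := mem_H_one.2 ⟨A, rfl⟩

theorem euler_mem : euler K n ∈ H K n 1 := lin_one (K := K) (n := n) ▸ lin_mem _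

theorem lie_mem_H {D D' : Vect K n} {a b c : ℕ} (h : D ∈ H K n a) (h' : D' ∈ H K n b)
    (hc : a + b = c + 1) : ⁅D, D'⁆ ∈ H K n c := by
  have key : ∀ {D D' : Vect K n} {a b : ℕ}, D ∈ H K n a → D' ∈ H K n b → a + b = c + 1 →
      ∀ i, (D (D' (X i))).IsHomogeneous c := by
    intro D D' a b h h' hc i
    rcases b with _ | b
    · rw [cst_of_isHomogeneous_zero (h' i)]; exact isHomogeneous_zero _ _ _
    · have := apply_isHomogeneous h (h' i)
      have e : a + b = c := by omega
      rwa [e] at this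
  intro i
  rw [lie_X]
  exact (key h h' hc i).sub (key h' h (by omega) i)

end Grading

/-! ### The grading and the Euler field -/

section Grading2

variable {K : Type*} [Field K] {n : ℕ}

theorem euler_lie {D : Vect K n} {k : ℕ} (h : D ∈ H K n k) :
    ⁅euler K n, D⁆ = ((k : K) - 1) • D := by
  apply derivation_ext; intro i
  rw [lie_X, euler_X, Derivation.smul_apply]
  ext m
  rw [coeff_sub, coeff_euler, coeff_smul, smul_eq_mul]
  by_cases hm : m.degree = k
  · rw [hm]; ring
  · rw [(h i).coeff_eq_zero hm]; ring

theorem VectP_eq [CharZero K] (k : ℕ) (p : ℤ) (hp : p = (k : ℤ) - 1) : VectP K n p = H K n k := by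
  subst hp
  ext D
  rw [VectP, Module.End.mem_eigenspace_iff, LieAlgebra.ad_apply]
  constructor
  · intro h i m hm
    have h1 := congrArg (fun D' : Vect K n => coeff m (D' (X i))) h
    simp only [lie_X, euler_X, Derivation.smul_apply, coeff_sub, coeff_euler, coeff_smul,
      smul_eq_mul, Int.cast_sub, Int.cast_natCast, Int.cast_one] at h1
    have h2 : ((m.degree : K) - k) * coeff m (D (X i)) = 0 := by linear_combination h1
    rcases mul_eq_zero.1 h2 with h3 | h3
    · have h4 : m.degree = k := by exact_mod_cast sub_eq_zero.1 h3
      rw [← h4, Finsupp.degree_eq_weight_one]; rfl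
    · exact absurd h3 hm
  · intro h
    rw [euler_lie h]; simp

/-- A subspace stable under an endomorphism contains the components of its elements along
eigenvectors with distinct eigenvalues. -/
theorem mem_of_sum_eigen {V ι : Type*} [AddCommGroup V] [Module K V] (f : Module.End K V)
    (M : Submodule K V) (hf : ∀ x ∈ M, f x ∈ M) (s : Finset ι) :
    ∀ (d : ι → V) (μ : ι → K), (∀ k ∈ s, f (d k) = μ k • d k) → Set.InjOn μ s →
      ∑ k ∈ s, d k ∈ M → ∀ k ∈ s, d k ∈ M := by
  classical
  induction s using Finset.induction_on with
  | empty => simp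
  | insert a s ha ih =>
    intro d μ hd hμ hs
    have hs' : ∀ k ∈ s, (μ k - μ a) • d k ∈ M := by
      apply ih (fun k => (μ k - μ a) • d k) μ
      · intro k hk
        rw [map_smul, hd k (Finset.mem_insert_of_mem hk), smul_comm]
      · exact hμ.mono (by simp)
      · have h1 := M.sub_mem (hf _ hs) (M.smul_mem (μ a) hs)
        rw [map_sum, Finset.smul_sum, ← Finset.sum_sub_distrib, Finset.sum_insert ha,
          hd a (Finset.mem_insert_self _ _), sub_self, zero_add] at h1
        convert h1 using 1
        apply Finset.sum_congr rfl
        intro k hk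
        rw [hd k (Finset.mem_insert_of_mem hk), sub_smul]
    have hsm : ∀ k ∈ s, d k ∈ M := by
      intro k hk
      have hne : μ k - μ a ≠ 0 := by
        intro h0
        have := hμ (by simp [hk]) (by simp) (sub_eq_zero.1 h0)
        exact ha (this ▸ hk)
      have := M.smul_mem (μ k - μ a)⁻¹ (hs' k hk)
      rwa [smul_smul, inv_mul_cancel₀ hne, one_smul] at this
    intro k hk
    rcases Finset.mem_insert.1 hk with rfl | hk
    · rw [Finset.sum_insert ha] at hs
      exact (Submodule.add_mem_iff_left M (M.sum_mem hsm)).1 hs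
    · exact hsm k hk

theorem cmpt_mem_of_euler_stable [CharZero K] {M : Submodule K (Vect K n)}
    (hM : ∀ D ∈ M, ⁅euler K n, D⁆ ∈ M) {D : Vect K n} (hD : D ∈ M) (k : ℕ) : cmpt k D ∈ M := by
  obtain ⟨N, hN, hN'⟩ := exists_sum_cmpt D
  by_cases hk : k < N
  · refine mem_of_sum_eigen (LieAlgebra.ad K (Vect K n) (euler K n)) M hM (Finset.range N)
      (fun k => cmpt k D) (fun k => (k : K) - 1) ?_ ?_ (hN ▸ hD) k (Finset.mem_range.2 hk)
    · intro k _
      exact euler_lie (cmpt_mem k D)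
    · intro a _ b _ h
      have : (a : K) = b := by simpa using h
      exact_mod_cast this
  · rw [hN' k (not_lt.1 hk)]; exact M.zero_mem

theorem cmpt_mem_of_graded [CharZero K] {L : LieSubalgebra K (Vect K n)}
    (hL : IsGradedSubalg K n L) {D : Vect K n} (hD : D ∈ L) (k : ℕ) : cmpt k D ∈ L := by
  have h : L.toSubmodule ≤ L.toSubmodule.comap (cmpt k) := by
    rw [IsGradedSubalg] at hL
    conv_lhs => rw [hL]
    refine iSup₂_le fun p hp => ?_
    obtain ⟨l, rfl⟩ : ∃ l : ℕ, p = (l : ℤ) - 1 := ⟨(p + 1).toNat, by omega⟩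
    rw [VectP_eq l _ rfl]
    rintro x ⟨hx, hx'⟩
    rw [Submodule.mem_comap]
    by_cases hkl : k = l
    · subst hkl; rwa [cmpt_of_mem hx']
    · rw [cmpt_of_mem_ne hx' hkl]; exact Submodule.zero_mem _
  exact h hD

theorem euler_eq_sum : euler K n = ∑ i, (X i : MvPolynomial (Fin n) K) • cst (Pi.single i 1) := by
  conv_lhs => rw [deriv_eq_sum (euler K n)]
  simp

theorem eq_C_of_cst_eq_zero [CharZero K] {f : MvPolynomial (Fin n) K}
    (h : ∀ v : Fin n → K, cst v f = 0) : f = C (coeff 0 f) := by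
  have he : euler K n f = 0 := by
    rw [deriv_apply_eq_sum]; simp [h]
  ext m
  rw [coeff_C]
  split_ifs with hm
  · rw [hm]
  · have h1 := coeff_euler f m
    rw [he, coeff_zero, zero_eq_mul] at h1
    rcases h1 with h1 | h1
    · exact absurd ((Finsupp.degree_eq_zero_iff _).1 (by exact_mod_cast h1)).symm hm
    · exact h1

/-- Transitivity: a vector field commuting with all constant fields is constant. -/
theorem mem_H_zero_of_lie_cst [CharZero K] {D : Vect K n} (h : ∀ v : Fin n → K, ⁅cst v, D⁆ = 0) :
    D ∈ H K n 0 := by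
  intro i
  have : D (X i) = C (coeff 0 (D (X i))) := by
    apply eq_C_of_cst_eq_zero
    intro v
    rw [← lie_cst_apply_X, h]; rfl
  rw [this]
  exact isHomogeneous_C _ _

theorem eq_zero_of_mem_H_ne {D : Vect K n} {k l : ℕ} (hk : D ∈ H K n k) (hl : D ∈ H K n l)
    (h : k ≠ l) : D = 0 := by
  rw [← cmpt_of_mem hk, cmpt_of_mem_ne hl h]

theorem eq_zero_of_lie_cst [CharZero K] {D : Vect K n} {k : ℕ} (hD : D ∈ H K n (k + 1))
    (h : ∀ v : Fin n → K, ⁅cst v, D⁆ = 0) : D = 0 :=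
  eq_zero_of_mem_H_ne hD (mem_H_zero_of_lie_cst h) (by omega)

theorem cst_injective : Function.Injective (cst : (Fin n → K) →ₗ[K] Vect K n) := by
  intro v w h
  ext i
  have := congrArg (fun D : Vect K n => D (X i)) h
  simpa using this

theorem lf_injective : Function.Injective
    (lf : Module.Dual K (Fin n → K) →ₗ[K] MvPolynomial (Fin n) K) := by
  intro ξ η h
  refine LinearMap.ext fun v => ?_
  have := congrArg (cst v) h
  simpa using this

theorem lin_injective : Function.Injective
    (lin : Module.End K (Fin n → K) →ₗ[K] Vect K n) := by
  intro A B h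
  refine LinearMap.ext fun v => ?_
  have := congrArg (fun D => ⁅cst v, D⁆) h
  simp only [lie_cst_lin] at this
  exact cst_injective this

/-- The vector fields whose coefficients have degree less than `N`. -/
noncomputable def degLT (K : Type*) [Field K] (n : ℕ) (N : ℕ) : Submodule K (Vect K n) where
  carrier := {D | ∀ k, N ≤ k → cmpt k D = 0}
  add_mem' h1 h2 k hk := by rw [map_add, h1 k hk, h2 k hk, add_zero]
  zero_mem' k _ := map_zero _
  smul_mem' a D h k hk := by rw [map_smul, h k hk, smul_zero]

theorem mem_degLT {N : ℕ} {D : Vect K n} : D ∈ degLT K n N ↔ ∀ k, N ≤ k → cmpt k D = 0 := Iff.rfl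

theorem finiteDimensional_degLT (N : ℕ) : FiniteDimensional K (degLT K n N) := by
  let φ : degLT K n N →ₗ[K] (Fin n → restrictTotalDegree (Fin n) K N) :=
    { toFun := fun D i => ⟨D.1 (X i), by
        rw [mem_restrictTotalDegree]
        by_contra! hlt
        obtain ⟨m, hm, hm'⟩ : ∃ m ∈ (D.1 (X i)).support, N < m.degree := by
          rw [totalDegree, Finset.lt_sup_iff] at hlt
          simpa [Finsupp.degree_apply, Finsupp.sum] using hlt
        have := D.2 m.degree hm'.le
        have := congrArg (fun D : Vect K n => coeff m (D (X i))) this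
        simp [coeff_homogeneousComponent] at this
        exact (mem_support_iff.1 hm) this⟩
      map_add' := fun D D' => by ext; simp
      map_smul' := fun a D => by ext; simp }
  refine FiniteDimensional.of_injective φ ?_
  intro D D' h
  apply Subtype.ext
  apply derivation_ext; intro i
  exact congrArg Subtype.val (congrFun h i)

theorem le_degLT_of_finiteDimensional (M : Submodule K (Vect K n)) [FiniteDimensional K M] :
    ∃ N, M ≤ degLT K n N := by
  obtain ⟨s, hs⟩ := Module.Finite.iff_fg.1 (inferInstance : Module.Finite K M)
  choose N hN hN' using fun D : Vect K n => exists_sum_cmpt D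
  refine ⟨s.sup N, ?_⟩
  rw [← hs, Submodule.span_le]
  intro D hD k hk
  exact hN' D k ((Finset.le_sup hD).trans hk)

theorem smul_mem_H {D : Vect K n} {k d : ℕ} {f : MvPolynomial (Fin n) K} (hf : f.IsHomogeneous d)
    (hD : D ∈ H K n k) : f • D ∈ H K n (d + k) := fun i => by
  rw [Derivation.smul_apply, smul_eq_mul]
  exact hf.mul (hD i)

end Grading2

/-! ### Maximal subalgebras contain the constant fields -/

section Forward

variable {K : Type*} [Field K] {n : ℕ}

theorem euler_of_isHomogeneous {f : MvPolynomial (Fin n) K} {d : ℕ} (hf : f.IsHomogeneous d) :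
    euler K n f = (d : K) • f := by
  ext m
  rw [coeff_euler, coeff_smul, smul_eq_mul]
  by_cases hm : m.degree = d
  · rw [hm]
  · rw [hf.coeff_eq_zero hm]; ring

/-- Euler's identity for vector fields. -/
theorem sum_X_smul_lie_cst {D : Vect K n} {k : ℕ} (hD : D ∈ H K n k) :
    ∑ i, (X i : MvPolynomial (Fin n) K) • ⁅cst (Pi.single i (1 : K)), D⁆ = (k : K) • D := by
  apply derivation_ext; intro j
  rw [sum_apply, Derivation.smul_apply, ← euler_of_isHomogeneous (hD j), deriv_apply_eq_sum]
  simp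

theorem lie_smul_right (f : MvPolynomial (Fin n) K) (D D' : Vect K n) :
    ⁅D, f • D'⁆ = D f • D' + f • ⁅D, D'⁆ := by
  apply derivation_ext; intro j
  simp only [lie_X, Derivation.smul_apply, Derivation.add_apply, smul_eq_mul, Derivation.leibniz]
  ring

theorem lie_smul_left (f : MvPolynomial (Fin n) K) (D D' : Vect K n) :
    ⁅f • D, D'⁆ = f • ⁅D, D'⁆ - D' f • D := by
  apply derivation_ext; intro j
  simp only [lie_X, Derivation.smul_apply, Derivation.sub_apply, smul_eq_mul, Derivation.leibniz]
  ring

/-- A finite-dimensional space of vector fields contains no nonzero homogeneous fields of large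
degree. -/
theorem exists_bound (M : Submodule K (Vect K n)) [FiniteDimensional K M] :
    ∃ N, ∀ k, N ≤ k → ∀ D ∈ M, D ∈ H K n k → D = 0 := by
  obtain ⟨N, hN⟩ := le_degLT_of_finiteDimensional M
  exact ⟨N, fun k hk D hD hDk => by rw [← cmpt_of_mem hDk]; exact hN hD k hk⟩

theorem exists_dual_apply_eq_one {u : Fin n → K} (hu : u ≠ 0) :
    ∃ η : Module.Dual K (Fin n → K), η u = 1 := by
  exact Module.Projective.exists_dual_eq_one K hu

theorem smul_cst_ne_zero {f : MvPolynomial (Fin n) K} {v : Fin n → K} (hf : f ≠ 0) (hv : v ≠ 0) :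
    f • cst v ≠ 0 := by
  intro h
  obtain ⟨i, hi⟩ := Function.ne_iff.1 hv
  have := congrArg (fun D : Vect K n => D (X i)) h
  simp [hf] at this
  exact hi this

/-- The constant fields belonging to `L`, as vectors. -/
noncomputable def cpart (L : LieSubalgebra K (Vect K n)) : Submodule K (Fin n → K) :=
  L.toSubmodule.comap cst

theorem mem_cpart {L : LieSubalgebra K (Vect K n)} {v : Fin n → K} :
    v ∈ cpart L ↔ cst v ∈ L := Iff.rfl

/-- The spaces of polynomials vanishing at the origin and stable under the derivatives along `F`. -/
def IsGood (F : Submodule K (Fin n → K)) (W : Submodule K (MvPolynomial (Fin n) K)) : Prop :=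
  (∀ f ∈ W, coeff 0 f = 0) ∧ ∀ u ∈ F, ∀ f ∈ W, cst u f ∈ W

/-- The largest space of polynomials vanishing at the origin and stable under the derivatives
along `F`. It is the ideal of the polynomials vanishing on `F`. -/
noncomputable def bigGood (F : Submodule K (Fin n → K)) : Submodule K (MvPolynomial (Fin n) K) :=
  sSup {W | IsGood F W}

theorem isGood_bigGood (F : Submodule K (Fin n → K)) : IsGood F (bigGood F) := by
  constructor
  · have : bigGood F ≤ LinearMap.ker (lcoeff K (0 : Fin n →₀ ℕ)) :=
      sSup_le fun W hW f hf => hW.1 f hf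
    exact fun f hf => this hf
  · intro u hu
    have : bigGood F ≤ (bigGood F).comap (cst u : Vect K n).toLinearMap :=
      sSup_le fun W hW f hf => (le_sSup hW : W ≤ bigGood F) (hW.2 u hu f hf)
    exact fun f hf => this hf

theorem le_bigGood {F : Submodule K (Fin n → K)} {W : Submodule K (MvPolynomial (Fin n) K)}
    (h : IsGood F W) : W ≤ bigGood F := le_sSup h

theorem isGood_span {F : Submodule K (Fin n → K)} {S : Set (MvPolynomial (Fin n) K)}
    (h0 : ∀ f ∈ S, coeff 0 f = 0) (h1 : ∀ u ∈ F, ∀ f ∈ S, cst u f ∈ Submodule.span K S) :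
    IsGood F (Submodule.span K S) := by
  constructor
  · have : Submodule.span K S ≤ LinearMap.ker (lcoeff K (0 : Fin n →₀ ℕ)) :=
      Submodule.span_le.2 fun f hf => h0 f hf
    exact fun f hf => this hf
  · intro u hu
    have : Submodule.span K S ≤ (Submodule.span K S).comap (cst u : Vect K n).toLinearMap :=
      Submodule.span_le.2 fun f hf => h1 u hu f hf
    exact fun f hf => this hf

theorem mul_mem_bigGood {F : Submodule K (Fin n → K)} {f : MvPolynomial (Fin n) K}
    (hf : f ∈ bigGood F) (g : MvPolynomial (Fin n) K) : g * f ∈ bigGood F := by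
  have h : IsGood F (Submodule.span K {x | ∃ g, ∃ f ∈ bigGood F, x = g * f}) := by
    apply isGood_span
    · rintro _ ⟨g, f, hf, rfl⟩
      have := (isGood_bigGood F).1 f hf
      rw [← constantCoeff_eq] at this ⊢
      rw [map_mul, this, mul_zero]
    · rintro u hu _ ⟨g, f, hf, rfl⟩
      rw [Derivation.leibniz, smul_eq_mul, smul_eq_mul, mul_comm f]
      exact Submodule.add_mem _ (Submodule.subset_span ⟨_, _, (isGood_bigGood F).2 u hu f hf, rfl⟩)
        (Submodule.subset_span ⟨_, _, hf, rfl⟩)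
  exact le_bigGood h (Submodule.subset_span ⟨g, f, hf, rfl⟩)

theorem lf_mem_bigGood {F : Submodule K (Fin n → K)} {ξ : Module.Dual K (Fin n → K)}
    (h : ∀ u ∈ F, ξ u = 0) : lf ξ ∈ bigGood F := by
  have h : IsGood F (Submodule.span K {lf ξ}) := by
    apply isGood_span
    · rintro _ rfl
      exact (lf_isHomogeneous ξ).coeff_eq_zero (by simp)
    · rintro u hu _ rfl
      rw [cst_lf, h u hu, C_0]; exact Submodule.zero_mem _
  exact le_bigGood h (Submodule.mem_span_singleton_self _)

theorem coeff_zero_apply (D : Vect K n) (f : MvPolynomial (Fin n) K) :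
    coeff 0 (D f) = coeff 0 (cmpt 0 D f) := by
  rw [deriv_apply_eq_sum D, deriv_apply_eq_sum (cmpt 0 D)]
  simp only [← constantCoeff_eq, map_sum, map_mul, cmpt_X]
  simp [constantCoeff_eq, homogeneousComponent_zero]

theorem apply_mem_bigGood {L : LieSubalgebra K (Vect K n)} (hgr : ∀ D ∈ L, ∀ k, cmpt k D ∈ L)
    {D : Vect K n} (hD : D ∈ L) {f : MvPolynomial (Fin n) K} (hf : f ∈ bigGood (cpart L)) :
    D f ∈ bigGood (cpart L) := by
  have h : IsGood (cpart L)
      (bigGood (cpart L) ⊔ Submodule.span K {x | ∃ D ∈ L, ∃ f ∈ bigGood (cpart L), x = D f}) := by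
    rw [← Submodule.span_eq (bigGood (cpart L)), ← Submodule.span_union, Submodule.span_eq]
    have hg := isGood_bigGood (cpart L)
    apply isGood_span
    · rintro _ (hf | ⟨D, hD, f, hf, rfl⟩)
      · exact hg.1 _ hf
      · rw [coeff_zero_apply]
        obtain ⟨v, hv⟩ := mem_H_zero.1 (cmpt_mem 0 D)
        have := hgr D hD 0
        rw [hv] at this ⊢
        exact hg.1 _ (hg.2 v this _ hf)
    · rintro u hu _ (hf | ⟨D, hD, f, hf, rfl⟩)
      · exact Submodule.subset_span (Or.inl (hg.2 u hu _ hf))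
      · have e : cst u (D f) = ⁅cst u, D⁆ f + D (cst u f) := by
          rw [Derivation.commutator_apply]; ring
        rw [e]
        exact Submodule.add_mem _
          (Submodule.subset_span (Or.inr ⟨_, L.lie_mem hu hD, _, hf, rfl⟩))
          (Submodule.subset_span (Or.inr ⟨_, hD, _, hg.2 u hu _ hf, rfl⟩))
  exact le_bigGood h (Submodule.mem_sup_right (Submodule.subset_span ⟨D, hD, f, hf, rfl⟩))

/-- The vector fields preserving a space of polynomials. -/
noncomputable def stab (S : Submodule K (MvPolynomial (Fin n) K)) : LieSubalgebra K (Vect K n) where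
  carrier := {D | ∀ f ∈ S, D f ∈ S}
  add_mem' h1 h2 f hf := S.add_mem (h1 f hf) (h2 f hf)
  zero_mem' f _ := S.zero_mem
  smul_mem' a D h f hf := S.smul_mem a (h f hf)
  lie_mem' {D D'} h1 h2 f hf := by
    rw [Derivation.commutator_apply]
    exact S.sub_mem (h1 _ (h2 f hf)) (h2 _ (h1 f hf))

theorem cst_mem_of_maximal (L : LieSubalgebra K (Vect K n)) [FiniteDimensional K L]
    (hgr : ∀ D ∈ L, ∀ k, cmpt k D ∈ L) (hmax : IsMaxSubalg K n L) (v : Fin n → K) :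
    cst v ∈ L := by
  by_contra hv
  have hv0 : v ≠ 0 := by rintro rfl; simp at hv
  obtain ⟨ξ, hξv, hξ⟩ := Submodule.exists_le_ker_of_notMem (p := cpart L) hv
  have hξ' : ∀ u ∈ cpart L, ξ u = 0 := fun u hu => hξ hu
  have hm := lf_mem_bigGood hξ'
  rcases hmax (stab (bigGood (cpart L))) (fun D hD f hf => apply_mem_bigGood hgr hD hf) with h | h
  · have : FiniteDimensional K L.toSubmodule := ‹_›
    obtain ⟨N, hN⟩ := exists_bound L.toSubmodule
    have hne : lf ξ ≠ 0 := fun h0 => hξv (by rw [(map_eq_zero_iff _ lf_injective).1 h0]; rfl)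
    refine smul_cst_ne_zero (pow_ne_zero (N + 1) hne) hv0 (hN (N + 1) (by omega) _ ?_ ?_)
    · rw [← h]
      intro f _
      rw [Derivation.smul_apply, smul_eq_mul, pow_succ, mul_comm, ← mul_assoc]
      exact mul_mem_bigGood hm _
    · have := smul_mem_H ((lf_isHomogeneous ξ).pow (N + 1)) (cst_mem v)
      simpa using this
  · have h1 : cst v ∈ stab (bigGood (cpart L)) := h ▸ LieSubalgebra.mem_top _
    have h2 := (isGood_bigGood _).1 _ (h1 _ hm)
    rw [cst_lf] at h2
    simp at h2
    exact hξv h2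

end Forward

/-! ### Maximal subalgebras are irreducible and contain a quadratic field -/

section Forward2

variable {K : Type*} [Field K] {n : ℕ}

/-- The vector fields tangent to the linear foliation with direction `F`. -/
noncomputable def tang (F : Submodule K (Fin n → K)) :
    Submodule (MvPolynomial (Fin n) K) (Vect K n) :=
  Submodule.span _ (Set.image cst (F : Set (Fin n → K)))

theorem cst_mem_tang {F : Submodule K (Fin n → K)} {u : Fin n → K} (hu : u ∈ F) :
    cst u ∈ tang F := Submodule.subset_span ⟨u, hu, rfl⟩

theorem smulK_mem (S : Submodule (MvPolynomial (Fin n) K) (Vect K n)) (a : K) {D : Vect K n}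
    (hD : D ∈ S) : a • D ∈ S := by
  have : a • D = (C a : MvPolynomial (Fin n) K) • D := by
    apply derivation_ext; intro i; simp [smul_eq_C_mul]
  rw [this]; exact S.smul_mem _ hD

/-- The normalizer of a space of vector fields. -/
noncomputable def nrm (S : Submodule (MvPolynomial (Fin n) K) (Vect K n)) :
    LieSubalgebra K (Vect K n) where
  carrier := {D | ∀ Z ∈ S, ⁅D, Z⁆ ∈ S}
  add_mem' h1 h2 Z hZ := by rw [add_lieV]; exact S.add_mem (h1 Z hZ) (h2 Z hZ)
  zero_mem' Z _ := by rw [zero_lieV]; exact S.zero_mem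
  smul_mem' a D h Z hZ := by rw [smul_lieV]; exact smulK_mem S a (h Z hZ)
  lie_mem' {D D'} h1 h2 Z hZ := by
    rw [lie_lieV]
    exact S.sub_mem (h1 _ (h2 Z hZ)) (h2 _ (h1 Z hZ))

theorem mem_nrm_tang {F : Submodule K (Fin n → K)} {D : Vect K n}
    (h : ∀ u ∈ F, ⁅D, cst u⁆ ∈ tang F) : D ∈ nrm (tang F) := by
  intro Z hZ
  induction hZ using Submodule.span_induction with
  | mem x hx => obtain ⟨u, hu, rfl⟩ := hx; exact h u hu
  | zero => rw [lie_zeroV]; exact Submodule.zero_mem _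
  | add x y _ _ h1 h2 => rw [lie_addV]; exact Submodule.add_mem _ h1 h2
  | smul f x hx h1 =>
    rw [lie_smul_right]
    exact Submodule.add_mem _ (Submodule.smul_mem _ _ hx) (Submodule.smul_mem _ _ h1)

theorem lie_cst_mem_tang [CharZero K] {L : LieSubalgebra K (Vect K n)} (hc : ∀ v, cst v ∈ L)
    {F : Submodule K (Fin n → K)} (hF : ∀ A, lin A ∈ L → ∀ u ∈ F, A u ∈ F) (k : ℕ) :
    ∀ D ∈ L, D ∈ H K n k → ∀ u ∈ F, ⁅D, cst u⁆ ∈ tang F := by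
  induction k with
  | zero =>
    intro D _ hD u _
    obtain ⟨v, rfl⟩ := mem_H_zero.1 hD
    rw [lie_cst_cst]; exact Submodule.zero_mem _
  | succ k ih =>
    intro D hDL hD u hu
    rcases k with _ | k
    · obtain ⟨A, rfl⟩ := mem_H_one.1 hD
      rw [lie_lin_cst]
      exact Submodule.neg_mem _ (cst_mem_tang (hF A hDL u hu))
    · have hG : ⁅D, cst u⁆ ∈ H K n (k + 1) := lie_mem_H hD (cst_mem u) (by omega)
      have hk : ((k + 1 : ℕ) : K) ≠ 0 := by exact_mod_cast Nat.succ_ne_zero k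
      have := smulK_mem (tang F) ((k + 1 : ℕ) : K)⁻¹ (D := ∑ i, (X i : MvPolynomial (Fin n) K) •
        ⁅cst (Pi.single i (1 : K)), ⁅D, cst u⁆⁆) (Submodule.sum_mem _ fun i _ => by
          refine Submodule.smul_mem _ _ ?_
          have e : ⁅cst (Pi.single i (1 : K)), ⁅D, cst u⁆⁆ =
              ⁅⁅cst (Pi.single i (1 : K)), D⁆, cst u⁆ := by
            rw [lie_lieV, lie_cst_cst, lie_zeroV, sub_zero]
          rw [e]
          exact ih _ (L.lie_mem (hc _) hDL) (lie_mem_H (cst_mem _) hD (by omega)) u hu)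
      rwa [sum_X_smul_lie_cst hG, smul_smul, inv_mul_cancel₀ hk, one_smul] at this

theorem irreducible_of_maximal [CharZero K] (L : LieSubalgebra K (Vect K n))
    [FiniteDimensional K L] (hgr : ∀ D ∈ L, ∀ k, cmpt k D ∈ L) (hmax : IsMaxSubalg K n L)
    (hc : ∀ v, cst v ∈ L) (F : Submodule K (Fin n → K))
    (hF : ∀ A, lin A ∈ L → ∀ u ∈ F, A u ∈ F) : F = ⊥ ∨ F = ⊤ := by
  by_contra! hne
  obtain ⟨u, hu, hu0⟩ := Submodule.exists_mem_ne_zero_of_ne_bot hne.1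
  obtain ⟨w, hw⟩ : ∃ w, w ∉ F := by
    by_contra! h
    exact hne.2 (Submodule.eq_top_iff'.2 h)
  obtain ⟨η, hη⟩ := exists_dual_apply_eq_one hu0
  have hle : L ≤ nrm (tang F) := by
    intro D hD
    have : D ∈ (nrm (tang F)).toSubmodule := by
      apply mem_of_cmpt_mem
      intro k
      exact mem_nrm_tang (lie_cst_mem_tang hc hF k _ (hgr D hD k) (cmpt_mem k D))
    exact this
  rcases hmax _ hle with h | h
  · have : FiniteDimensional K L.toSubmodule := ‹_›
    obtain ⟨N, hN⟩ := exists_bound L.toSubmodule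
    have hne : lf η ≠ 0 := fun h0 => by
      rw [(map_eq_zero_iff _ lf_injective).1 h0] at hη; simp at hη
    refine smul_cst_ne_zero (pow_ne_zero N hne) hu0 (hN N le_rfl _ ?_ ?_)
    · rw [← h]
      apply mem_nrm_tang
      intro v _
      rw [lie_smul_left, lie_cst_cst, smul_zero, zero_sub]
      exact Submodule.neg_mem _ (Submodule.smul_mem _ _ (cst_mem_tang hu))
    · have := smul_mem_H ((lf_isHomogeneous η).pow N) (cst_mem u)
      simpa using this
  · have h1 : lf η • cst w ∈ nrm (tang F) := h ▸ LieSubalgebra.mem_top _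
    have h2 := h1 _ (cst_mem_tang hu)
    rw [lie_smul_left, lie_cst_cst, smul_zero, zero_sub, cst_lf, hη, C_1, one_smul] at h2
    obtain ⟨ξ, hξw, hξ⟩ := Submodule.exists_le_ker_of_notMem hw
    have h3 : ∀ Z ∈ tang F, Z (lf ξ) = 0 := by
      intro Z hZ
      induction hZ using Submodule.span_induction with
      | mem x hx =>
        obtain ⟨v, hv, rfl⟩ := hx
        rw [cst_lf, show ξ v = 0 from hξ hv, C_0]
      | zero => rfl
      | add x y _ _ h1 h2 => rw [Derivation.add_apply, h1, h2, add_zero]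
      | smul f x hx h1 => rw [Derivation.smul_apply, h1, smul_zero]
    have h4 := h3 _ h2
    simp at h4
    exact hξw h4

/-- `L` has degree at most one when `L₁ = 0`. -/
theorem eq_zero_of_H_two [CharZero K] {L : LieSubalgebra K (Vect K n)} (hc : ∀ v, cst v ∈ L)
    (h : ∀ D ∈ L, D ∈ H K n 2 → D = 0) (k : ℕ) : ∀ D ∈ L, D ∈ H K n (k + 2) → D = 0 := by
  induction k with
  | zero => exact h
  | succ k ih =>
    intro D hD hDk
    exact eq_zero_of_lie_cst hDk fun v =>
      ih _ (L.lie_mem (hc v) hD) (lie_mem_H (cst_mem v) hDk (by omega))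

theorem lie_cst_lf_smul_euler (v : Fin n → K) (η : Module.Dual K (Fin n → K)) :
    ⁅cst v, lf η • euler K n⁆ = lin (η v • 1 + η.smulRight v) := by
  rw [lie_smul_right, cst_lf, map_add, lin_smulRight, map_smul, lin_one, ← lin_one, lie_cst_lin,
    lin_one]
  congr 1
  apply derivation_ext; intro i; simp [smul_eq_C_mul]

theorem lie_lin_lf_smul_euler (A : Module.End K (Fin n → K)) (η : Module.Dual K (Fin n → K)) :
    ⁅lin A, lf η • euler K n⁆ = lf (η ∘ₗ A) • euler K n := by
  rw [lie_smul_right, lin_lf, ← lin_one, lie_lin_lin, Ring.lie_def, one_mul, mul_one, sub_self,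
    map_zero, smul_zero, add_zero]

theorem lie_lf_smul_euler_lf_smul_euler (ξ η : Module.Dual K (Fin n → K)) :
    ⁅lf ξ • euler K n, lf η • euler K n⁆ = 0 := by
  have he : ∀ ξ : Module.Dual K (Fin n → K), euler K n (lf ξ) = lf ξ := fun ξ => by
    rw [euler_of_isHomogeneous (lf_isHomogeneous ξ)]; simp
  rw [lie_smul_right, lie_smul_left, lie_self, Derivation.smul_apply, he, he, smul_zero,
    zero_sub, smul_neg, smul_smul, smul_eq_mul, mul_comm, add_neg_cancel]

/-- The projective subalgebra, spanned by the constant fields, the linear fields and the products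
of linear forms with the Euler field. -/
noncomputable def proj (K : Type*) [Field K] (n : ℕ) : LieSubalgebra K (Vect K n) where
  carrier := {D | ∃ (v : Fin n → K) (A : Module.End K (Fin n → K)) (ξ : Module.Dual K (Fin n → K)),
    D = cst v + lin A + lf ξ • euler K n}
  add_mem' := by
    rintro _ _ ⟨v, A, ξ, rfl⟩ ⟨w, B, η, rfl⟩
    exact ⟨v + w, A + B, ξ + η, by simp only [map_add, add_smul]; abel⟩
  zero_mem' := ⟨0, 0, 0, by simp⟩
  smul_mem' := by
    rintro a _ ⟨v, A, ξ, rfl⟩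
    exact ⟨a • v, a • A, a • ξ, by simp only [map_smul, smul_add, smul_assoc]⟩
  lie_mem' := by
    rintro _ _ ⟨v, A, ξ, rfl⟩ ⟨w, B, η, rfl⟩
    refine ⟨B v - A w, ⁅B, A⁆ + (η v • 1 + η.smulRight v) - (ξ w • 1 + ξ.smulRight w),
      η ∘ₗ A - ξ ∘ₗ B, ?_⟩
    have h1' := lie_cst_lf_smul_euler w ξ
    have h2' := lie_lin_lf_smul_euler B ξ
    rw [← lie_skew, neg_eq_iff_eq_neg] at h1' h2'
    rw [map_sub lf, psub_smul, map_sub lin, map_add lin, map_sub cst]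
    rw [add_lieV, add_lieV, lie_addV, lie_addV, lie_addV, lie_addV, lie_addV, lie_addV,
      lie_cst_cst, lie_cst_lin, lie_lin_cst, lie_lin_lin, lie_cst_lf_smul_euler,
      lie_lin_lf_smul_euler, lie_lf_smul_euler_lf_smul_euler, h1', h2']
    abel

theorem exists_H_two_of_maximal [CharZero K] (hn : 0 < n) (L : LieSubalgebra K (Vect K n))
    [FiniteDimensional K L] (hgr : ∀ D ∈ L, ∀ k, cmpt k D ∈ L) (hmax : IsMaxSubalg K n L)
    (hc : ∀ v, cst v ∈ L) : ∃ D ∈ L, D ∈ H K n 2 ∧ D ≠ 0 := by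
  by_contra! h
  have h2 := eq_zero_of_H_two hc h
  have hle : L ≤ proj K n := by
    intro D hD
    have : D ∈ (proj K n).toSubmodule := by
      apply mem_of_cmpt_mem
      intro k
      match k with
      | 0 =>
        obtain ⟨v, hv⟩ := mem_H_zero.1 (cmpt_mem 0 D)
        exact ⟨v, 0, 0, by simp [hv]⟩
      | 1 =>
        obtain ⟨A, hA⟩ := mem_H_one.1 (cmpt_mem 1 D)
        exact ⟨0, A, 0, by simp [hA]⟩
      | k + 2 =>
        rw [h2 k _ (hgr D hD _) (cmpt_mem _ _)]; exact Submodule.zero_mem _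
    exact this
  let i : Fin n := ⟨0, hn⟩
  have hXe : ∀ N : ℕ, (X i ^ N : MvPolynomial (Fin n) K) • euler K n ∈ H K n (N + 1) ∧
      (X i ^ N : MvPolynomial (Fin n) K) • euler K n ≠ 0 := by
    intro N
    constructor
    · simpa using smul_mem_H ((isHomogeneous_X K i).pow N) (euler_mem (K := K) (n := n))
    · intro h
      have := congrArg (fun D : Vect K n => D (X i)) h
      simp [X_ne_zero] at this
  rcases hmax _ hle with h3 | h3
  · obtain ⟨h4, h5⟩ := hXe 1
    refine h5 (h _ ?_ h4)
    rw [← h3]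
    exact ⟨0, 0, LinearMap.proj i, by simp [lf_proj]⟩
  · obtain ⟨h4, h5⟩ := hXe 2
    have h6 : (X i ^ 2 : MvPolynomial (Fin n) K) • euler K n ∈ proj K n :=
      h3 ▸ LieSubalgebra.mem_top _
    obtain ⟨v, A, ξ, e⟩ := h6
    apply h5
    rw [← cmpt_of_mem h4, e, map_add, map_add, cmpt_of_mem_ne (cst_mem v) (by norm_num),
      cmpt_of_mem_ne (lin_mem A) (by norm_num),
      cmpt_of_mem_ne (smul_mem_H (lf_isHomogeneous ξ) euler_mem) (by norm_num)]
    simp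

end Forward2

/-! ### No complex structure over a real field -/

section Forward3

variable {K : Type*} [Field K] {n : ℕ}

theorem eval_lf (v : Fin n → K) (ξ : Module.Dual K (Fin n → K)) : eval v (lf ξ) = ξ v := by
  rw [lf_apply, dual_apply_eq_sum ξ v]
  simp [mul_comm]

theorem eq_zero_of_smul {f : MvPolynomial (Fin n) K} (hf : f ≠ 0) {D : Vect K n} (h : f • D = 0) :
    D = 0 := by
  apply derivation_ext; intro i
  have := congrArg (fun D : Vect K n => D (X i)) h
  simpa [hf] using this

/-- The extension of an endomorphism `J` of `Kⁿ` to vector fields, linear over the polynomials. -/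
noncomputable def hat (J : Module.End K (Fin n → K)) :
    Vect K n →ₗ[MvPolynomial (Fin n) K] Vect K n where
  toFun D := ∑ j, D (X j) • cst (J (Pi.single j 1))
  map_add' D D' := by simp only [Derivation.add_apply, padd_smul, Finset.sum_add_distrib]
  map_smul' f D := by
    simp only [Derivation.smul_apply, smul_assoc, Finset.smul_sum, RingHom.id_apply]

theorem hat_apply (J : Module.End K (Fin n → K)) (D : Vect K n) :
    hat J D = ∑ j, D (X j) • cst (J (Pi.single j 1)) := rfl

@[simp] theorem hat_cst (J : Module.End K (Fin n → K)) (v : Fin n → K) :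
    hat J (cst v) = cst (J v) := by
  have h : v = ∑ j, v j • (Pi.single j 1 : Fin n → K) := by
    ext i; simp [Pi.single_apply]
  conv_rhs => rw [h]
  simp only [hat_apply, cst_X, C_smul, map_sum, map_smul]

theorem hat_hat (J : Module.End K (Fin n → K)) (hJ : ∀ v, J (J v) = -v) (D : Vect K n) :
    hat J (hat J D) = -D := by
  rw [hat_apply J D]
  simp only [map_sum, map_smul, hat_cst, hJ, map_neg, smul_neg, Finset.sum_neg_distrib]
  rw [← deriv_eq_sum]

theorem hat_mem_H (J : Module.End K (Fin n → K)) {D : Vect K n} {k : ℕ} (hD : D ∈ H K n k) :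
    hat J D ∈ H K n k :=
  Submodule.sum_mem _ fun i _ => by simpa using smul_mem_H (hD i) (cst_mem (J (Pi.single i 1)))

theorem hat_smulK (J : Module.End K (Fin n → K)) (a : K) (D : Vect K n) :
    hat J (a • D) = a • hat J D := by rw [← C_smul, map_smul, C_smul]

/-- The vector fields which are holomorphic with respect to `J`, that is, whose adjoint action
commutes with the extension of `J`. -/
noncomputable def holo (J : Module.End K (Fin n → K)) : LieSubalgebra K (Vect K n) where
  carrier := {D | ∀ Y, ⁅D, hat J Y⁆ = hat J ⁅D, Y⁆}
  add_mem' h1 h2 Y := by rw [add_lieV, h1, h2, add_lieV, map_add]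
  zero_mem' Y := by rw [zero_lieV, zero_lieV, map_zero]
  smul_mem' a D h Y := by rw [smul_lieV, smul_lieV, h, hat_smulK]
  lie_mem' {D D'} h1 h2 Y := by
    rw [lie_lieV, h2, h1, h1, h2, lie_lieV, map_sub]

theorem mem_holo {J : Module.End K (Fin n → K)} {D : Vect K n}
    (h : ∀ v, ⁅D, cst (J v)⁆ = hat J ⁅D, cst v⁆) : D ∈ holo J := by
  intro Y
  rw [deriv_eq_sum Y]
  have hs : ∀ F : Fin n → Vect K n, ⁅D, ∑ i, F i⁆ = ∑ i, ⁅D, F i⁆ := fun F =>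
    map_sum (LieAlgebra.ad K (Vect K n) D) F _
  simp only [map_sum, map_smul, hs, lie_smul_right, hat_cst, map_add, h]

theorem cst_mem_holo (J : Module.End K (Fin n → K)) (v : Fin n → K) : cst v ∈ holo J :=
  mem_holo fun w => by simp

theorem mem_holo_of_mem [CharZero K] {L : LieSubalgebra K (Vect K n)} (hc : ∀ v, cst v ∈ L)
    {J : Module.End K (Fin n → K)} (hJ : ∀ A, lin A ∈ L → ∀ u, J (A u) = A (J u)) (k : ℕ) :
    ∀ D ∈ L, D ∈ H K n k → D ∈ holo J := by
  induction k with
  | zero =>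
    intro D _ hD
    obtain ⟨v, rfl⟩ := mem_H_zero.1 hD
    exact cst_mem_holo J v
  | succ k ih =>
    intro D hDL hD
    apply mem_holo
    intro v
    rcases k with _ | k
    · obtain ⟨A, rfl⟩ := mem_H_one.1 hD
      rw [lie_lin_cst, lie_lin_cst, map_neg, hat_cst, hJ A hDL]
    · rw [← sub_eq_zero]
      refine eq_zero_of_lie_cst (k := k) ?_ fun w => ?_
      · exact Submodule.sub_mem _ (lie_mem_H hD (cst_mem _) (by omega))
          (hat_mem_H J (lie_mem_H hD (cst_mem _) (by omega)))
      · have h1 := ih _ (L.lie_mem (hc w) hDL) (lie_mem_H (cst_mem w) hD (by omega)) (cst v)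
        have e : ∀ u, ⁅cst w, ⁅D, cst u⁆⁆ = ⁅⁅cst w, D⁆, cst u⁆ := fun u => by
          rw [lie_lieV, lie_cst_cst, lie_zeroV, sub_zero]
        rw [lie_subV, cst_mem_holo J w ⁅D, cst v⁆, e, e, ← h1, hat_cst, sub_self]

/-- Multiplication by the `J`-holomorphic linear function with real part `ξ`. -/
noncomputable def hmul (J : Module.End K (Fin n → K)) (ξ : Module.Dual K (Fin n → K))
    (D : Vect K n) : Vect K n := lf ξ • D - lf (ξ ∘ₗ J) • hat J D

theorem hmul_mem_holo {J : Module.End K (Fin n → K)} (hJ : ∀ v, J (J v) = -v)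
    (ξ : Module.Dual K (Fin n → K)) {D : Vect K n} (hD : D ∈ holo J) : hmul J ξ D ∈ holo J := by
  apply mem_holo
  intro v
  have e : ∀ u, ⁅hat J D, cst u⁆ = hat J ⁅D, cst u⁆ := fun u => by
    rw [← lie_skew, cst_mem_holo J u D, ← map_neg, lie_skew]
  have e2 : ⁅D, cst (J v)⁆ = hat J ⁅D, cst v⁆ := by rw [← hD, hat_cst]
  simp only [hmul, sub_lieV, lie_smul_left, cst_lf, e, e2, hat_hat J hJ, map_sub, map_smul,
    LinearMap.comp_apply, hJ, C_smul, hat_smulK, map_neg, smul_neg]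
  ext1 f
  simp only [Derivation.smul_apply, Derivation.add_apply, Derivation.sub_apply, smul_eq_mul,
    Derivation.neg_apply, smul_eq_C_mul]
  ring

theorem hmul_mem_H (J : Module.End K (Fin n → K)) (ξ : Module.Dual K (Fin n → K)) {D : Vect K n}
    {k : ℕ} (hD : D ∈ H K n k) : hmul J ξ D ∈ H K n (k + 1) := by
  rw [add_comm]
  exact Submodule.sub_mem _ (smul_mem_H (lf_isHomogeneous _) hD)
    (smul_mem_H (lf_isHomogeneous _) (hat_mem_H J hD))

theorem hmul_ne_zero {J : Module.End K (Fin n → K)} (hJ : ∀ v, J (J v) = -v)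
    (hK : ∀ c : K, c * c ≠ -1) {ξ : Module.Dual K (Fin n → K)} {v : Fin n → K} (hξ : ξ v = 1)
    {D : Vect K n} (hD : D ≠ 0) : hmul J ξ D ≠ 0 := by
  intro h
  -- multiplication by the conjugate function turns `hmul` into multiplication by `|ξ|²`
  have h1 : (lf ξ * lf ξ + lf (ξ ∘ₗ J) * lf (ξ ∘ₗ J)) • D =
      lf ξ • hmul J ξ D + lf (ξ ∘ₗ J) • hat J (hmul J ξ D) := by
    simp only [hmul, map_sub, map_smul, hat_hat J hJ]
    ext1 f
    simp only [Derivation.smul_apply, Derivation.add_apply, Derivation.sub_apply, smul_eq_mul,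
      Derivation.neg_apply]
    ring
  rw [h, map_zero, smul_zero, smul_zero, add_zero] at h1
  refine hD (eq_zero_of_smul (fun h0 => ?_) h1)
  have h2 := congrArg (eval v) h0
  rw [map_add, map_mul, map_mul, eval_lf, eval_lf, hξ, map_zero] at h2
  exact hK ((ξ ∘ₗ J) v) (by linear_combination h2)

theorem not_complex_of_maximal [CharZero K] (hn : 0 < n) (hK : ∀ c : K, c * c ≠ -1)
    (L : LieSubalgebra K (Vect K n))
    [FiniteDimensional K L] (hgr : ∀ D ∈ L, ∀ k, cmpt k D ∈ L) (hmax : IsMaxSubalg K n L)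
    (hc : ∀ v, cst v ∈ L) (J : Module.End K (Fin n → K)) (hJ : ∀ v, J (J v) = -v)
    (hJL : ∀ A, lin A ∈ L → ∀ u, J (A u) = A (J u)) : False := by
  have hle : L ≤ holo J := by
    intro D hD
    have : D ∈ (holo J).toSubmodule := by
      apply mem_of_cmpt_mem
      intro k
      exact mem_holo_of_mem hc hJL k _ (hgr D hD k) (cmpt_mem k D)
    exact this
  obtain ⟨v, hv⟩ : ∃ v : Fin n → K, v ≠ 0 :=
    ⟨Pi.single ⟨0, hn⟩ 1, by simp⟩
  obtain ⟨η, hη⟩ := exists_dual_apply_eq_one hv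
  rcases hmax _ hle with h | h
  · have : FiniteDimensional K L.toSubmodule := ‹_›
    obtain ⟨N, hN⟩ := exists_bound L.toSubmodule
    have key : ∀ k, ∃ D ∈ holo J, D ∈ H K n k ∧ D ≠ 0 := by
      intro k
      induction k with
      | zero => exact ⟨cst v, cst_mem_holo J v, cst_mem v, by
          rwa [Ne, map_eq_zero_iff _ cst_injective]⟩
      | succ k ih =>
        obtain ⟨D, h1, h2, h3⟩ := ih
        exact ⟨hmul J η D, hmul_mem_holo hJ η h1, hmul_mem_H J η h2, hmul_ne_zero hJ hK hη h3⟩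
    obtain ⟨D, h1, h2, h3⟩ := key N
    exact h3 (hN N le_rfl D (h ▸ h1) h2)
  · have h1 : lf η • cst v ∈ holo J := h ▸ LieSubalgebra.mem_top _
    have h2 := h1 (cst v)
    simp only [hat_cst, lie_smul_left, lie_cst_cst, cst_lf, smul_zero, zero_sub, C_smul, map_neg,
      neg_inj, hη, one_smul] at h2
    rw [← map_smul] at h2
    have h3 := cst_injective h2
    have h4 := congrArg η (hJ v)
    rw [← h3, map_smul, ← h3, map_smul, map_smul, map_neg, hη] at h4
    exact hK (η (J v)) (by simpa using h4)

end Forward3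

/-! ### Irreducible spaces of operators with a rank one idempotent -/

section RankOne

variable {K V : Type*} [Field K] [AddCommGroup V] [Module K V]

/-- The rank one operator `v ↦ ξ(v) w`. -/
abbrev op (w : V) (ξ : Module.Dual K V) : Module.End K V := ξ.smulRight w

/-- A space `g` of operators acts irreducibly: only the trivial subspaces are invariant. -/
def Irr (g : Submodule K (Module.End K V)) : Prop :=
  ∀ F : Submodule K V, (∀ A ∈ g, ∀ u ∈ F, A u ∈ F) → F = ⊥ ∨ F = ⊤

/-- `g` is closed under the commutator. -/
def ComClosed (g : Submodule K (Module.End K V)) : Prop :=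
  ∀ A ∈ g, ∀ B ∈ g, A * B - B * A ∈ g

theorem dual_top_of_ker [FiniteDimensional K V] (C : Submodule K (Module.Dual K V))
    (h : ∀ v : V, (∀ η ∈ C, η v = 0) → v = 0) : C = ⊤ := by
  have h1 : C.dualCoannihilator = ⊥ := by
    rw [Submodule.eq_bot_iff]
    intro v hv
    exact h v fun η hη => (Submodule.mem_dualCoannihilator v).1 hv η hη
  have h2 := Subspace.dualCoannihilator_dualAnnihilator_eq (W := C)
  rw [h1, Submodule.dualAnnihilator_bot] at h2
  exact h2.symm

theorem top_of_op_mem [FiniteDimensional K V] {g : Submodule K (Module.End K V)}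
    (hg : ComClosed g) (hirr : Irr g) {w : V} (hw : w ≠ 0) (h : ∀ η, op w η ∈ g) : g = ⊤ := by
  let W : Submodule K V :=
    { carrier := {u | ∀ η, op u η ∈ g}
      zero_mem' := fun η => by simp [op]
      add_mem' := fun {a b} ha hb η => by
        have : op (a + b) η = op a η + op b η := by ext v; simp
        rw [this]; exact g.add_mem (ha η) (hb η)
      smul_mem' := fun c a ha η => by
        have : op (c • a) η = c • op a η := by ext v; simp [smul_comm c]
        rw [this]; exact g.smul_mem c (ha η) }
  have hW : W = ⊤ := by
    refine (hirr W ?_).resolve_left ?_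
    · intro A hA u hu η
      have : op (A u) η = (A * op u η - op u η * A) + op u (η ∘ₗ A) := by ext v; simp
      rw [this]; exact g.add_mem (hg A hA _ (hu η)) (hu _)
    · intro h0
      have : w ∈ W := h
      rw [h0] at this
      exact hw (by simpa using this)
  rw [Submodule.eq_top_iff']
  intro A
  let b := Module.finBasis K V
  have : A = ∑ i, op (A (b i)) (b.coord i) := by
    refine b.ext fun i => ?_
    simp [LinearMap.sum_apply, Finsupp.single_apply]
  rw [this]
  refine g.sum_mem fun i _ => ?_
  have : A (b i) ∈ W := by rw [hW]; trivial
  exact this _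

/-- The case of an idempotent of rank one. -/
theorem top_of_idem [FiniteDimensional K V] [CharZero K] {g : Submodule K (Module.End K V)}
    (hg : ComClosed g) (hirr : Irr g) {w : V} {ξ : Module.Dual K V} (h : op w ξ ∈ g)
    (hwξ : ξ w = 1) : g = ⊤ := by
  have key : ∀ A ∈ g, op w (ξ ∘ₗ A) ∈ g := by
    intro A hA
    set B := op w ξ * A - A * op w ξ with hB
    have hBg : B ∈ g := hg _ h _ hA
    have : op w (ξ ∘ₗ A) = (2⁻¹ : K) • (B + (op w ξ * B - B * op w ξ)) + ξ (A w) • op w ξ := by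
      ext v
      simp [hB, hwξ, mul_comm]
      module
    rw [this]
    exact g.add_mem (g.smul_mem _ (g.add_mem hBg (hg _ h _ hBg))) (g.smul_mem _ h)
  let C : Submodule K (Module.Dual K V) :=
    { carrier := {η | op w η ∈ g}
      zero_mem' := by
        have : op w (0 : Module.Dual K V) = 0 := by ext v; simp
        simp only [Set.mem_ofPred_eq, this, g.zero_mem]
      add_mem' := fun {a b} ha hb => by
        have : op w (a + b) = op w a + op w b := by ext v; simp [add_smul]
        simp only [Set.mem_ofPred_eq, this]; exact g.add_mem ha hb
      smul_mem' := fun c a ha => by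
        have : op w (c • a) = c • op w a := by ext v; simp [mul_smul]
        simp only [Set.mem_ofPred_eq, this]; exact g.smul_mem c ha }
  have hC : ∀ η ∈ C, ∀ A ∈ g, η ∘ₗ A ∈ C := by
    intro η hη A hA
    have h1 := key _ (hg _ hη _ hA)
    have h2 : op w (η ∘ₗ A) =
        op w (ξ ∘ₗ (op w η * A - A * op w η)) + ξ (A w) • op w η := by
      ext v; simp [hwξ]; module
    change op w (η ∘ₗ A) ∈ g
    rw [h2]
    exact g.add_mem h1 (g.smul_mem _ hη)
  let F : Submodule K V := C.dualCoannihilator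
  have hw0 : w ≠ 0 := by rintro rfl; simp at hwξ
  have hF : F = ⊥ := by
    refine (hirr F ?_).resolve_right ?_
    · intro A hA u hu
      rw [Submodule.mem_dualCoannihilator] at hu ⊢
      intro η hη
      exact hu _ (hC η hη A hA)
    · intro h0
      have : w ∈ F := by rw [h0]; trivial
      have := (Submodule.mem_dualCoannihilator w).1 this ξ h
      rw [hwξ] at this
      exact one_ne_zero this
  have hCt : C = ⊤ := by
    apply dual_top_of_ker
    intro v hv
    have : v ∈ F := (Submodule.mem_dualCoannihilator v).2 hv
    rw [hF] at this
    simpa using this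
  refine top_of_op_mem hg hirr hw0 fun η => ?_
  have : η ∈ C := by rw [hCt]; trivial
  exact this

/-- Vectors `w, w'` and forms `ξ, ξ'` spanning complementary dual planes. -/
structure Frame (w w' : V) (ξ ξ' : Module.Dual K V) : Prop where
  a : ξ w = 0
  b : ξ w' = 1
  c : ξ' w = 1
  d : ξ' w' = 0

/-- The projection along the plane spanned by `w, w'` onto the common kernel of `ξ, ξ'`. -/
def prj (w w' : V) (ξ ξ' : Module.Dual K V) : Module.End K V := 1 - op w ξ' - op w' ξ

variable {w w' : V} {ξ ξ' : Module.Dual K V}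

theorem prj_apply (v : V) : prj w w' ξ ξ' v = v - ξ' v • w - ξ v • w' := by simp [prj]

theorem Frame.p_w (h : Frame w w' ξ ξ') : prj w w' ξ ξ' w = 0 := by
  simp [prj_apply, h.a, h.c]

theorem Frame.p_w' (h : Frame w w' ξ ξ') : prj w w' ξ ξ' w' = 0 := by
  simp [prj_apply, h.b, h.d]

theorem Frame.ξ_p (h : Frame w w' ξ ξ') (v : V) : ξ (prj w w' ξ ξ' v) = 0 := by
  simp [prj_apply, h.a, h.b]

theorem Frame.ξ'_p (h : Frame w w' ξ ξ') (v : V) : ξ' (prj w w' ξ ξ' v) = 0 := by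
  simp [prj_apply, h.c, h.d]

theorem Frame.p_of (v : V) (h1 : ξ v = 0) (h2 : ξ' v = 0) : prj w w' ξ ξ' v = v := by
  simp [prj_apply, h1, h2]

theorem Frame.p_p (h : Frame w w' ξ ξ') (v : V) :
    prj w w' ξ ξ' (prj w w' ξ ξ' v) = prj w w' ξ ξ' v :=
  Frame.p_of _ (h.ξ_p v) (h.ξ'_p v)

/-- The weight components under `ad H`, `H = w ⊗ ξ' - w' ⊗ ξ`, of an element of `g`
belong to `g`. -/
theorem Frame.weights [CharZero K] (h : Frame w w' ξ ξ') {g : Submodule K (Module.End K V)}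
    (hg : ComClosed g) (hH : op w ξ' - op w' ξ ∈ g) {A : Module.End K V} (hA : A ∈ g) :
    ξ (A w) • op w' ξ' ∈ g ∧
    op w (ξ' ∘ₗ A ∘ₗ prj w w' ξ ξ') + op (prj w w' ξ ξ' (A w')) ξ ∈ g ∧
    op w' (ξ ∘ₗ A ∘ₗ prj w w' ξ ξ') + op (prj w w' ξ ξ' (A w)) ξ' ∈ g ∧
    ξ' (A w) • op w ξ' + ξ (A w') • op w' ξ +
      prj w w' ξ ξ' * A * prj w w' ξ ξ' ∈ g := by
  set p := prj w w' ξ ξ' with hp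
  set H := op w ξ' - op w' ξ with hHdef
  have hHw : H w = w := by simp [hHdef, h.a, h.c]
  have hHw' : H w' = -w' := by simp [hHdef, h.b, h.d]
  have hHp : ∀ v, H (p v) = 0 := fun v => by simp [hHdef, hp, h.ξ_p, h.ξ'_p]
  have hpH : ∀ v, p (H v) = 0 := fun v => by simp [hHdef, hp, h.p_w, h.p_w']
  have hξH : ∀ v, ξ (H v) = - ξ v := fun v => by simp [hHdef, h.a, h.b]
  have hξ'H : ∀ v, ξ' (H v) = ξ' v := fun v => by simp [hHdef, h.c, h.d]
  let f : Module.End K (Module.End K V) :=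
    { toFun := fun B => H * B - B * H
      map_add' := fun B C => by simp only [mul_add, add_mul]; abel
      map_smul' := fun c B => by simp [smul_sub] }
  have hf : ∀ B, f B = H * B - B * H := fun _ => rfl
  let d : Fin 5 → Module.End K V := ![ξ (A w) • op w' ξ',
    op w (ξ' ∘ₗ A ∘ₗ p) + op (p (A w')) ξ, op w' (ξ ∘ₗ A ∘ₗ p) + op (p (A w)) ξ',
    ξ' (A w) • op w ξ' + ξ (A w') • op w' ξ + p * A * p, ξ' (A w') • op w ξ]
  let μ : Fin 5 → K := fun k => (((![-2, 1, -1, 0, 2] : Fin 5 → ℤ) k : ℤ) : K)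
  have hsum : ∑ k ∈ Finset.univ, d k = A := by
    ext v
    have e1 : v = ξ' v • w + ξ v • w' + p v := by rw [hp, prj_apply]; abel
    have e2 : ∀ u, p (A u) = A u - ξ' (A u) • w - ξ (A u) • w' := fun u => by rw [hp, prj_apply]
    conv_rhs => rw [e1, map_add, map_add, map_smul, map_smul]
    simp only [Fin.sum_univ_five, d, Matrix.cons_val, LinearMap.add_apply, LinearMap.smul_apply,
      LinearMap.smulRight_apply, Module.End.mul_apply, LinearMap.comp_apply, e2]
    module
  have heig : ∀ k ∈ Finset.univ, f (d k) = μ k • d k := by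
    intro k _
    ext v
    fin_cases k <;>
    simp [hf, d, μ, hHw, hHw', hHp, hpH, hξH, hξ'H] <;> module
  have hinj : Set.InjOn μ (Finset.univ : Finset (Fin 5)) := by
    intro a _ b _ hab
    have h1 : (![-2, 1, -1, 0, 2] : Fin 5 → ℤ) a = (![-2, 1, -1, 0, 2] : Fin 5 → ℤ) b :=
      Int.cast_injective (α := K) hab
    exact (by decide : Function.Injective (![-2, 1, -1, 0, 2] : Fin 5 → ℤ)) h1
  have := mem_of_sum_eigen f g (fun B hB => hg _ hH _ hB) Finset.univ d μ heig hinj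
    (by rw [hsum]; exact hA)
  exact ⟨this 0 (by simp), this 1 (by simp), this 2 (by simp), this 3 (by simp)⟩

end RankOne

/-! ### Irreducible spaces of operators with a rank one nilpotent -/

section RankOneNilpotent

variable {K V : Type*} [Field K] [AddCommGroup V] [Module K V]

theorem op_add_left (a b : V) (η : Module.Dual K V) : op (a + b) η = op a η + op b η := by
  ext v; simp

theorem op_smul_left (c : K) (a : V) (η : Module.Dual K V) : op (c • a) η = c • op a η := by
  ext v; simp [smul_comm c]

theorem op_add_right (a : V) (η θ : Module.Dual K V) : op a (η + θ) = op a η + op a θ := by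
  ext v; simp [add_smul]

theorem op_smul_right (c : K) (a : V) (η : Module.Dual K V) : op a (c • η) = c • op a η := by
  ext v; simp [mul_smul]

/-- The part of `g` of weight one: pairs `(η, u)` with `η` a form on the common kernel of
`ξ, ξ'` and `u` in that kernel, such that `w ⊗ η + u ⊗ ξ` belongs to `g`. -/
def wt (g : Submodule K (Module.End K V)) (w w' : V) (ξ ξ' : Module.Dual K V) :
    Submodule K (Module.Dual K V × V) where
  carrier := {x | x.1 w = 0 ∧ x.1 w' = 0 ∧ ξ x.2 = 0 ∧ ξ' x.2 = 0 ∧ op w x.1 + op x.2 ξ ∈ g}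
  zero_mem' := by
    have : op w (0 : Module.Dual K V) = 0 := by ext v; simp
    simp [this]
  add_mem' := by
    rintro ⟨η, u⟩ ⟨θ, v⟩ ⟨h1, h2, h3, h4, h5⟩ ⟨k1, k2, k3, k4, k5⟩
    refine ⟨by simp_all, by simp_all, by simp_all, by simp_all, ?_⟩
    have := g.add_mem h5 k5
    simp only [Prod.mk_add_mk, op_add_left, op_add_right] at this ⊢
    convert this using 1; abel
  smul_mem' := by
    rintro c ⟨η, u⟩ ⟨h1, h2, h3, h4, h5⟩
    refine ⟨by simp_all, by simp_all, by simp_all, by simp_all, ?_⟩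
    have := g.smul_mem c h5
    simpa only [Prod.smul_mk, op_smul_left, op_smul_right, smul_add] using this

theorem mem_wt {g : Submodule K (Module.End K V)} {w w' : V} {ξ ξ' : Module.Dual K V}
    {η : Module.Dual K V} {u : V} : (η, u) ∈ wt g w w' ξ ξ' ↔
      η w = 0 ∧ η w' = 0 ∧ ξ u = 0 ∧ ξ' u = 0 ∧ op w η + op u ξ ∈ g := Iff.rfl

variable {w w' : V} {ξ ξ' : Module.Dual K V} {g : Submodule K (Module.End K V)}
  {η : Module.Dual K V} {u : V}

theorem Frame.lower (h : Frame w w' ξ ξ') (hg : ComClosed g) (hN' : op w' ξ' ∈ g)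
    (hT : (η, u) ∈ wt g w w' ξ ξ') : op w' η - op u ξ' ∈ g := by
  obtain ⟨h1, h2, h3, h4, h5⟩ := mem_wt.1 hT
  convert hg _ hN' _ h5 using 1
  ext v; simp [h1, h2, h3, h4, h.a, h.b, h.c, h.d]

theorem Frame.raise (h : Frame w w' ξ ξ') (hg : ComClosed g) (hN : op w ξ ∈ g)
    (h1 : η w = 0) (h2 : η w' = 0) (h3 : ξ u = 0) (h4 : ξ' u = 0)
    (h5 : op w' η - op u ξ' ∈ g) : (η, u) ∈ wt g w w' ξ ξ' := by
  refine mem_wt.2 ⟨h1, h2, h3, h4, ?_⟩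
  convert hg _ hN _ h5 using 1
  ext v; simp [h1, h2, h3, h4, h.a, h.b, h.c, h.d]

theorem Frame.H_mem (h : Frame w w' ξ ξ') (hg : ComClosed g) (hN : op w ξ ∈ g)
    (hN' : op w' ξ' ∈ g) : op w ξ' - op w' ξ ∈ g := by
  convert hg _ hN _ hN' using 1
  ext v; simp [h.a, h.b, h.c, h.d]

theorem Frame.wt_one [CharZero K] (h : Frame w w' ξ ξ') (hg : ComClosed g)
    (hN : op w ξ ∈ g) (hN' : op w' ξ' ∈ g)
    {A : Module.End K V} (hA : A ∈ g) :
    (ξ' ∘ₗ A ∘ₗ prj w w' ξ ξ', prj w w' ξ ξ' (A w')) ∈ wt g w w' ξ ξ' :=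
  mem_wt.2 ⟨by simp [h.p_w], by simp [h.p_w'], h.ξ_p _, h.ξ'_p _,
    (h.weights hg (h.H_mem hg hN hN') hA).2.1⟩

theorem Frame.wt_neg_one [CharZero K] (h : Frame w w' ξ ξ') (hg : ComClosed g)
    (hN : op w ξ ∈ g) (hN' : op w' ξ' ∈ g)
    {A : Module.End K V} (hA : A ∈ g) :
    (ξ ∘ₗ A ∘ₗ prj w w' ξ ξ', - prj w w' ξ ξ' (A w)) ∈ wt g w w' ξ ξ' := by
  refine h.raise hg hN (by simp [h.p_w]) (by simp [h.p_w']) (by simp [h.ξ_p])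
    (by simp [h.ξ'_p]) ?_
  convert (h.weights hg (h.H_mem hg hN hN') hA).2.2.1 using 1
  ext v; simp

theorem Frame.wt_zero [CharZero K] (h : Frame w w' ξ ξ') (hg : ComClosed g)
    (hN : op w ξ ∈ g) (hN' : op w' ξ' ∈ g)
    {A : Module.End K V} (hA : A ∈ g) (hT : (η, u) ∈ wt g w w' ξ ξ') :
    (ξ' (A w) • η - η ∘ₗ (prj w w' ξ ξ' * A * prj w w' ξ ξ'),
      prj w w' ξ ξ' (A u) - ξ (A w') • u) ∈ wt g w w' ξ ξ' := by
  obtain ⟨h1, h2, h3, h4, h5⟩ := mem_wt.1 hT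
  refine mem_wt.2 ⟨by simp [h1, h.p_w], by simp [h2, h.p_w'], by simp [h3, h.ξ_p],
    by simp [h4, h.ξ'_p], ?_⟩
  convert hg _ (h.weights hg (h.H_mem hg hN hN') hA).2.2.2 _ h5 using 1
  ext v
  simp [h1, h2, h3, h4, h.a, h.b, h.c, h.d, h.p_w, h.ξ_p, Frame.p_of u h3 h4]
  module

/-- Every vector of the common kernel of `ξ, ξ'` occurs in a pair. -/
theorem Frame.exists_form [CharZero K] (h : Frame w w' ξ ξ') (hg : ComClosed g)
    (hN : op w ξ ∈ g) (hN' : op w' ξ' ∈ g)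
    (hirr : Irr g) (v : V) :
    ∃ η, (η, prj w w' ξ ξ' v) ∈ wt g w w' ξ ξ' := by
  set p := prj w w' ξ ξ' with hp
  let F : Submodule K V := ((wt g w w' ξ ξ').map (LinearMap.snd K _ _)).comap p
  have hF : ∀ v, v ∈ F ↔ ∃ η, (η, p v) ∈ wt g w w' ξ ξ' := by
    intro v
    simp [F]
  rw [← hF]
  have : F = ⊤ := by
    refine (hirr F ?_).resolve_left ?_
    · intro A hA u hu
      obtain ⟨η, hη⟩ := (hF u).1 hu
      have e1 : u = ξ' u • w + ξ u • w' + p u := by rw [hp, prj_apply]; abel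
      have hm := add_mem (add_mem (h.wt_zero hg hN hN' hA hη)
        ((wt g w w' ξ ξ').smul_mem (ξ (A w')) hη))
        (add_mem ((wt g w w' ξ ξ').smul_mem (ξ u) (h.wt_one hg hN hN' hA))
          ((wt g w w' ξ ξ').smul_mem (-ξ' u) (h.wt_neg_one hg hN hN' hA)))
      rw [hF]
      refine ⟨_, (congrArg (fun x => (_, x) ∈ wt g w w' ξ ξ') ?_).mpr hm⟩
      simp only [Prod.snd_add, Prod.smul_snd]
      conv_lhs => rw [e1]
      simp only [map_add, map_smul]
      rw [← hp]
      module
    · intro h0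
      have : w ∈ F := (hF w).2 ⟨0, by rw [hp, h.p_w]; exact zero_mem _⟩
      rw [h0, Submodule.mem_bot] at this
      have hc := h.c
      rw [this, map_zero] at hc
      exact zero_ne_one hc
  rw [this]; trivial

/-- The forms that occur in pairs separate the vectors of the common kernel of `ξ, ξ'`. -/
theorem Frame.separates [CharZero K] (h : Frame w w' ξ ξ') (hg : ComClosed g)
    (hN : op w ξ ∈ g) (hN' : op w' ξ' ∈ g)
    (hirr : Irr g) {v : V} (h1 : ξ v = 0) (h2 : ξ' v = 0)
    (h3 : ∀ η u, (η, u) ∈ wt g w w' ξ ξ' → η v = 0) : v = 0 := by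
  let G : Submodule K V :=
    { carrier := {v | ξ v = 0 ∧ ξ' v = 0 ∧ ∀ η u, (η, u) ∈ wt g w w' ξ ξ' → η v = 0}
      zero_mem' := by simp
      add_mem' := by
        rintro a b ⟨a1, a2, a3⟩ ⟨b1, b2, b3⟩
        exact ⟨by simp [a1, b1], by simp [a2, b2], fun η u hu => by simp [a3 η u hu, b3 η u hu]⟩
      smul_mem' := by
        rintro c a ⟨a1, a2, a3⟩
        exact ⟨by simp [a1], by simp [a2], fun η u hu => by simp [a3 η u hu]⟩ }
  have hG : G = ⊥ := by
    refine (hirr G ?_).resolve_right ?_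
    · rintro A hA u ⟨u1, u2, u3⟩
      have hpu : prj w w' ξ ξ' u = u := Frame.p_of u u1 u2
      have x1 := u3 _ _ (h.wt_neg_one hg hN hN' hA)
      have x2 := u3 _ _ (h.wt_one hg hN hN' hA)
      simp only [LinearMap.comp_apply, hpu] at x1 x2
      refine ⟨x1, x2, fun η v hη => ?_⟩
      have x3 := u3 _ _ (h.wt_zero hg hN hN' hA hη)
      simpa [hpu, u3 η v hη, Frame.p_of _ x1 x2] using x3
    · intro h0
      have : w ∈ G := by rw [h0]; trivial
      have := this.2.1
      rw [h.c] at this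
      exact one_ne_zero this
  have : v ∈ G := ⟨h1, h2, h3⟩
  rw [hG] at this
  simpa using this

/-- A cubic identity for the pairs, obtained from a double bracket. -/
theorem Frame.cubic [CharZero K] (h : Frame w w' ξ ξ') (hg : ComClosed g)
    (hN : op w ξ ∈ g) (hN' : op w' ξ' ∈ g)
    {η₁ η₂ η₃ : Module.Dual K V} {u₁ u₂ u₃ : V}
    (t1 : (η₁, u₁) ∈ wt g w w' ξ ξ') (t2 : (η₂, u₂) ∈ wt g w w' ξ ξ')
    (t3 : (η₃, u₃) ∈ wt g w w' ξ ξ') :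
    ((0 : Module.Dual K V), (η₂ u₃ + η₃ u₂) • u₁ + (η₁ u₃ + η₃ u₁) • u₂ +
      (η₁ u₂ + η₂ u₁) • u₃) ∈ wt g w w' ξ ξ' := by
  have l2 := h.lower hg hN' t2
  obtain ⟨a1, a2, a3, a4, a5⟩ := mem_wt.1 t1
  obtain ⟨b1, b2, b3, b4, b5⟩ := mem_wt.1 t2
  obtain ⟨c1, c2, c3, c4, c5⟩ := mem_wt.1 t3
  have hK := hg _ (hg _ a5 _ l2) _ c5
  refine mem_wt.2 ⟨by simp, by simp, by simp [a3, b3, c3], by simp [a4, b4, c4], ?_⟩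
  have := g.add_mem (g.add_mem hK (g.smul_mem (η₁ u₂) c5))
    (g.add_mem (g.smul_mem (η₃ u₁) b5) (g.smul_mem (η₃ u₂) a5))
  convert this using 1
  ext v
  simp [a1, a2, a3, a4, b1, b2, b3, b4, c1, c2, c3, c4, h.a, h.b, h.c, h.d]
  module

/-- If the weight one part of `g` splits, the bracket of its two halves produces the idempotent
`w ⊗ ξ'` of rank one, so `g` is everything. -/
theorem Frame.top_of_split [CharZero K] (h : Frame w w' ξ ξ') (hg : ComClosed g)
    (hN : op w ξ ∈ g) (hN' : op w' ξ' ∈ g)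
    [FiniteDimensional K V] (hirr : Irr g) (h1 : (1 : Module.End K V) ∈ g)
    (hall : ∀ v, ((0 : Module.Dual K V), prj w w' ξ ξ' v) ∈ wt g w w' ξ ξ') : g = ⊤ := by
  set p := prj w w' ξ ξ' with hp
  let C : Submodule K (Module.Dual K V) :=
    (wt g w w' ξ ξ').comap (LinearMap.inl K _ V ∘ₗ Module.Dual.transpose p)
  have memC : ∀ η, η ∈ C ↔ (η ∘ₗ p, (0 : V)) ∈ wt g w w' ξ ξ' := fun η => Iff.rfl
  have hC : C = ⊤ := by
    apply dual_top_of_ker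
    intro v hv
    have z1 : ξ ∘ₗ p = 0 := by ext v; simp [hp, h.ξ_p]
    have z2 : ξ' ∘ₗ p = 0 := by ext v; simp [hp, h.ξ'_p]
    have x1 : ξ v = 0 := hv ξ (by rw [memC, z1]; exact zero_mem _)
    have x2 : ξ' v = 0 := hv ξ' (by rw [memC, z2]; exact zero_mem _)
    refine h.separates hg hN hN' hirr x1 x2 fun η u hu => hv η ?_
    obtain ⟨a1, a2, a3, a4, a5⟩ := mem_wt.1 hu
    have e : η ∘ₗ p = η := by ext v; simp [hp, prj_apply, a1, a2]
    have hz := hall u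
    rw [hp, Frame.p_of u a3 a4] at hz
    rw [memC, e]
    simpa using sub_mem hu hz
  have hw : ∀ η : Module.Dual K V, op w (η ∘ₗ p) ∈ g := by
    intro η
    have : η ∈ C := by rw [hC]; trivial
    simpa using (mem_wt.1 ((memC η).1 this)).2.2.2.2
  have hu : ∀ v, op (p v) ξ' ∈ g := by
    intro v
    have := g.neg_mem (h.lower hg hN' (hall v))
    have z : op w' (0 : Module.Dual K V) = 0 := by ext v; simp
    simpa [z] using this
  let b := Module.finBasis K V
  set t : K := ∑ i, b.coord i (p (b i)) with ht
  have hsum : t • op w ξ' - p ∈ g := by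
    have hs : ∑ i, (op w (b.coord i ∘ₗ p) * op (p (b i)) ξ' -
        op (p (b i)) ξ' * op w (b.coord i ∘ₗ p)) ∈ g :=
      g.sum_mem fun i _ => hg _ (hw _) _ (hu _)
    convert hs using 1
    rw [Finset.sum_sub_distrib]
    congr 1
    · ext v
      simp only [LinearMap.smul_apply, LinearMap.smulRight_apply, LinearMap.sum_apply,
        Module.End.mul_apply, LinearMap.comp_apply, map_smul, ht, Finset.sum_smul]
      refine Finset.sum_congr rfl fun i _ => ?_
      rw [hp, h.p_p, smul_comm]
    · ext v
      simp only [LinearMap.smulRight_apply, LinearMap.sum_apply, Module.End.mul_apply,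
        LinearMap.comp_apply, map_smul, h.c, one_smul]
      have := congrArg p (b.sum_repr (p v))
      rw [map_sum] at this
      simp only [map_smul] at this
      have h2 : p (p v) = p v := h.p_p v
      rw [h2] at this
      exact this.symm
  have htr : t = (Module.finrank K V : K) - 2 := by
    have e1 : LinearMap.trace K V p = t := by
      rw [LinearMap.trace_eq_matrix_trace K b, Matrix.trace, ht]
      simp [LinearMap.toMatrix_apply]
    rw [← e1, hp, prj, map_sub, map_sub, LinearMap.trace_one, LinearMap.trace_smulRight,
      LinearMap.trace_smulRight, h.c, h.b]
    ring
  have hn : (Module.finrank K V : K) ≠ 0 := by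
    have : Nontrivial V := ⟨w, 0, fun h0 => by
      have hc := h.c
      rw [h0, map_zero] at hc
      exact zero_ne_one hc⟩
    exact_mod_cast Module.finrank_pos.ne'
  have hP : op w ξ' = (Module.finrank K V : K)⁻¹ •
      (1 + (op w ξ' - op w' ξ) + (t • op w ξ' - p)) := by
    rw [eq_inv_smul_iff₀ hn, htr, hp]
    ext v
    simp [prj]
    module
  refine top_of_idem hg hirr (w := w) (ξ := ξ') ?_ h.c
  rw [hP]
  exact g.smul_mem _ (g.add_mem (g.add_mem h1 (h.H_mem hg hN hN')) hsum)

/-- If the form `η(u)` on pairs is not identically zero, then `g` is everything. -/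
theorem Frame.top_of_not_isotropic [CharZero K] (h : Frame w w' ξ ξ') (hg : ComClosed g)
    (hN : op w ξ ∈ g) (hN' : op w' ξ' ∈ g)
    [FiniteDimensional K V] (hirr : Irr g)
    (h1 : (1 : Module.End K V) ∈ g) (hT : (η, u) ∈ wt g w w' ξ ξ') (hne : η u ≠ 0) : g = ⊤ := by
  have hu0 : ((0 : Module.Dual K V), u) ∈ wt g w w' ξ ξ' := by
    have := (wt g w w' ξ ξ').smul_mem (6 * η u)⁻¹ (h.cubic hg hN hN' hT hT hT)
    convert this using 1
    refine Prod.ext (by simp) ?_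
    simp only [Prod.smul_snd]
    rw [eq_inv_smul_iff₀ (mul_ne_zero (by norm_num) hne)]
    module
  refine h.top_of_split hg hN hN' hirr h1 fun v => ?_
  obtain ⟨η₂, h2⟩ := h.exists_form hg hN hN' hirr v
  set u₂ := prj w w' ξ ξ' v
  have := h.cubic hg hN hN' hu0 h2 hT
  have := (wt g w w' ξ ξ').smul_mem (η u)⁻¹ (sub_mem this
    ((wt g w w' ξ ξ').smul_mem (η₂ u + η u₂) hu0 |> add_mem <|
      ((wt g w w' ξ ξ').smul_mem (η₂ u) hu0)))
  convert this using 1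
  refine Prod.ext (by simp) ?_
  simp only [Prod.smul_snd, Prod.snd_sub, Prod.snd_add]
  rw [eq_inv_smul_iff₀ hne]
  simp

end RankOneNilpotent

/-! ### Irreducible linear Lie algebras with a rank one element -/

section LemmaZ

variable {K V : Type*} [Field K] [AddCommGroup V] [Module K V] [FiniteDimensional K V]
  [CharZero K]
  {w w' : V} {ξ ξ' : Module.Dual K V} {g : Submodule K (Module.End K V)}

theorem trace_decomp (h : Frame w w' ξ ξ') (A : Module.End K V) :
    LinearMap.trace K V A = ξ' (A w) + ξ (A w') +
      LinearMap.trace K V (prj w w' ξ ξ' * A * prj w w' ξ ξ') := by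
  have h1 : A = A * op w ξ' + A * op w' ξ + A * prj w w' ξ ξ' := by
    rw [prj]; noncomm_ring
  have hpp : prj w w' ξ ξ' * prj w w' ξ ξ' = prj w w' ξ ξ' := by
    ext v; exact h.p_p v
  have h2 : ∀ (v : V) (η : Module.Dual K V), A * op v η = op (A v) η := fun v η => by
    ext u; simp
  conv_lhs => rw [h1]
  rw [map_add, map_add, h2, h2, LinearMap.trace_smulRight, LinearMap.trace_smulRight,
    mul_assoc, LinearMap.trace_mul_comm K (prj w w' ξ ξ'), mul_assoc, hpp]

/-- If the weight one part is isotropic, prolongation elements are traceless at `w`. -/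
theorem Frame.trace_eq_zero (h : Frame w w' ξ ξ') (hg : ComClosed g) (hirr : Irr g)
    (hN : op w ξ ∈ g) (hN' : op w' ξ' ∈ g)
    (hiso : ∀ η u, (η, u) ∈ wt g w w' ξ ξ' → η u = 0)
    (hp : ∃ v, prj w w' ξ ξ' v ≠ 0)
    (X : V → Module.End K V) (hX : ∀ v, X v ∈ g) (hXs : ∀ u v, X u v = X v u) :
    LinearMap.trace K V (X w) = 0 := by
  set p := prj w w' ξ ξ' with hpdef
  set T := wt g w w' ξ ξ' with hT
  set A := X w with hA
  set Q := p * A * p with hQ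
  set a := ξ' (A w) with ha
  set c := ξ (A w') with hc
  have iso : ∀ {η u θ v}, (η, u) ∈ T → (θ, v) ∈ T → η v + θ u = 0 := by
    intro η u θ v h1 h2
    have := hiso (η + θ) (u + v) (add_mem h1 h2)
    simpa [hiso _ _ h1, hiso _ _ h2, add_comm] using this
  have pT : ∀ {η u}, (η, u) ∈ T → p u = u := fun h1 =>
    Frame.p_of _ (mem_wt.1 h1).2.2.1 (mem_wt.1 h1).2.2.2.1
  have hQT : ∀ {η u}, (η, u) ∈ T → p (A u) = Q u := fun h1 => by
    simp [hQ, pT h1]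
  -- invariance of the skew form `(η, u), (θ, v) ↦ η v` under the weight zero part of `X w`
  have e1 : ∀ {η u θ v}, (η, u) ∈ T → (θ, v) ∈ T → (a + c) * η v = η (Q v) - θ (Q u) := by
    intro η u θ v h1 h2
    have h3 := iso (h.wt_zero hg hN hN' (hX w) h1) h2
    have h4 := iso h1 h2
    rw [← hpdef, ← hA, ← hQ, hQT h1] at h3
    simp only [LinearMap.sub_apply, LinearMap.smul_apply, LinearMap.comp_apply, smul_eq_mul,
      map_sub, map_smul] at h3
    linear_combination h3 + c * h4
  have e2 : ∀ {η u θ v}, (η, u) ∈ T → (θ, v) ∈ T → η (Q v) = ξ (X v u) := by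
    intro η u θ v h1 h2
    have h3 := iso (h.wt_neg_one hg hN hN' (hX v)) h1
    rw [← hpdef, hXs v w, ← hA, hQT h2] at h3
    simp only [LinearMap.comp_apply, map_neg, pT h1] at h3
    linear_combination -h3
  have hac : a + c = 0 := by
    obtain ⟨v, hv⟩ := hp
    by_contra hne
    apply hv
    refine h.separates hg hN hN' hirr (h.ξ_p v) (h.ξ'_p v) fun η u hu => ?_
    obtain ⟨θ, hθ⟩ := h.exists_form hg hN hN' hirr v
    have h3 := e1 hu hθ
    rw [e2 hu hθ, e2 hθ hu, hXs, sub_self] at h3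
    exact (mul_eq_zero.1 h3).resolve_left hne
  have hQsymm : ∀ {η u θ v}, (η, u) ∈ T → (θ, v) ∈ T → η (Q v) = θ (Q u) := by
    intro η u θ v h1 h2
    rw [e2 h1 h2, e2 h2 h1, hXs]
  choose φ₀ hφ₀ using fun v => h.exists_form hg hN hN' hirr v
  let b := Module.finBasis K V
  let φ : V →ₗ[K] Module.Dual K V := b.constr K (fun i => φ₀ (b i))
  have hφ : ∀ v, (φ v, p v) ∈ T := by
    intro v
    have : (T.comap (φ.prod p)) = ⊤ := by
      rw [eq_top_iff, ← b.span_eq, Submodule.span_le]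
      rintro _ ⟨i, rfl⟩
      have : φ (b i) = φ₀ (b i) := by simp [φ]
      change (φ (b i), p (b i)) ∈ T
      rw [this]; exact hφ₀ _
    have h2 : v ∈ T.comap (φ.prod p) := by rw [this]; trivial
    exact h2
  let Ω : V →ₗ[K] Module.Dual K V :=
    φ + LinearMap.smulRight ξ' ξ - LinearMap.smulRight ξ ξ'
  have hΩ : ∀ v, Ω v = φ v + ξ' v • ξ - ξ v • ξ' := fun v => rfl
  have hinj : Function.Injective Ω := by
    rw [← LinearMap.ker_eq_bot, LinearMap.ker_eq_bot']
    intro v hv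
    obtain ⟨m1, m2, m3, m4, -⟩ := mem_wt.1 (hφ v)
    have x1 := congrArg (fun f : Module.Dual K V => f w) hv
    have x2 := congrArg (fun f : Module.Dual K V => f w') hv
    simp only [hΩ, LinearMap.sub_apply, LinearMap.add_apply, LinearMap.smul_apply, m1, m2, h.a,
      h.b, h.c, h.d, smul_eq_mul, LinearMap.zero_apply] at x1 x2
    have x3 : ξ v = 0 := by linear_combination -x1
    have x4 : ξ' v = 0 := by linear_combination x2
    have x5 : φ v = 0 := by rw [hΩ, x3, x4] at hv; simpa using hv
    have x6 : p v = v := Frame.p_of v x3 x4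
    refine h.separates hg hN hN' hirr x3 x4 fun η u hu => ?_
    have := iso hu (hφ v)
    rwa [x5, x6, LinearMap.zero_apply, add_zero] at this
  have hΩQ : ∀ v, Ω (Q v) = - (Ω v ∘ₗ Q) := by
    intro v
    have y1 : ξ (Q v) = 0 := h.ξ_p _
    have y2 : ξ' (Q v) = 0 := h.ξ'_p _
    ext u
    have y3 : ξ (Q u) = 0 := h.ξ_p _
    have y4 : ξ' (Q u) = 0 := h.ξ'_p _
    have y5 : φ (Q v) u = φ (Q v) (p u) := by
      obtain ⟨m1, m2, -⟩ := mem_wt.1 (hφ (Q v))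
      simp [hpdef, prj_apply, m1, m2]
    have y6 : p (Q v) = Q v := h.p_p _
    have hQp : ∀ u, Q (p u) = Q u := fun u => by simp only [hQ, Module.End.mul_apply, h.p_p]; rw [hpdef, h.p_p]
    have y7 := iso (hφ (Q v)) (hφ u)
    have y8 := hQsymm (hφ v) (hφ u)
    rw [hQp, hQp] at y8
    rw [y6] at y7
    simp only [hΩ, LinearMap.sub_apply, LinearMap.add_apply, LinearMap.smul_apply,
      LinearMap.neg_apply, LinearMap.comp_apply, y1, y2, y3, y4, y5, smul_eq_mul]
    linear_combination y7 + y8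
  let e : V ≃ₗ[K] Module.Dual K V :=
    LinearMap.linearEquivOfInjective Ω hinj Subspace.dual_finrank_eq.symm
  have he : ∀ v, e v = Ω v := fun v => rfl
  have hconj : e.conj Q = (-1 : K) • Module.Dual.transpose Q := by
    refine LinearMap.ext fun η => ?_
    obtain ⟨v, rfl⟩ := e.surjective η
    rw [LinearEquiv.conj_apply_apply, LinearEquiv.symm_apply_apply, he, he, hΩQ]
    exact (neg_one_smul K _).symm
  have htr : LinearMap.trace K V Q = - LinearMap.trace K V Q := by
    conv_lhs => rw [← LinearMap.trace_conj' Q e, hconj, map_smul, LinearMap.trace_transpose',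
      neg_one_smul]
  have htr0 : LinearMap.trace K V Q = 0 := by
    have : (2 : K) * LinearMap.trace K V Q = 0 := by linear_combination htr
    simpa using this
  rw [trace_decomp h, ← hpdef, ← hQ, htr0, add_zero]
  exact hac

attribute [local instance] LieRing.ofAssociativeRing

/-- For an irreducible `g` containing the identity and a rank one nilpotent `w ⊗ ξ ∈ g`, some
element of `g` pairs `w` and `ξ` nontrivially: otherwise `w ⊗ ξ` would lie in the kernel of the
Killing form of the semisimple traceless part of `g`. -/
theorem exists_pairing [IsAlgClosed K] (hg : ComClosed g) (hirr : Irr g)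
    (h1 : (1 : Module.End K V) ∈ g) (hw : w ≠ 0) (hξ : ξ ≠ 0) (hN : op w ξ ∈ g)
    (h0 : ξ w = 0) : ∃ A ∈ g, ξ (A w) ≠ 0 := by
  by_contra hcon
  push Not at hcon
  let s : LieSubalgebra K (Module.End K V) :=
    { g ⊓ LinearMap.ker (LinearMap.trace K V) with
      lie_mem' := by
        rintro A B ⟨hA, hA'⟩ ⟨hB, hB'⟩
        refine ⟨?_, ?_⟩
        · rw [LieRing.of_associative_ring_bracket]; exact hg A hA B hB
        · change LinearMap.trace K V ⁅A, B⁆ = 0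
          rw [LieRing.of_associative_ring_bracket, map_sub, LinearMap.trace_mul_comm, sub_self] }
  have mem_s : ∀ A, A ∈ s ↔ A ∈ g ∧ LinearMap.trace K V A = 0 := fun A => Iff.rfl
  have : Nontrivial V := ⟨w, 0, hw⟩
  have hn : (Module.finrank K V : K) ≠ 0 := by exact_mod_cast Module.finrank_pos.ne'
  have hirr' : LieModule.IsIrreducible K s V := by
    refine { exists_pair_ne := ⟨⊥, ⊤, bot_ne_top⟩, eq_bot_or_eq_top := fun F => ?_ }
    have := hirr F.toSubmodule (fun A hA u hu => by
      set t := LinearMap.trace K V A / (Module.finrank K V : K) with ht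
      have hs : A - t • 1 ∈ s := by
        rw [mem_s]
        refine ⟨g.sub_mem hA (g.smul_mem _ h1), ?_⟩
        rw [map_sub, map_smul, LinearMap.trace_one, ht, smul_eq_mul, div_mul_cancel₀ _ hn,
          sub_self]
      have h2 : (A - t • 1) u ∈ F.toSubmodule := F.lie_mem (x := (⟨_, hs⟩ : s)) hu
      have h3 : A u = (A - t • 1) u + t • u := by simp
      rw [h3]
      exact F.toSubmodule.add_mem h2 (F.toSubmodule.smul_mem t hu))
    rcases this with h | h
    · left; rw [← LieSubmodule.toSubmodule_inj, h]; rfl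
    · right; rw [← LieSubmodule.toSubmodule_inj, h]; rfl
  have hrad : LieAlgebra.HasTrivialRadical K s :=
    LieAlgebra.hasTrivialRadical_of_isIrreducible_of_isFaithful K s V
      (fun x => ((mem_s x.1).1 x.2).2)
  have hNs : op w ξ ∈ s := (mem_s _).2 ⟨hN, by rw [LinearMap.trace_smulRight, h0]⟩
  let N : s := ⟨op w ξ, hNs⟩
  have hNz : N = 0 := by
    have hnd := (LieAlgebra.IsKilling.killingForm_nondegenerate K s)
    refine hnd.1 N fun B => ?_
    rw [LieModule.traceForm_apply_apply]
    refine IsNilpotent.eq_zero (LinearMap.isNilpotent_trace_of_isNilpotent ⟨2, ?_⟩)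
    refine LinearMap.ext fun C => Subtype.ext ?_
    have hB := hcon _ ((mem_s _).1 B.2).1
    have hC := hcon _ ((mem_s _).1 C.2).1
    have hBC := hcon _ ((mem_s _).1 (⁅B, C⁆ : s).2).1
    have hBBC := hcon _ ((mem_s _).1 (⁅B, ⁅B, C⁆⁆ : s).2).1
    change ⁅op w ξ, ⁅(B : Module.End K V), ⁅op w ξ, ⁅(B : Module.End K V), (C : Module.End K V)⁆⁆⁆⁆ = 0
    replace hBC : ξ (⁅(B : Module.End K V), (C : Module.End K V)⁆ w) = 0 := hBC
    replace hBBC : ξ (⁅(B : Module.End K V), ⁅(B : Module.End K V), (C : Module.End K V)⁆⁆ w) = 0 :=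
      hBBC
    generalize (⁅(B : Module.End K V), (C : Module.End K V)⁆ : Module.End K V) = D at *
    ext v
    simp only [LieRing.of_associative_ring_bracket, LinearMap.sub_apply, Module.End.mul_apply,
      map_sub, map_smul, LinearMap.smulRight_apply, hB, hBC, h0, LinearMap.zero_apply,
      smul_zero, sub_zero, zero_sub, smul_eq_mul, mul_zero, zero_smul] at hBBC ⊢
    have h4 : ξ (B.1 (D w)) = ξ (D (B.1 w)) := by linear_combination hBBC
    simp [h4]
  have hop : op w ξ = 0 := congrArg Subtype.val hNz
  apply hξ
  ext v
  have := congrArg (fun f : Module.End K V => f v) hop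
  simpa [hw] using this

/-- A commutator-closed irreducible space `g` of operators containing the identity, a rank one
operator `w ⊗ ξ`, and a prolongation element `X` whose value at `w` is not traceless, is the
space of all operators. -/
theorem eq_top_of_op_mem [IsAlgClosed K] (hg : ComClosed g) (hirr : Irr g)
    (h1 : (1 : Module.End K V) ∈ g) (hw : w ≠ 0) (hξ : ξ ≠ 0) (hN : op w ξ ∈ g)
    (X : V → Module.End K V) (hX : ∀ v, X v ∈ g) (hXs : ∀ u v, X u v = X v u)
    (htr : LinearMap.trace K V (X w) ≠ 0) : g = ⊤ := by
  by_cases h0 : ξ w = 0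
  swap
  · refine top_of_idem hg hirr (w := w) (ξ := (ξ w)⁻¹ • ξ) ?_ (by simp [h0])
    rw [op_smul_right]; exact g.smul_mem _ hN
  obtain ⟨A₀, hA₀, hc⟩ := exists_pairing hg hirr h1 hw hξ hN h0
  set A := (ξ (A₀ w))⁻¹ • A₀ with hAdef
  have hA : A ∈ g := g.smul_mem _ hA₀
  have hAw : ξ (A w) = 1 := by simp [hAdef, hc]
  set s : K := ξ (A (A w)) / 2 with hs
  have h : Frame w (A w - s • w) ξ (ξ ∘ₗ A - s • ξ) :=
    ⟨h0, by simp [hAw, h0], by simp [hAw, h0], by simp [hAw, h0, hs]; ring⟩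
  set w' := A w - s • w with hw'
  set ξ' := ξ ∘ₗ A - s • ξ with hξ'
  have hH : op w ξ' - op w' ξ ∈ g := by
    convert hg _ hN _ hA using 1
    ext v; simp [hw', hξ']; module
  have hN' : op w' ξ' ∈ g := by
    simpa [hAw] using (h.weights hg hH hA).1
  by_cases hp : ∃ v, prj w w' ξ ξ' v ≠ 0
  · by_cases hiso : ∀ η u, (η, u) ∈ wt g w w' ξ ξ' → η u = 0
    · exact absurd (h.trace_eq_zero hg hirr hN hN' hiso hp X hX hXs) htr
    · push Not at hiso
      obtain ⟨η, u, hu, hne⟩ := hiso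
      exact h.top_of_not_isotropic hg hN hN' hirr h1 hu hne
  · push Not at hp
    refine h.top_of_split hg hN hN' hirr h1 fun v => ?_
    rw [hp]; exact zero_mem _

end LemmaZ

/-! ### Semisimplicity and the Killing form -/

section Killing

variable {K : Type*} [Field K] {n : ℕ}

/-- The conditions on a subalgebra of `Vect K n` that characterise maximality over an algebraically
closed field: it contains the constant fields, its linear part acts irreducibly, and it contains a
nonzero quadratic field. -/
structure Std (L : LieSubalgebra K (Vect K n)) : Prop where
  cst_mem : ∀ v, cst v ∈ L
  irr : ∀ F : Submodule K (Fin n → K), (∀ A, lin A ∈ L → ∀ u ∈ F, A u ∈ F) → F = ⊥ ∨ F = ⊤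
  quad : ∃ D ∈ L, D ∈ H K n 2 ∧ D ≠ 0

theorem Std.mono {L M : LieSubalgebra K (Vect K n)} (h : Std L) (hLM : L ≤ M) : Std M where
  cst_mem v := hLM (h.cst_mem v)
  irr F hF := h.irr F fun A hA => hF A (hLM hA)
  quad := let ⟨D, hD, h'⟩ := h.quad; ⟨D, hLM hD, h'⟩

theorem exists_cst_mem [CharZero K] {I : Submodule K (Vect K n)}
    (hI : ∀ v : Fin n → K, ∀ D ∈ I, ⁅cst v, D⁆ ∈ I) (k : ℕ) :
    ∀ D ∈ I, D ∈ H K n k → D ≠ 0 → ∃ v, v ≠ 0 ∧ cst v ∈ I := by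
  induction k with
  | zero =>
    intro D hD hk h0
    obtain ⟨v, rfl⟩ := mem_H_zero.1 hk
    exact ⟨v, by rintro rfl; simp at h0, hD⟩
  | succ k ih =>
    intro D hD hk h0
    by_contra hcon
    refine h0 (eq_zero_of_lie_cst hk fun v => ?_)
    by_contra hne
    exact hcon (ih _ (hI v D hD) (lie_mem_H (cst_mem v) hk (by omega)) hne)

theorem eq_zero_of_lie_cst_lie_cst [CharZero K] {x : Vect K n} (hx : x ∈ H K n 2)
    (h : ∀ u v : Fin n → K, ⁅cst u, ⁅cst v, x⁆⁆ = 0) : x = 0 :=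
  eq_zero_of_lie_cst hx fun v =>
    eq_zero_of_lie_cst (k := 0) (lie_mem_H (cst_mem v) hx (by omega)) fun u => h u v

theorem hasTrivialRadical_of_submodule {G : Type*} [LieRing G] [LieAlgebra K G]
    (M : LieSubalgebra K G) [FiniteDimensional K M]
    (h : ∀ I : Submodule K G, I ≤ M.toSubmodule → (∀ a ∈ M, ∀ D ∈ I, ⁅a, D⁆ ∈ I) →
      (∀ a ∈ I, ∀ D ∈ I, ⁅a, D⁆ = 0) → I = ⊥) :
    LieAlgebra.HasTrivialRadical K M := by
  rw [LieAlgebra.hasTrivialRadical_iff_no_abelian_ideals]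
  intro I hI
  let I' : Submodule K G := (I : Submodule K M).map M.toSubmodule.subtype
  have mem' : ∀ D, D ∈ I' ↔ ∃ hD : D ∈ M, (⟨D, hD⟩ : M) ∈ I := by
    intro D
    constructor
    · rintro ⟨⟨D, hD⟩, hDI, rfl⟩; exact ⟨hD, hDI⟩
    · rintro ⟨hD, hDI⟩; exact ⟨⟨D, hD⟩, hDI, rfl⟩
  have hbr : ∀ a ∈ M, ∀ D ∈ I', ⁅a, D⁆ ∈ I' := by
    intro a ha D hD
    obtain ⟨hD, hDI⟩ := (mem' D).1 hD
    exact (mem' _).2 ⟨M.lie_mem ha hD, I.lie_mem (x := (⟨a, ha⟩ : M)) hDI⟩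
  have hab : ∀ a ∈ I', ∀ D ∈ I', ⁅a, D⁆ = 0 := by
    intro a ha D hD
    obtain ⟨ha, haI⟩ := (mem' a).1 ha
    obtain ⟨hD, hDI⟩ := (mem' D).1 hD
    have := hI.trivial (⟨⟨a, ha⟩, haI⟩ : I) (⟨⟨D, hD⟩, hDI⟩ : I)
    simpa using congrArg (fun z : I => ((z : M) : G)) this
  have := h I' (fun D hD => ((mem' D).1 hD).1) hbr hab
  rw [LieSubmodule.eq_bot_iff]
  intro z hz
  have hz' : (z : G) ∈ I' := ⟨z, hz, rfl⟩
  rw [this, Submodule.mem_bot] at hz'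
  exact Subtype.ext hz'

/-- A nonzero abelian ideal would contain all constant fields, so these would commute with their
brackets with a quadratic field, which forces that field to vanish. -/
theorem Std.hasTrivialRadical [CharZero K] {M : LieSubalgebra K (Vect K n)}
    [FiniteDimensional K M] (h : Std M) (he : euler K n ∈ M) :
    LieAlgebra.HasTrivialRadical K M := by
  apply hasTrivialRadical_of_submodule
  intro I' _ hbr hab
  by_contra hne
  obtain ⟨z, hzI, hz0⟩ := (Submodule.ne_bot_iff _).1 hne
  have hex : ∃ k, cmpt k z ≠ 0 := by
    by_contra hcon
    push Not at hcon
    exact hz0 (eq_zero_of_cmpt hcon)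
  obtain ⟨k, hk⟩ := hex
  obtain ⟨v, hv0, hv⟩ := exists_cst_mem (fun v D hD => hbr _ (h.cst_mem v) D hD) k _
    (cmpt_mem_of_euler_stable (M := I') (fun D hD => hbr _ he D hD) hzI k) (cmpt_mem k _) hk
  have hall : ∀ u, cst u ∈ I' := by
    have := h.irr (I'.comap cst) (fun A hA u hu => by
      have := hbr _ hA _ hu
      rw [lie_lin_cst] at this
      have h2 : cst (A u) ∈ I' := neg_mem_iff.1 this
      exact h2)
    rcases this with h1 | h1
    · exact absurd ((Submodule.eq_bot_iff _).1 h1 v hv) hv0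
    · intro u
      have : u ∈ I'.comap cst := h1 ▸ Submodule.mem_top
      exact this
  obtain ⟨x, hxM, hx2, hx0⟩ := h.quad
  refine hx0 (eq_zero_of_lie_cst_lie_cst hx2 fun u v => hab _ (hall u) _ ?_)
  rw [← lie_skew]
  exact neg_mem (hbr _ hxM _ (hall v))

/-- The Killing form of `M`, extended to the ambient Lie algebra along a linear projection, with the
properties used below. -/
theorem exists_killing {G : Type*} [LieRing G] [LieAlgebra K G] (M : LieSubalgebra K G)
    [FiniteDimensional K M] [LieAlgebra.IsKilling K M] :
    ∃ κ : G →ₗ[K] G →ₗ[K] K,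
      (∀ a ∈ M, ∀ b ∈ M, ∀ c ∈ M, κ ⁅a, b⁆ c = κ a ⁅b, c⁆) ∧
      (∀ a b, κ a b = κ b a) ∧
      (∀ a ∈ M, (∀ b ∈ M, κ a b = 0) → a = 0) ∧
      (∀ f : G →ₗ[K] K, ∃ z ∈ M, ∀ b ∈ M, κ z b = f b) := by
  obtain ⟨π, hπ⟩ := LinearMap.exists_leftInverse_of_injective M.toSubmodule.subtype
    (Submodule.ker_subtype _)
  let π' : G →ₗ[K] M := π
  have hπ' : ∀ a : M, π' (a : G) = a := fun a => LinearMap.congr_fun hπ a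
  have hnd := LieAlgebra.IsKilling.killingForm_nondegenerate K M
  have hinj : Function.Injective (killingForm K M) := by
    rw [← LinearMap.ker_eq_bot, LinearMap.ker_eq_bot']
    intro m hm
    exact hnd.1 m fun b => by rw [hm]; rfl
  have hap : ∀ a b, (killingForm K M).compl₁₂ π' π' a b = killingForm K M (π' a) (π' b) :=
    fun a b => rfl
  refine ⟨(killingForm K M).compl₁₂ π' π', ?_, ?_, ?_, ?_⟩
  · intro a ha b hb c hc
    lift a to M using ha
    lift b to M using hb
    lift c to M using hc
    rw [hap, hap, ← LieSubalgebra.coe_bracket, ← LieSubalgebra.coe_bracket, hπ', hπ', hπ', hπ']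
    exact LieModule.traceForm_apply_lie_apply K M M a b c
  · intro a b
    rw [hap, hap]; exact LieModule.traceForm_comm K M M _ _
  · intro a ha h
    lift a to M using ha
    have : a = 0 := hnd.1 a fun b => by
      have := h b b.2
      rwa [hap, hπ', hπ'] at this
    rw [this]; rfl
  · intro f
    obtain ⟨z, hz⟩ := (LinearMap.injective_iff_surjective_of_finrank_eq_finrank
      (Subspace.dual_finrank_eq (K := K) (V := M)).symm).1 hinj (f ∘ₗ M.toSubmodule.subtype)
    refine ⟨z, z.2, fun b hb => ?_⟩
    lift b to M using hb
    rw [hap, hπ', hπ', hz]; rfl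

/-- A Lie algebra with nondegenerate Killing form is perfect. -/
theorem le_of_lie_mem {G : Type*} [LieRing G] [LieAlgebra K G] (M : LieSubalgebra K G)
    [FiniteDimensional K M] [LieAlgebra.IsKilling K M] (N : Submodule K G)
    (hN : ∀ a ∈ M, ∀ b ∈ M, ⁅a, b⁆ ∈ N) : M.toSubmodule ≤ N := by
  obtain ⟨κ, hinv, hsymm, hnd, hsurj⟩ := exists_killing M
  intro v hv
  by_contra hvN
  obtain ⟨f, hfv, hf⟩ := Submodule.exists_le_ker_of_notMem hvN
  obtain ⟨z, hz, hzf⟩ := hsurj f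
  -- `z` is Killing-orthogonal to all brackets, hence central, hence zero.
  have had : ∀ a ∈ M, ⁅z, a⁆ = 0 := fun a ha => hnd _ (M.lie_mem hz ha) fun b hb => by
    rw [hinv z hz a ha b hb, hzf _ (M.lie_mem ha hb)]
    exact hf (hN a ha b hb)
  have hz0 : z = 0 := by
    have hc : (⟨z, hz⟩ : M) ∈ LieAlgebra.center K M := by
      rw [LieModule.mem_maxTrivSubmodule]
      intro a
      apply Subtype.ext
      rw [LieSubalgebra.coe_bracket, ← lie_skew, had a a.2]; simp
    rw [LieAlgebra.center_eq_bot K M, LieSubmodule.mem_bot] at hc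
    exact congrArg Subtype.val hc
  rw [← hzf v hv, hz0] at hfv
  simp at hfv

end Killing

/-! ### Finite-dimensional overalgebras -/

section KillingGraded

variable {K : Type*} [Field K] {n : ℕ}

theorem euler_lie_mem {L : Submodule K (Vect K n)} (hgr : ∀ D ∈ L, ∀ k, cmpt k D ∈ L)
    {D : Vect K n} (hD : D ∈ L) : ⁅euler K n, D⁆ ∈ L := by
  obtain ⟨N, hN, _⟩ := exists_sum_cmpt D
  have : ⁅euler K n, D⁆ = ∑ k ∈ Finset.range N, ((k : K) - 1) • cmpt k D := by
    have h2 : ∀ k : ℕ, ((k : K) - 1) • cmpt k D = LieAlgebra.ad K (Vect K n) (euler K n) (cmpt k D) :=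
      fun k => (euler_lie (cmpt_mem k D)).symm
    simp only [h2]
    rw [← map_sum, ← hN]; rfl
  rw [this]
  exact L.sum_mem fun k _ => L.smul_mem _ (hgr D hD k)

/-- The subalgebra generated by a graded subalgebra and the Euler field. -/
noncomputable def addEuler (L : LieSubalgebra K (Vect K n)) (hgr : ∀ D ∈ L, ∀ k, cmpt k D ∈ L) :
    LieSubalgebra K (Vect K n) where
  carrier := {D | ∃ c : K, D - c • euler K n ∈ L}
  add_mem' := by
    rintro a b ⟨c, hc⟩ ⟨d, hd⟩
    refine ⟨c + d, ?_⟩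
    have := L.add_mem hc hd
    have hs : (c + d) • euler K n = c • euler K n + d • euler K n := add_smul c d (euler K n)
    rw [hs]
    convert this using 1
    abel
  zero_mem' := ⟨0, by simp⟩
  smul_mem' := by
    rintro r a ⟨c, hc⟩
    refine ⟨r * c, ?_⟩
    have := L.smul_mem r hc
    rwa [smul_sub, smul_smul] at this
  lie_mem' := by
    rintro a b ⟨c, hc⟩ ⟨d, hd⟩
    refine ⟨0, ?_⟩
    obtain ⟨a', ha', rfl⟩ : ∃ a', a' ∈ L ∧ a = a' + c • euler K n := ⟨_, hc, by abel⟩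
    obtain ⟨b', hb', rfl⟩ : ∃ b', b' ∈ L ∧ b = b' + d • euler K n := ⟨_, hd, by abel⟩
    have h1 := euler_lie_mem (L := L.toSubmodule) hgr ha'
    have h2 := euler_lie_mem (L := L.toSubmodule) hgr hb'
    rw [add_lieV, lie_addV, lie_addV, smul_lieV, smul_lieV, lie_smulV, lie_smulV, lie_self,
      ← lie_skew a' (euler K n)]
    simp only [zero_smul, sub_zero, smul_zero, add_zero]
    exact L.add_mem (L.add_mem (L.lie_mem ha' hb') (L.smul_mem _ (neg_mem h1)))
      (L.smul_mem _ h2)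

theorem mem_addEuler {L : LieSubalgebra K (Vect K n)} {hgr : ∀ D ∈ L, ∀ k, cmpt k D ∈ L}
    {D : Vect K n} : D ∈ addEuler L hgr ↔ ∃ c : K, D - c • euler K n ∈ L := Iff.rfl

theorem le_addEuler {L : LieSubalgebra K (Vect K n)} {hgr : ∀ D ∈ L, ∀ k, cmpt k D ∈ L} :
    L ≤ addEuler L hgr := fun D hD => ⟨0, by simpa using hD⟩

theorem addEuler_lie_mem {L : LieSubalgebra K (Vect K n)} {hgr : ∀ D ∈ L, ∀ k, cmpt k D ∈ L}
    {a b : Vect K n} (ha : a ∈ addEuler L hgr) (hb : b ∈ addEuler L hgr) : ⁅a, b⁆ ∈ L := by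
  obtain ⟨c, hc⟩ := ha
  obtain ⟨d, hd⟩ := hb
  obtain ⟨a', ha', rfl⟩ : ∃ a', a' ∈ L ∧ a = a' + c • euler K n := ⟨_, hc, by abel⟩
  obtain ⟨b', hb', rfl⟩ : ∃ b', b' ∈ L ∧ b = b' + d • euler K n := ⟨_, hd, by abel⟩
  have h1 := euler_lie_mem (L := L.toSubmodule) hgr ha'
  have h2 := euler_lie_mem (L := L.toSubmodule) hgr hb'
  rw [add_lieV, lie_addV, lie_addV, smul_lieV, smul_lieV, lie_smulV, lie_smulV, lie_self,
    ← lie_skew a' (euler K n)]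
  simp only [smul_zero, add_zero]
  exact L.add_mem (L.add_mem (L.lie_mem ha' hb') (L.smul_mem _ (neg_mem h1)))
    (L.smul_mem _ h2)

theorem Std.isKilling [CharZero K] {M : LieSubalgebra K (Vect K n)} [FiniteDimensional K M]
    (h : Std M) (he : euler K n ∈ M) : LieAlgebra.IsKilling K M :=
  have := h.hasTrivialRadical he
  inferInstance

/-- `L + K·euler` is semisimple, hence equal to its derived algebra, which lies in `L`. -/
theorem Std.euler_mem [CharZero K] {L : LieSubalgebra K (Vect K n)} [FiniteDimensional K L]
    (h : Std L) (hgr : ∀ D ∈ L, ∀ k, cmpt k D ∈ L) : euler K n ∈ L := by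
  have he : euler K n ∈ addEuler L hgr := ⟨1, by simp⟩
  have hle : (addEuler L hgr).toSubmodule ≤ L.toSubmodule ⊔ Submodule.span K {euler K n} := by
    rintro D ⟨c, hc⟩
    have := Submodule.add_mem_sup (S := L.toSubmodule) (T := Submodule.span K {euler K n}) hc
      (Submodule.smul_mem _ c (Submodule.mem_span_singleton_self _))
    rwa [sub_add_cancel] at this
  have hL : FiniteDimensional K L.toSubmodule := ‹_›
  have : FiniteDimensional K (addEuler L hgr).toSubmodule :=
    Submodule.finiteDimensional_of_le hle
  have hfd : FiniteDimensional K (addEuler L hgr) := this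
  have := (h.mono le_addEuler).isKilling he
  exact le_of_lie_mem (addEuler L hgr) L.toSubmodule
    (fun a ha b hb => addEuler_lie_mem ha hb) he

theorem killing_graded [CharZero K] {M : LieSubalgebra K (Vect K n)} (he : euler K n ∈ M)
    {κ : Vect K n →ₗ[K] Vect K n →ₗ[K] K}
    (hinv : ∀ a ∈ M, ∀ b ∈ M, ∀ c ∈ M, κ ⁅a, b⁆ c = κ a ⁅b, c⁆)
    {a b : Vect K n} {k l : ℕ} (ha : a ∈ M) (hb : b ∈ M) (hk : a ∈ H K n k) (hl : b ∈ H K n l)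
    (hkl : k + l ≠ 2) : κ a b = 0 := by
  have h1 := hinv a ha _ he b hb
  rw [← lie_skew, euler_lie hk, euler_lie hl] at h1
  simp only [map_neg, map_smul, LinearMap.neg_apply, LinearMap.smul_apply, smul_eq_mul] at h1
  have h2 : ((k : K) + l - 2) * κ a b = 0 := by linear_combination -h1
  rcases mul_eq_zero.1 h2 with h3 | h3
  · exfalso; apply hkl
    have : ((k + l : ℕ) : K) = (2 : ℕ) := by push_cast; linear_combination h3
    exact_mod_cast this
  · exact h3

theorem killing_ext [CharZero K] {M : LieSubalgebra K (Vect K n)} (he : euler K n ∈ M)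
    {κ : Vect K n →ₗ[K] Vect K n →ₗ[K] K}
    (hinv : ∀ a ∈ M, ∀ b ∈ M, ∀ c ∈ M, κ ⁅a, b⁆ c = κ a ⁅b, c⁆)
    (hnd : ∀ a ∈ M, (∀ b ∈ M, κ a b = 0) → a = 0)
    {a : Vect K n} {k : ℕ} (ha : a ∈ M) (hk : a ∈ H K n k)
    (h : ∀ l, k + l = 2 → ∀ b ∈ M, b ∈ H K n l → κ a b = 0) : a = 0 := by
  refine hnd a ha fun b hb => ?_
  have hgr : ∀ l, cmpt l b ∈ M := fun l => cmpt_mem_of_euler_stable (M := M.toSubmodule)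
    (fun D hD => M.lie_mem he hD) hb l
  obtain ⟨N, hN, _⟩ := exists_sum_cmpt b
  rw [hN, map_sum]
  refine Finset.sum_eq_zero fun l _ => ?_
  by_cases hkl : k + l = 2
  · exact h l hkl _ (hgr l) (cmpt_mem l b)
  · exact killing_graded he hinv ha (hgr l) hk (cmpt_mem l b) hkl

theorem finrank_le_of_pairing {G V : Type*} [AddCommGroup G] [Module K G] [AddCommGroup V]
    [Module K V] [FiniteDimensional K V] (S : Submodule K G) (β : G →ₗ[K] V →ₗ[K] K)
    (h : ∀ a ∈ S, (∀ v, β a v = 0) → a = 0) : Module.finrank K S ≤ Module.finrank K V := by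
  have hφ : Function.Injective (β ∘ₗ S.subtype) := by
    rw [← LinearMap.ker_eq_bot, LinearMap.ker_eq_bot']
    rintro ⟨a, ha⟩ h0
    exact Subtype.ext (h a ha fun v => LinearMap.congr_fun h0 v)
  have := LinearMap.finrank_le_finrank_of_injective hφ
  rwa [Subspace.dual_finrank_eq] at this

theorem le_finrank_of_pairing {G V : Type*} [AddCommGroup G] [Module K G] [AddCommGroup V]
    [Module K V] (S : Submodule K G) [FiniteDimensional K S] (β : G →ₗ[K] V →ₗ[K] K)
    (h : ∀ v, (∀ a ∈ S, β a v = 0) → v = 0) : Module.finrank K V ≤ Module.finrank K S := by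
  have hφ : Function.Injective (β ∘ₗ S.subtype).flip := by
    rw [← LinearMap.ker_eq_bot, LinearMap.ker_eq_bot']
    intro v h0
    exact h v fun a ha => LinearMap.congr_fun h0 ⟨a, ha⟩
  have := LinearMap.finrank_le_finrank_of_injective hφ
  rwa [Subspace.dual_finrank_eq] at this

theorem finrank_quad [CharZero K] {M : LieSubalgebra K (Vect K n)} [FiniteDimensional K M]
    (h : Std M) (he : euler K n ∈ M) :
    Module.finrank K (M.toSubmodule ⊓ H K n 2 : Submodule K (Vect K n)) = n := by
  have := h.isKilling he
  obtain ⟨κ, hinv, hsymm, hnd, -⟩ := exists_killing M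
  have hM : FiniteDimensional K M.toSubmodule := ‹_›
  have hf : FiniteDimensional K (M.toSubmodule ⊓ H K n 2 : Submodule K (Vect K n)) :=
    Submodule.finiteDimensional_of_le inf_le_left
  apply le_antisymm
  · have := finrank_le_of_pairing (M.toSubmodule ⊓ H K n 2) (κ.compl₂ cst) (by
      rintro a ⟨haM, ha2⟩ h0
      refine killing_ext he hinv hnd haM ha2 fun l hl b hb hbl => ?_
      obtain rfl : l = 0 := by omega
      obtain ⟨v, rfl⟩ := mem_H_zero.1 hbl
      exact h0 v)
    rwa [Module.finrank_fin_fun] at this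
  · have := le_finrank_of_pairing (M.toSubmodule ⊓ H K n 2) (κ.compl₂ cst) (by
      intro v h0
      apply cst_injective
      rw [map_zero]
      refine killing_ext he hinv hnd (h.cst_mem v) (PolyVect.cst_mem v) fun l hl b hb hbl => ?_
      obtain rfl : l = 2 := by omega
      rw [hsymm]
      exact h0 b ⟨hb, hbl⟩)
    rwa [Module.finrank_fin_fun] at this

/-- No finite-dimensional subalgebra `M` is strictly larger than `L`. The Killing form of `M` pairs
the constant fields with the quadratic ones, so `L` and `M` have the same quadratic fields; then the
Killing-orthogonal of `L` in `M` vanishes in each degree. -/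
theorem Std.eq_of_finiteDimensional [CharZero K] {L M : LieSubalgebra K (Vect K n)}
    [FiniteDimensional K M] (h : Std L) (hgr : ∀ D ∈ L, ∀ k, cmpt k D ∈ L) (hLM : L ≤ M) :
    M = L := by
  have hM : FiniteDimensional K M.toSubmodule := ‹_›
  have hL : FiniteDimensional K L.toSubmodule :=
    Submodule.finiteDimensional_of_le (S₂ := M.toSubmodule) hLM
  have hL' : FiniteDimensional K L := hL
  have heL := h.euler_mem hgr
  have he : euler K n ∈ M := hLM heL
  have hS := h.mono hLM
  have := hS.isKilling he
  have hgrM : ∀ D ∈ M, ∀ l, cmpt l D ∈ M := fun D hD l =>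
    cmpt_mem_of_euler_stable (M := M.toSubmodule) (fun D hD => M.lie_mem he hD) hD l
  have h2 : (L.toSubmodule ⊓ H K n 2 : Submodule K (Vect K n)) = M.toSubmodule ⊓ H K n 2 := by
    have hf : FiniteDimensional K (M.toSubmodule ⊓ H K n 2 : Submodule K (Vect K n)) :=
      Submodule.finiteDimensional_of_le inf_le_left
    apply Submodule.eq_of_le_of_finrank_eq (inf_le_inf_right _ hLM)
    rw [finrank_quad h heL, finrank_quad hS he]
  obtain ⟨κ, hinv, hsymm, hnd, hsurj⟩ := exists_killing M
  refine le_antisymm (fun m hm => ?_) hLM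
  by_contra hmL
  obtain ⟨f, hfm, hf⟩ := Submodule.exists_le_ker_of_notMem (p := L.toSubmodule) hmL
  obtain ⟨z, hz, hzf⟩ := hsurj f
  have hzL : ∀ k, ∀ l j, l ∈ L → l ∈ H K n j → κ (cmpt k z) l = 0 := by
    intro k l j hl hj
    by_cases hkj : k + j = 2
    · obtain ⟨N, hN, hN'⟩ := exists_sum_cmpt z
      have hsum : κ z l = κ (cmpt k z) l := by
        conv_lhs => rw [hN]
        rw [map_sum, LinearMap.sum_apply]
        by_cases hk : k < N
        · refine Finset.sum_eq_single k (fun i _ hi => ?_) (fun h => ?_)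
          · exact killing_graded he hinv (hgrM z hz i) (hLM hl) (cmpt_mem i z) hj (by omega)
          · simp [hk] at h
        · rw [hN' k (by omega)]
          simp only [map_zero, LinearMap.zero_apply]
          refine Finset.sum_eq_zero fun i hi => ?_
          have := Finset.mem_range.1 hi
          exact killing_graded he hinv (hgrM z hz i) (hLM hl) (cmpt_mem i z) hj (by omega)
      rw [← hsum, hzf l (hLM hl)]
      exact hf hl
    · exact killing_graded he hinv (hgrM z hz k) (hLM hl) (cmpt_mem k z) hj hkj
  have hz0 : z = 0 := by
    apply eq_zero_of_cmpt
    intro k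
    have hkM := hgrM z hz k
    have hkH := cmpt_mem k z
    have hq : ∀ l b, l ≠ 1 → k + l = 2 → b ∈ M → b ∈ H K n l → κ (cmpt k z) b = 0 := by
      intro l b hl1 hkl hb hbl
      refine hzL k b l ?_ hbl
      obtain rfl | rfl : l = 0 ∨ l = 2 := by omega
      · obtain ⟨v, rfl⟩ := mem_H_zero.1 hbl
        exact h.cst_mem v
      · have : b ∈ M.toSubmodule ⊓ H K n 2 := ⟨hb, hbl⟩
        rw [← h2] at this
        exact this.1
    by_cases hk1 : k = 1
    · subst hk1
      refine eq_zero_of_lie_cst hkH fun v => ?_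
      rw [← lie_skew, neg_eq_zero]
      refine killing_ext he hinv hnd (M.lie_mem hkM (hS.cst_mem v))
        (k := 0) (lie_mem_H hkH (PolyVect.cst_mem v) (by omega)) fun l hl b hb hbl => ?_
      obtain rfl : l = 2 := by omega
      rw [hinv _ hkM _ (hS.cst_mem v) _ hb]
      have hbL : b ∈ M.toSubmodule ⊓ H K n 2 := ⟨hb, hbl⟩
      rw [← h2] at hbL
      exact hzL 1 _ 1 (L.lie_mem (h.cst_mem v) hbL.1) (lie_mem_H (PolyVect.cst_mem v) hbl (by omega))
    · exact killing_ext he hinv hnd hkM hkH fun l hl b hb hbl =>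
        hq l b (by omega) hl hb hbl
  rw [← hzf m hm, hz0] at hfm
  simp at hfm

/-- The trace of the linear part of a vector field at the origin. -/
noncomputable def tau : Vect K n →ₗ[K] K where
  toFun D := ∑ i, coeff (Finsupp.single i 1) (D (X i))
  map_add' D D' := by simp [Finset.sum_add_distrib]
  map_smul' a D := by simp [Finset.mul_sum]

theorem tau_apply (D : Vect K n) : tau D = ∑ i, coeff (Finsupp.single i 1) (D (X i)) := rfl

theorem tau_of_ne {D : Vect K n} {k : ℕ} (hD : D ∈ H K n k) (hk : k ≠ 1) : tau D = 0 := by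
  rw [tau_apply]
  refine Finset.sum_eq_zero fun i _ => (hD i).coeff_eq_zero ?_
  rw [Finsupp.degree_single]; exact fun h => hk h.symm

theorem tau_lin (A : Module.End K (Fin n → K)) : tau (lin A) = LinearMap.trace K _ A := by
  rw [tau_apply, LinearMap.trace_eq_matrix_trace K (Pi.basisFun K (Fin n)) A, Matrix.trace]
  refine Finset.sum_congr rfl fun i _ => ?_
  rw [lin_X, lf_apply, coeff_sum]
  simp [LinearMap.toMatrix_apply, coeff_C_mul, coeff_X', Finsupp.single_left_inj]

theorem tau_lie_lin_lin (A B : Module.End K (Fin n → K)) : tau ⁅lin A, lin B⁆ = 0 := by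
  rw [lie_lin_lin, tau_lin]
  rw [LieRing.of_associative_ring_bracket, map_sub, LinearMap.trace_mul_comm, sub_self]

theorem lie_eq_zero_of_H_zero {a b : Vect K n} (ha : a ∈ H K n 0) (hb : b ∈ H K n 0) :
    ⁅a, b⁆ = 0 := by
  obtain ⟨v, rfl⟩ := mem_H_zero.1 ha
  obtain ⟨w, rfl⟩ := mem_H_zero.1 hb
  exact lie_cst_cst v w

/-- Every nonzero constant field pairs nontrivially with some quadratic field of `L` under
`tau ⁅·, ·⁆`: otherwise, by irreducibility, `tau` vanishes on `⁅L, L⁆ = L`, which contains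
`euler`. -/
theorem Std.exists_tau_ne_zero [CharZero K] {L : LieSubalgebra K (Vect K n)}
    [FiniteDimensional K L] (h : Std L) (hgr : ∀ D ∈ L, ∀ k, cmpt k D ∈ L) (hn : 0 < n)
    {w : Fin n → K} (hw : w ≠ 0) : ∃ x ∈ L, x ∈ H K n 2 ∧ tau ⁅cst w, x⁆ ≠ 0 := by
  by_contra hcon
  push Not at hcon
  let F : Submodule K (Fin n → K) :=
    { carrier := {v | ∀ x ∈ L, x ∈ H K n 2 → tau ⁅cst v, x⁆ = 0}
      add_mem' := fun {a b} ha hb x hx hx2 => by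
        rw [map_add, add_lieV, map_add, ha x hx hx2, hb x hx hx2, add_zero]
      zero_mem' := fun x _ _ => by rw [map_zero, zero_lieV, map_zero]
      smul_mem' := fun c v hv x hx hx2 => by
        rw [map_smul, smul_lieV, map_smul, hv x hx hx2, smul_zero] }
  have hF : ∀ v, v ∈ F ↔ ∀ x ∈ L, x ∈ H K n 2 → tau ⁅cst v, x⁆ = 0 := fun v => Iff.rfl
  have hinv : ∀ A, lin A ∈ L → ∀ u ∈ F, A u ∈ F := by
    intro A hA u hu
    rw [hF] at hu ⊢
    intro x hx hx2
    rw [← lie_cst_lin, lie_lieV, map_sub,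
      hu _ (L.lie_mem hA hx) (lie_mem_H (lin_mem A) hx2 (by omega)), zero_sub, neg_eq_zero]
    obtain ⟨B, hB⟩ := mem_H_one.1 (lie_mem_H (PolyVect.cst_mem u) hx2 (c := 1) (by omega))
    rw [hB, tau_lie_lin_lin]
  have htop : F = ⊤ := (h.irr F hinv).resolve_left fun hbot =>
    hw ((Submodule.eq_bot_iff _).1 hbot w hcon)
  have hall : ∀ v, ∀ x ∈ L, x ∈ H K n 2 → tau ⁅cst v, x⁆ = 0 := fun v =>
    (hF v).1 (htop ▸ Submodule.mem_top)
  have he := h.euler_mem hgr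
  have := h.isKilling he
  have hle := le_of_lie_mem L (LinearMap.ker tau) (by
    intro a ha b hb
    rw [LinearMap.mem_ker]
    obtain ⟨N, hN, _⟩ := exists_sum_cmpt a
    obtain ⟨N', hN', _⟩ := exists_sum_cmpt b
    have hhom : ∀ k l, tau ⁅cmpt k a, cmpt l b⁆ = 0 := by
      intro k l
      have hka := cmpt_mem k a
      have hlb := cmpt_mem l b
      by_cases hkl : k + l = 2
      · rcases (by omega : (k = 0 ∧ l = 2) ∨ (k = 1 ∧ l = 1) ∨ (k = 2 ∧ l = 0)) with
          ⟨rfl, rfl⟩ | ⟨rfl, rfl⟩ | ⟨rfl, rfl⟩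
        · obtain ⟨v, hv⟩ := mem_H_zero.1 hka
          rw [hv]; exact hall v _ (hgr b hb 2) hlb
        · obtain ⟨A, hA⟩ := mem_H_one.1 hka
          obtain ⟨B, hB⟩ := mem_H_one.1 hlb
          rw [hA, hB, tau_lie_lin_lin]
        · obtain ⟨v, hv⟩ := mem_H_zero.1 hlb
          rw [hv, ← lie_skew, map_neg, hall v _ (hgr a ha 2) hka, neg_zero]
      · by_cases h0 : k + l = 0
        · obtain ⟨rfl, rfl⟩ : k = 0 ∧ l = 0 := by omega
          rw [lie_eq_zero_of_H_zero hka hlb, map_zero]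
        · exact tau_of_ne (lie_mem_H hka hlb (c := k + l - 1) (by omega)) (by omega)
    have h1 : ∀ l, tau ⁅a, cmpt l b⁆ = 0 := by
      intro l
      have : ⁅a, cmpt l b⁆ = -LieAlgebra.ad K _ (cmpt l b) a := (lie_skew _ _).symm
      rw [this, hN, map_neg, map_sum, map_sum, neg_eq_zero]
      refine Finset.sum_eq_zero fun k _ => ?_
      rw [LieAlgebra.ad_apply, ← lie_skew, map_neg, hhom, neg_zero]
    have : ⁅a, b⁆ = LieAlgebra.ad K _ a b := rfl
    rw [this, hN', map_sum, map_sum]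
    exact Finset.sum_eq_zero fun l _ => h1 l)
  have := hle he
  rw [LinearMap.mem_ker, ← lin_one, tau_lin] at this
  simp at this
  omega

end KillingGraded

/-! ### Powers of a linear form in infinite-dimensional overalgebras -/

section Null

variable {K : Type*} [Field K] {n : ℕ}

/-- `α! = ∏ i, (α i)!`. -/
def mfact (α : Fin n →₀ ℕ) : ℕ := ∏ i, (α i).factorial

theorem mfact_ne_zero [CharZero K] (α : Fin n →₀ ℕ) : (mfact α : K) ≠ 0 := by
  rw [Nat.cast_ne_zero, mfact, Finset.prod_ne_zero_iff]
  exact fun i _ => Nat.factorial_ne_zero _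

theorem mfact_add_single (α : Fin n →₀ ℕ) (j : Fin n) :
    mfact (α + Finsupp.single j 1) = (α j + 1) * mfact α := by
  rw [mfact, mfact, ← Finset.mul_prod_erase _ _ (Finset.mem_univ j),
    ← Finset.mul_prod_erase _ _ (Finset.mem_univ j)]
  have : ∀ i ∈ Finset.univ.erase j, ((α + Finsupp.single j 1 : Fin n →₀ ℕ) i).factorial = (α i).factorial := by
    intro i hi
    rw [Finsupp.add_apply, Finsupp.single_eq_of_ne (Finset.ne_of_mem_erase hi), add_zero]
  rw [Finset.prod_congr rfl this]
  simp [Nat.factorial_succ, mul_assoc]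

/-- The pairing `⟨f, g⟩ = ∑ α! f_α g_α`, that is, the value at `0` of `f(∂) g`. -/
noncomputable def pair : MvPolynomial (Fin n) K →ₗ[K] MvPolynomial (Fin n) K →ₗ[K] K :=
  (basisMonomials (Fin n) K).constr K fun α => (mfact α : K) • lcoeff K α

theorem pair_monomial (α : Fin n →₀ ℕ) (c : K) (g : MvPolynomial (Fin n) K) :
    pair (monomial α c) g = c * (mfact α * coeff α g) := by
  have h1 : (monomial α c : MvPolynomial (Fin n) K) = c • basisMonomials (Fin n) K α := by
    simp [smul_monomial]
  rw [h1, map_smul, pair, Module.Basis.constr_basis]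
  simp

/-- Multiplication by `X j` is adjoint to `∂ j`. -/
theorem pair_X_mul (j : Fin n) (f g : MvPolynomial (Fin n) K) :
    pair (X j * f) g = pair f (pderiv j g) := by
  induction f using MvPolynomial.induction_on' with
  | monomial α c =>
    have h1 : (X j * monomial α c : MvPolynomial (Fin n) K)
        = monomial (α + Finsupp.single j 1) c := by
      rw [monomial_add_single, pow_one, mul_comm]
    rw [h1]
    rw [pair_monomial, pair_monomial, coeff_pderiv, mfact_add_single]
    push_cast; ring
  | add p q hp hq => rw [mul_add, map_add, map_add, LinearMap.add_apply, LinearMap.add_apply, hp, hq]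

/-- Pairing with the `k`-th power of a linear form is evaluation, up to `k!`. -/
theorem pair_lf_pow (ξ : Module.Dual K (Fin n → K)) (k : ℕ) :
    ∀ (α : Fin n →₀ ℕ), α.degree = k → ∀ c, pair (monomial α c) (lf ξ ^ k) =
      k.factorial * eval (fun i => ξ (Pi.single i 1)) (monomial α c) := by
  induction k with
  | zero =>
    intro α hα c
    rw [Finsupp.degree_eq_zero_iff] at hα
    subst hα
    rw [pair_monomial]
    simp [mfact, eval_monomial]
  | succ k ih =>
    intro α hα c
    have hα0 : α ≠ 0 := by rintro rfl; simp at hα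
    obtain ⟨j, hj⟩ := Finsupp.ne_iff.1 hα0
    obtain ⟨β, rfl⟩ : ∃ β, α = β + Finsupp.single j 1 := by
      refine ⟨α - Finsupp.single j 1, (tsub_add_cancel_of_le ?_).symm⟩
      rw [Finsupp.single_le_iff]
      simp at hj; omega
    have hβ : β.degree = k := by
      rw [map_add, Finsupp.degree_single] at hα; omega
    have h1 : (monomial (β + Finsupp.single j 1) c : MvPolynomial (Fin n) K)
        = X j * monomial β c := by
      rw [monomial_add_single, pow_one, mul_comm]
    rw [h1, pair_X_mul, ← cst_single, Derivation.leibniz_pow, cst_lf]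
    have h2 : ((k + 1) • lf ξ ^ (k + 1 - 1) • C (ξ (Pi.single j 1)) : MvPolynomial (Fin n) K)
        = (((k : K) + 1) * ξ (Pi.single j 1)) • lf ξ ^ k := by
      rw [Nat.add_sub_cancel, smul_eq_mul, nsmul_eq_mul, smul_eq_C_mul]
      simp; ring
    rw [h2, map_smul, ih β hβ, eval_mul, eval_X, Nat.factorial_succ, smul_eq_mul]
    push_cast; ring

/-- The annihilator of a space `M` of vector fields under `pair`, applied coordinatewise. -/
noncomputable def ann (M : Submodule K (Vect K n))
    (hM : ∀ v : Fin n → K, ∀ D ∈ M, ⁅cst v, D⁆ ∈ M) :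
    Submodule (MvPolynomial (Fin n) K) (Fin n → MvPolynomial (Fin n) K) where
  carrier := {q | ∀ D ∈ M, ∑ i, pair (q i) (D (X i)) = 0}
  add_mem' := fun {a b} ha hb D hD => by
    simp only [Pi.add_apply, map_add, LinearMap.add_apply, Finset.sum_add_distrib, ha D hD,
      hb D hD, add_zero]
  zero_mem' := fun D hD => by simp
  smul_mem' := by
    intro p
    induction p using MvPolynomial.induction_on with
    | C a =>
      intro q hq D hD
      have := hq D hD
      simp only [Pi.smul_apply, smul_eq_mul, ← smul_eq_C_mul, map_smul, LinearMap.smul_apply,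
        ← Finset.mul_sum]
      rw [this, mul_zero]
    | add f g hf hg =>
      intro q hq D hD
      have h1 := hf hq D hD
      have h2 := hg hq D hD
      simp only [Pi.smul_apply, smul_eq_mul] at h1 h2
      simp only [Pi.smul_apply, smul_eq_mul, add_mul, map_add, LinearMap.add_apply,
        Finset.sum_add_distrib]
      rw [h1, h2, add_zero]
    | mul_X f j hf =>
      intro q hq D hD
      have h1 := hf hq _ (hM (Pi.single j 1) D hD)
      simp only [Pi.smul_apply, smul_eq_mul, lie_cst_apply_X] at h1
      simp only [cst_single, ← pair_X_mul] at h1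
      simp only [Pi.smul_apply, smul_eq_mul]
      rw [← h1]
      refine Finset.sum_congr rfl fun i _ => ?_
      congr 2; ring

theorem mem_ann {M : Submodule K (Vect K n)} {hM : ∀ v : Fin n → K, ∀ D ∈ M, ⁅cst v, D⁆ ∈ M}
    {q : Fin n → MvPolynomial (Fin n) K} :
    q ∈ ann M hM ↔ ∀ D ∈ M, ∑ i, pair (q i) (D (X i)) = 0 := Iff.rfl

theorem mem_antidiag {k : ℕ} {α : Fin n →₀ ℕ} :
    α ∈ Finset.finsuppAntidiag Finset.univ k ↔ α.degree = k := by
  rw [Finset.mem_finsuppAntidiag, Finsupp.degree_eq_sum]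
  simp

theorem eq_sum_antidiag {f : MvPolynomial (Fin n) K} {k : ℕ} (hf : f.IsHomogeneous k) :
    f = ∑ α ∈ Finset.finsuppAntidiag Finset.univ k, monomial α (coeff α f) := by
  conv_lhs => rw [f.as_sum]
  refine Finset.sum_subset (fun α hα => ?_) (fun α _ hα => ?_)
  · rw [mem_antidiag]
    by_contra h
    exact (mem_support_iff.1 hα) (hf.coeff_eq_zero h)
  · rw [notMem_support_iff.1 hα, monomial_zero]

/-- If the values of `ann M` at the point `ξ` are all orthogonal to `w`, then `M` contains all
`ξ ^ k ∂_w`, because pairing with `ξ ^ k` is evaluation at `ξ`. -/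
theorem pow_smul_cst_mem [CharZero K] {M : Submodule K (Vect K n)}
    (hM : ∀ v : Fin n → K, ∀ D ∈ M, ⁅cst v, D⁆ ∈ M) (hgr : ∀ D ∈ M, ∀ k, cmpt k D ∈ M)
    (ξ : Module.Dual K (Fin n → K)) (w : Fin n → K)
    (h : ∀ q ∈ ann M hM, ∑ i, w i * eval (fun i => ξ (Pi.single i 1)) (q i) = 0) (k : ℕ) :
    lf ξ ^ k • cst w ∈ M := by
  by_contra hcon
  obtain ⟨φ, hφ, hφM⟩ := Submodule.exists_le_ker_of_notMem hcon
  let q : Fin n → MvPolynomial (Fin n) K := fun i =>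
    ∑ α ∈ Finset.finsuppAntidiag Finset.univ k,
      monomial α ((mfact α : K)⁻¹ * φ (monomial α (1 : K) • cst (Pi.single i (1 : K))))
  -- the pairing with `q` recovers `φ` on fields of degree `k`
  have hq : ∀ D ∈ H K n k, ∑ i, pair (q i) (D (X i)) = φ D := by
    intro D hD
    conv_rhs => rw [deriv_eq_sum D]
    rw [map_sum]
    refine Finset.sum_congr rfl fun i _ => ?_
    conv_rhs => rw [eq_sum_antidiag (hD i), Finset.sum_smul, map_sum]
    simp only [q]
    rw [map_sum, LinearMap.sum_apply]
    refine Finset.sum_congr rfl fun α _ => ?_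
    rw [pair_monomial]
    have h1 : (monomial α (coeff α (D (X i))) : MvPolynomial (Fin n) K) •
        cst (Pi.single i (1 : K)) = coeff α (D (X i)) •
          ((monomial α (1 : K) : MvPolynomial (Fin n) K) • cst (Pi.single i (1 : K))) := by
      rw [← smul_assoc, smul_monomial, smul_eq_mul, mul_one]
    rw [h1, LinearMap.map_smul φ (coeff α (D (X i))), smul_eq_mul]
    field_simp [mfact_ne_zero (K := K) α]
  have hqcm : ∀ D, ∑ i, pair (q i) (D (X i)) = ∑ i, pair (q i) (cmpt k D (X i)) := by
    intro D
    refine Finset.sum_congr rfl fun i _ => ?_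
    simp only [q]
    rw [map_sum, LinearMap.sum_apply, LinearMap.sum_apply]
    refine Finset.sum_congr rfl fun α hα => ?_
    rw [pair_monomial, pair_monomial, cmpt_X, coeff_homogeneousComponent, if_pos]
    exact mem_antidiag.1 hα
  have hqann : q ∈ ann M hM := by
    intro D hD
    rw [hqcm, hq _ (cmpt_mem k D)]
    exact hφM (hgr D hD k)
  have h0 := h q hqann
  have hmem : lf ξ ^ k • cst w ∈ H K n k := by
    have := smul_mem_H ((lf_isHomogeneous ξ).pow k) (cst_mem w)
    simpa using this
  apply hφ
  rw [← hq _ hmem]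
  have h3 : ∀ i, pair (q i) ((lf ξ ^ k • cst w) (X i)) =
      k.factorial * (w i * eval (fun i => ξ (Pi.single i 1)) (q i)) := by
    intro i
    rw [Derivation.smul_apply, cst_X, smul_eq_mul, mul_comm, ← smul_eq_C_mul, map_smul]
    have : pair (q i) (lf ξ ^ k) = k.factorial * eval (fun i => ξ (Pi.single i 1)) (q i) := by
      simp only [q]
      rw [map_sum, LinearMap.sum_apply, map_sum, Finset.mul_sum]
      refine Finset.sum_congr rfl fun α hα => ?_
      rw [pair_lf_pow ξ k α (mem_antidiag.1 hα)]
    rw [this, smul_eq_mul]; ring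
  rw [Finset.sum_congr rfl fun i _ => h3 i, ← Finset.mul_sum, h0, mul_zero]

/-- The ideal of those `d` with `d • Pⁿ ⊆ Q`. -/
def conductor (Q : Submodule (MvPolynomial (Fin n) K) (Fin n → MvPolynomial (Fin n) K)) :
    Ideal (MvPolynomial (Fin n) K) where
  carrier := {d | ∀ p : Fin n → MvPolynomial (Fin n) K, d • p ∈ Q}
  add_mem' ha hb p := by rw [add_smul]; exact Q.add_mem (ha p) (hb p)
  zero_mem' p := by rw [zero_smul]; exact Q.zero_mem
  smul_mem' c d hd p := by rw [smul_eq_mul, mul_smul]; exact Q.smul_mem c (hd p)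

theorem exists_mem_conductor
    (Q : Submodule (MvPolynomial (Fin n) K) (Fin n → MvPolynomial (Fin n) K)) (x : Fin n → K)
    (h : ∀ c : Fin n → K, ∃ q ∈ Q, ∀ i, eval x (q i) = c i) :
    ∃ d ∈ conductor Q, eval x d ≠ 0 := by
  choose q hq hqx using fun i : Fin n => h (Pi.single i 1)
  let T : Matrix (Fin n) (Fin n) (MvPolynomial (Fin n) K) := Matrix.of q
  refine ⟨T.det, fun p => ?_, ?_⟩
  · have h1 : T.det • p = Matrix.vecMul (Matrix.vecMul p T.adjugate) T := by
      rw [Matrix.vecMul_vecMul, Matrix.adjugate_mul, Matrix.vecMul_smul, Matrix.vecMul_one]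
    have h2 : Matrix.vecMul (Matrix.vecMul p T.adjugate) T
        = ∑ i, (Matrix.vecMul p T.adjugate) i • q i := by
      ext1 j
      simp [Matrix.vecMul, dotProduct, T]
    rw [h1, h2]
    exact Q.sum_mem fun i _ => Q.smul_mem _ (hq i)
  · have : (eval x) T.det = 1 := by
      rw [RingHom.map_det]
      have : (eval x).mapMatrix T = 1 := by
        ext i j
        simp [T, hqx, Matrix.one_apply, Pi.single_apply, eq_comm]
      rw [this, Matrix.det_one]
    rw [this]; exact one_ne_zero

/-- An infinite-dimensional graded space of vector fields stable under constant fields contains all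
`ξ ^ k ∂_w` for some `ξ, w ≠ 0`: otherwise, by the Nullstellensatz, its annihilator would contain
all monomials of large degree. -/
theorem exists_pow_smul_cst [CharZero K] [IsAlgClosed K] {M : Submodule K (Vect K n)}
    (hM : ∀ v : Fin n → K, ∀ D ∈ M, ⁅cst v, D⁆ ∈ M) (hgr : ∀ D ∈ M, ∀ k, cmpt k D ∈ M)
    (hinf : ∀ k, ∃ D ∈ M, D ∈ H K n k ∧ D ≠ 0) :
    ∃ (ξ : Module.Dual K (Fin n → K)) (w : Fin n → K), ξ ≠ 0 ∧ w ≠ 0 ∧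
      ∀ k, lf ξ ^ k • cst w ∈ M := by
  by_cases hex : ∃ x : Fin n → K, x ≠ 0 ∧
      ∃ c : Fin n → K, ∀ q ∈ ann M hM, ¬ ∀ i, eval x (q i) = c i
  · obtain ⟨x, hx, c, hc⟩ := hex
    let W : Submodule K (Fin n → K) :=
      { carrier := {u | ∃ q ∈ ann M hM, ∀ i, eval x (q i) = u i}
        add_mem' := by
          rintro a b ⟨q, hq, hqa⟩ ⟨r, hr, hrb⟩
          exact ⟨q + r, add_mem hq hr, fun i => by simp [hqa, hrb]⟩
        zero_mem' := ⟨0, zero_mem _, fun i => by simp⟩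
        smul_mem' := by
          rintro s a ⟨q, hq, hqa⟩
          exact ⟨C s • q, Submodule.smul_mem _ _ hq, fun i => by simp [hqa]⟩ }
    have hcW : c ∉ W := fun ⟨q, hq, h⟩ => hc q hq h
    obtain ⟨f, hfc, hf⟩ := Submodule.exists_le_ker_of_notMem hcW
    let ξ : Module.Dual K (Fin n → K) := ∑ i, x i • LinearMap.proj i
    have hξ : ∀ i, ξ (Pi.single i 1) = x i := fun i => by
      simp [ξ, Pi.single_apply]
    refine ⟨ξ, fun i => f (Pi.single i 1), ?_, ?_, ?_⟩
    · rintro h0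
      apply hx
      ext i
      rw [← hξ i, h0]; rfl
    · intro h0
      apply hfc
      rw [dual_apply_eq_sum f c]
      exact Finset.sum_eq_zero fun i _ => by rw [congrFun h0 i]; simp
    · refine pow_smul_cst_mem hM hgr ξ _ fun q hq => ?_
      have := hf (x := fun i => eval x (q i)) ⟨q, hq, fun i => rfl⟩
      rw [LinearMap.mem_ker, dual_apply_eq_sum] at this
      simp only [hξ]
      rw [← this]
      exact Finset.sum_congr rfl fun i _ => mul_comm _ _
  · exfalso
    push Not at hex
    set I := conductor (ann M hM) with hI
    have hz : ∀ x ∈ zeroLocus K I, x = 0 := by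
      intro x hx
      by_contra hx0
      obtain ⟨d, hd, hdx⟩ := exists_mem_conductor _ x (hex x hx0)
      exact hdx (by simpa [aeval_eq_eval] using mem_zeroLocus_iff.1 hx d hd)
    have hX : ∀ j : Fin n, (X j : MvPolynomial (Fin n) K) ∈ I.radical := by
      intro j
      rw [← vanishingIdeal_zeroLocus_eq_radical (K := K), mem_vanishingIdeal_iff]
      intro x hx
      rw [hz x hx]; simp
    choose m hm using hX
    set N := ∑ j, m j with hN
    obtain ⟨D, hD, hDk, hD0⟩ := hinf (n * N + 1)
    apply hD0
    apply derivation_ext; intro i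
    change D (X i) = 0
    ext α
    rw [coeff_zero]
    by_cases hα : α.degree = n * N + 1
    swap
    · exact (hDk i).coeff_eq_zero hα
    obtain ⟨j, hj⟩ : ∃ j, N < α j := by
      by_contra hcon
      push Not at hcon
      rw [Finsupp.degree_eq_sum] at hα
      have : ∑ i, α i ≤ ∑ _i : Fin n, N := Finset.sum_le_sum fun i _ => hcon i
      simp at this
      omega
    have hmj : m j ≤ α j :=
      (Finset.single_le_sum (fun _ _ => Nat.zero_le _) (Finset.mem_univ j)).trans hj.le
    have hfac : (monomial α (1 : K) : MvPolynomial (Fin n) K) =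
        X j ^ m j * monomial (α - Finsupp.single j (m j)) 1 := by
      rw [X_pow_eq_monomial, monomial_mul, one_mul, add_tsub_cancel_of_le]
      rwa [Finsupp.single_le_iff]
    have hmem := hm j (Pi.single i (monomial (α - Finsupp.single j (m j)) 1)) D hD
    have h2 : ∀ i' : Fin n, pair ((((X j : MvPolynomial (Fin n) K) ^ m j) •
        (Pi.single i (monomial (α - Finsupp.single j (m j)) (1 : K)) :
          Fin n → MvPolynomial (Fin n) K)) i') (D (X i')) =
        if i' = i then mfact α * coeff α (D (X i)) else 0 := by
      intro i'
      split_ifs with h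
      · subst h
        rw [Pi.smul_apply, Pi.single_eq_same, smul_eq_mul, ← hfac, pair_monomial, one_mul]
      · rw [Pi.smul_apply, Pi.single_eq_of_ne h, smul_zero, map_zero, LinearMap.zero_apply]
    rw [Finset.sum_congr rfl fun i' _ => h2 i', Finset.sum_ite_eq' Finset.univ i,
      if_pos (Finset.mem_univ _)] at hmem
    exact (mul_eq_zero.1 hmem).resolve_left (mfact_ne_zero α)

/-- An infinite-dimensional graded subspace stable under constant fields has nonzero elements of
every degree. -/
theorem exists_mem_H_of_infinite [CharZero K] {M : Submodule K (Vect K n)}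
    (hM : ∀ v : Fin n → K, ∀ D ∈ M, ⁅cst v, D⁆ ∈ M) (hgr : ∀ D ∈ M, ∀ k, cmpt k D ∈ M)
    (hinf : ¬ FiniteDimensional K M) (k : ℕ) : ∃ D ∈ M, D ∈ H K n k ∧ D ≠ 0 := by
  by_contra hcon
  push Not at hcon
  apply hinf
  have hvan : ∀ l, k ≤ l → ∀ D ∈ M, D ∈ H K n l → D = 0 := by
    intro l hl
    induction l, hl using Nat.le_induction with
    | base => exact hcon
    | succ l _ ih =>
      intro D hD hDl
      exact eq_zero_of_lie_cst hDl fun v =>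
        ih _ (hM v D hD) (lie_mem_H (cst_mem v) hDl (by omega))
  have hle : M ≤ degLT K n k := by
    intro D hD
    rw [mem_degLT]
    intro l hl
    exact hvan l hl _ (hgr D hD l) (cmpt_mem l D)
  have := finiteDimensional_degLT (K := K) (n := n) k
  exact Submodule.finiteDimensional_of_le hle

end Null

/-! ### Generating all vector fields -/

section Fill

variable {K : Type*} [Field K] {n : ℕ}

theorem cst_lf_pow (v : Fin n → K) (ξ : Module.Dual K (Fin n → K)) (k : ℕ) :
    cst v (lf ξ ^ k) = C ((k : K) * ξ v) * lf ξ ^ (k - 1) := by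
  rw [Derivation.leibniz_pow, cst_lf]
  simp only [nsmul_eq_mul, smul_eq_mul, map_mul, map_natCast]; ring

/-- A space of polynomials containing the powers of a linear form `ξ ≠ 0` and stable under the
operators `η ∂_v` is everything. -/
theorem eq_top_of_pow_mem [CharZero K] {F : Submodule K (MvPolynomial (Fin n) K)}
    {ξ : Module.Dual K (Fin n → K)} (hξ : ξ ≠ 0) (hpow : ∀ k, lf ξ ^ k ∈ F)
    (hst : ∀ f ∈ F, ∀ (η : Module.Dual K (Fin n → K)) (v : Fin n → K), lf η * cst v f ∈ F) :
    F = ⊤ := by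
  obtain ⟨v, hv⟩ : ∃ v, ξ v = 1 := by
    obtain ⟨u, hu⟩ : ∃ u, ξ u ≠ 0 := by
      by_contra hcon; push Not at hcon
      exact hξ (LinearMap.ext hcon)
    exact ⟨(ξ u)⁻¹ • u, by simp [hu]⟩
  let S : Set (MvPolynomial (Fin n) K) := {p | cst v p = 0 ∧ ∀ a : ℕ, lf ξ ^ a * p ∈ F}
  have hS : ∀ η : Module.Dual K (Fin n → K), η v = 0 → ∀ p ∈ S, lf η * p ∈ S := by
    rintro η hη p ⟨hp0, hp⟩
    refine ⟨by rw [Derivation.leibniz, hp0, cst_lf, hη]; simp, fun a => ?_⟩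
    have h1 := hst _ (hp (a + 1)) η v
    have h2 : lf η * cst v (lf ξ ^ (a + 1) * p) = ((a : K) + 1) • (lf ξ ^ a * (lf η * p)) := by
      rw [Derivation.leibniz, hp0, cst_lf_pow, hv, Nat.add_sub_cancel, smul_eq_C_mul]
      simp; ring
    rw [h2] at h1
    exact (F.smul_mem_iff (Nat.cast_add_one_ne_zero a)).1 h1
  let T : Submodule K (MvPolynomial (Fin n) K) :=
    Submodule.span K {f | ∃ a : ℕ, ∃ p ∈ S, f = lf ξ ^ a * p}
  have hTX : ∀ f ∈ T, ∀ j, f * X j ∈ T := by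
    intro f hf j
    induction hf using Submodule.span_induction with
    | mem f hf =>
      obtain ⟨a, p, hp, rfl⟩ := hf
      let η : Module.Dual K (Fin n → K) := LinearMap.proj j - v j • ξ
      have hη : η v = 0 := by simp [η, hv]
      have hX : (X j : MvPolynomial (Fin n) K) = lf η + C (v j) * lf ξ := by
        rw [← lf_proj j, ← smul_eq_C_mul, ← map_smul, ← map_add]; simp [η]
      have h2 : lf ξ ^ a * p * X j = lf ξ ^ a * (lf η * p) + v j • (lf ξ ^ (a + 1) * p) := by
        rw [hX, smul_eq_C_mul]; ring
      rw [h2]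
      exact T.add_mem (Submodule.subset_span ⟨a, _, hS η hη p hp, rfl⟩)
        (T.smul_mem _ (Submodule.subset_span ⟨a + 1, p, hp, rfl⟩))
    | zero => rw [zero_mul]; exact zero_mem _
    | add f g _ _ hf hg => rw [add_mul]; exact add_mem hf hg
    | smul c f _ hf => rw [smul_mul_assoc]; exact T.smul_mem _ hf
  have h1S : (1 : MvPolynomial (Fin n) K) ∈ S := ⟨by simp, fun a => by simpa using hpow a⟩
  have hT : ∀ f, f ∈ T := by
    intro f
    induction f using MvPolynomial.induction_on with
    | C a =>
      rw [← mul_one (C a), ← smul_eq_C_mul]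
      exact T.smul_mem _ (Submodule.subset_span ⟨0, 1, h1S, by simp⟩)
    | add f g hf hg => exact T.add_mem hf hg
    | mul_X f j hf => exact hTX f hf j
  rw [eq_top_iff]
  intro f _
  refine (Submodule.span_le.2 ?_ : T ≤ F) (hT f)
  rintro _ ⟨a, p, hp, rfl⟩
  exact hp.2 a

/-- The divergence of a vector field. -/
noncomputable def dv : Vect K n →ₗ[K] MvPolynomial (Fin n) K where
  toFun D := ∑ i, cst (Pi.single i (1 : K)) (D (X i))
  map_add' D D' := by simp [Finset.sum_add_distrib]
  map_smul' a D := by simp [Finset.smul_sum]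

theorem dv_apply (D : Vect K n) : dv D = ∑ i, cst (Pi.single i (1 : K)) (D (X i)) := rfl

theorem dv_smul_cst (f : MvPolynomial (Fin n) K) (w : Fin n → K) : dv (f • cst w) = cst w f := by
  rw [dv_apply, deriv_apply_eq_sum (cst w) f]
  refine Finset.sum_congr rfl fun i _ => ?_
  rw [Derivation.smul_apply, cst_X, smul_eq_mul, Derivation.leibniz]
  simp

theorem dv_lie (D D' : Vect K n) : dv ⁅D, D'⁆ = D (dv D') - D' (dv D) := by
  have key : ∀ D D' : Vect K n, ∑ i, cst (Pi.single i (1 : K)) (D (D' (X i))) =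
      D (dv D') + ∑ i, ∑ j, cst (Pi.single i (1 : K)) (D (X j)) *
        cst (Pi.single j (1 : K)) (D' (X i)) := by
    intro D D'
    rw [dv_apply, map_sum, ← Finset.sum_add_distrib]
    refine Finset.sum_congr rfl fun i _ => ?_
    have h1 : cst (Pi.single i (1 : K)) (D (D' (X i))) =
        D (cst (Pi.single i (1 : K)) (D' (X i))) + ⁅cst (Pi.single i (1 : K)), D⁆ (D' (X i)) := by
      rw [Derivation.commutator_apply]; ring
    rw [h1, deriv_apply_eq_sum ⁅cst (Pi.single i (1 : K)), D⁆]
    simp only [lie_cst_apply_X]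
  have h1 : dv ⁅D, D'⁆ = ∑ i, cst (Pi.single i (1 : K)) (D (D' (X i))) -
      ∑ i, cst (Pi.single i (1 : K)) (D' (D (X i))) := by
    rw [dv_apply, ← Finset.sum_sub_distrib]
    refine Finset.sum_congr rfl fun i _ => ?_
    rw [lie_X, map_sub]
  rw [h1, key, key]
  have h2 : ∑ i, ∑ j, cst (Pi.single i (1 : K)) (D (X j)) * cst (Pi.single j (1 : K)) (D' (X i)) =
      ∑ i, ∑ j, cst (Pi.single i (1 : K)) (D' (X j)) * cst (Pi.single j (1 : K)) (D (X i)) := by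
    rw [Finset.sum_comm]
    exact Finset.sum_congr rfl fun i _ => Finset.sum_congr rfl fun j _ => mul_comm _ _
  rw [h2]; ring

theorem dv_of_mem_H_one {D : Vect K n} (hD : D ∈ H K n 1) : dv D = C (tau D) := by
  rw [dv_apply, tau_apply, map_sum]
  refine Finset.sum_congr rfl fun i _ => ?_
  have h0 := cst_isHomogeneous (hD i) (Pi.single i (1 : K))
  rw [Nat.sub_self, ← totalDegree_zero_iff_isHomogeneous, totalDegree_eq_zero_iff_eq_C] at h0
  rw [h0, cst_single, coeff_pderiv]
  simp

theorem dv_lie_lin (A : Module.End K (Fin n → K)) (D : Vect K n) :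
    dv ⁅lin A, D⁆ = lin A (dv D) := by
  rw [dv_lie, dv_of_mem_H_one (lin_mem A), derivation_C, sub_zero]

theorem lin_smulRight_apply (η : Module.Dual K (Fin n → K)) (v : Fin n → K)
    (f : MvPolynomial (Fin n) K) : lin (η.smulRight v) f = lf η * cst v f := by
  rw [lin_smulRight, Derivation.smul_apply, smul_eq_mul]

/-- The divergence-free field `∂_v f ∂_u - ∂_u f ∂_v`. -/
noncomputable def ham (u v : Fin n → K) : MvPolynomial (Fin n) K →ₗ[K] Vect K n where
  toFun f := cst v f • cst u - cst u f • cst v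
  map_add' f g := by
    rw [map_add, map_add, padd_smul, padd_smul]; abel
  map_smul' a f := by
    rw [Derivation.map_smul, Derivation.map_smul]
    ext1 g
    simp only [Derivation.smul_apply, Derivation.sub_apply, smul_eq_mul, smul_eq_C_mul,
      RingHom.id_apply]
    ring

theorem ham_apply (u v : Fin n → K) (f : MvPolynomial (Fin n) K) :
    ham u v f = cst v f • cst u - cst u f • cst v := rfl

theorem cst_lin_apply (A : Module.End K (Fin n → K)) (v : Fin n → K) (f : MvPolynomial (Fin n) K) :
    cst v (lin A f) = lin A (cst v f) + cst (A v) f := by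
  rw [← lie_cst_lin, Derivation.commutator_apply]; ring

theorem ham_lin (A : Module.End K (Fin n → K)) (u v : Fin n → K) (f : MvPolynomial (Fin n) K) :
    ham u v (lin A f) = ⁅lin A, ham u v f⁆ + ham u (A v) f + ham (A u) v f := by
  simp only [ham_apply]
  rw [lie_subV, lie_smul_right, lie_smul_right, lie_lin_cst, lie_lin_cst, cst_lin_apply,
    cst_lin_apply]
  ext1 f
  simp only [Derivation.smul_apply, Derivation.add_apply, Derivation.sub_apply,
    Derivation.neg_apply, smul_eq_mul]
  ring

/-- The Koszul homotopy formula. -/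
theorem sum_ham (D : Vect K n) :
    ∑ i, ∑ j, ham (Pi.single i (1 : K)) (Pi.single j (1 : K)) (X j * D (X i)) =
      (n : K) • D + ⁅euler K n, D⁆ - dv D • euler K n := by
  apply derivation_ext; intro l
  simp only [sum_apply, ham_apply, Derivation.sub_apply, Derivation.add_apply,
    Derivation.smul_apply, lie_X, euler_X, cst_X, smul_eq_mul]
  have h1 : ∀ i j : Fin n,
      cst (Pi.single j (1 : K)) (X j * D (X i)) * C ((Pi.single i (1 : K) : Fin n → K) l) -
      cst (Pi.single i (1 : K)) (X j * D (X i)) * C ((Pi.single j (1 : K) : Fin n → K) l) =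
      (if i = l then D (X l) + X j * cst (Pi.single j (1 : K)) (D (X l)) else 0) -
      (if j = l then X l * cst (Pi.single i (1 : K)) (D (X i)) +
        (if i = l then D (X l) else 0) else 0) := by
    intro i j
    rw [Derivation.leibniz, Derivation.leibniz]
    by_cases h : i = l <;> by_cases h' : j = l <;>
      simp [h, h', Pi.single_apply, eq_comm] <;> (try subst h) <;> (try subst h') <;> ring
  simp only [h1, Finset.sum_sub_distrib]
  have h2 : ∑ i, ∑ j, (if i = l then D (X l) + X j * cst (Pi.single j (1 : K)) (D (X l)) else 0)
      = (n : K) • D (X l) + euler K n (D (X l)) := by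
    rw [Finset.sum_comm]
    simp only [Finset.sum_ite_eq', Finset.mem_univ, if_true, Finset.sum_add_distrib]
    rw [deriv_apply_eq_sum (euler K n)]
    simp [smul_eq_C_mul]
  have h3 : ∑ i, ∑ j, (if j = l then X l * cst (Pi.single i (1 : K)) (D (X i)) +
        (if i = l then D (X l) else 0) else 0) = dv D * X l + D (X l) := by
    simp only [Finset.sum_ite_eq', Finset.mem_univ, if_true, Finset.sum_add_distrib]
    rw [← Finset.mul_sum, dv_apply, mul_comm]
  rw [h2, h3]; ring

theorem cmpt_euler_lie (k : ℕ) (D : Vect K n) :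
    cmpt k ⁅euler K n, D⁆ = ((k : K) - 1) • cmpt k D := by
  apply derivation_ext; intro i
  rw [cmpt_X, Derivation.smul_apply, cmpt_X, lie_X, euler_X, map_sub]
  ext m
  rw [coeff_sub, coeff_smul, coeff_homogeneousComponent, coeff_homogeneousComponent]
  split_ifs with h
  · rw [coeff_euler, h, smul_eq_mul]; ring
  · simp

/-- A subalgebra containing `gl n`, all `ξ ^ k ∂_w`, and a quadratic field `x` with
`tau ⁅∂_w, x⁆ ≠ 0` is everything. -/
theorem eq_top_of_pow_smul_cst_mem [CharZero K] {M : LieSubalgebra K (Vect K n)}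
    (hcst : ∀ v, cst v ∈ M) (hlin : ∀ A, lin A ∈ M)
    {ξ : Module.Dual K (Fin n → K)} {w : Fin n → K} (hξ : ξ ≠ 0) (hw : w ≠ 0)
    (hpow : ∀ k, lf ξ ^ k • cst w ∈ M) {x : Vect K n} (hx : x ∈ M) (hx2 : x ∈ H K n 2)
    (htau : tau ⁅cst w, x⁆ ≠ 0) : M = ⊤ := by
  have he : euler K n ∈ M := lin_one (K := K) (n := n) ▸ hlin 1
  have hker : ∀ k u, ξ u = 0 → lf ξ ^ k • cst u ∈ M := by
    intro k u hu
    by_cases h0 : ξ w = 0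
    · obtain ⟨η, hη⟩ := exists_dual_apply_eq_one hw
      have h1 := M.lie_mem (hlin (η.smulRight u)) (hpow k)
      have h2 : ⁅lin (η.smulRight u), lf ξ ^ k • cst w⁆ = -(lf ξ ^ k • cst u) := by
        rw [lie_smul_right, lin_smulRight_apply, cst_lf_pow, hu, lie_lin_cst,
          LinearMap.smulRight_apply, hη, one_smul]
        simp
      rw [h2] at h1
      exact neg_mem_iff.1 h1
    · have h1 := M.lie_mem (hpow k) (hlin (ξ.smulRight u))
      have h2 : ⁅lf ξ ^ k • cst w, lin (ξ.smulRight u)⁆ = ξ w • (lf ξ ^ k • cst u) := by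
        rw [lie_smul_left, lin_smulRight_apply, cst_lf_pow, hu, lie_cst_lin,
          LinearMap.smulRight_apply, map_smul]
        simp only [mul_zero, map_zero, zero_mul, zero_smul, sub_zero]
        exact smul_comm _ _ _
      rw [h2] at h1
      exact (M.toSubmodule.smul_mem_iff h0).1 h1
  have hham : ∀ f u v, ham u v f ∈ M := by
    let G : Submodule K (MvPolynomial (Fin n) K) :=
      ⨅ u : Fin n → K, ⨅ v : Fin n → K, M.toSubmodule.comap (ham u v)
    have hG : ∀ f, f ∈ G ↔ ∀ u v, ham u v f ∈ M := fun f => by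
      simp [G, Submodule.mem_iInf]
    have : G = ⊤ := by
      refine eq_top_of_pow_mem hξ (fun k => (hG _).2 fun u v => ?_) fun f hf η v₀ => ?_
      · have h1 : ham u v (lf ξ ^ k) = (k : K) • (lf ξ ^ (k - 1) • cst (ξ v • u - ξ u • v)) := by
          rw [ham_apply, cst_lf_pow, cst_lf_pow, map_sub, map_smul, map_smul]
          ext1 g
          simp only [Derivation.smul_apply, Derivation.sub_apply, smul_eq_mul, smul_eq_C_mul,
            map_mul]
          ring
        rw [h1]
        exact M.smul_mem _ (hker _ _ (by simp [mul_comm]))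
      · rw [hG] at hf ⊢
        intro u v
        rw [← lin_smulRight_apply, ham_lin]
        exact M.add_mem (M.add_mem (M.lie_mem (hlin _) (hf u v)) (hf _ _)) (hf _ _)
    intro f
    exact (hG f).1 (this ▸ Submodule.mem_top)
  have hdv : M.toSubmodule.map dv = ⊤ := by
    refine eq_top_of_pow_mem hξ (fun k => ?_) ?_
    · by_cases h0 : ξ w = 0
      · have h1 : dv ⁅x, lf ξ ^ k • cst w⁆ = -(tau ⁅cst w, x⁆ • lf ξ ^ k) := by
          have h2 : cst w (dv x) = C (tau ⁅cst w, x⁆) := by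
            rw [← dv_of_mem_H_one (lie_mem_H (cst_mem w) hx2 (by omega)), dv_lie]
            have : dv (cst w) = 0 := by simp [dv_apply]
            rw [this, map_zero, sub_zero]
          rw [dv_lie, dv_smul_cst, cst_lf_pow, h0, Derivation.smul_apply, h2, smul_eq_C_mul]
          simp [mul_comm]
        have h3 : tau ⁅cst w, x⁆ • lf ξ ^ k ∈ M.toSubmodule.map dv := by
          rw [← neg_mem_iff, ← h1]
          exact ⟨_, M.lie_mem hx (hpow k), rfl⟩
        exact (Submodule.smul_mem_iff _ htau).1 h3
      · have h1 : dv (lf ξ ^ (k + 1) • cst w) = (((k : K) + 1) * ξ w) • lf ξ ^ k := by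
          rw [dv_smul_cst, cst_lf_pow, Nat.add_sub_cancel, smul_eq_C_mul]
          push_cast; rfl
        have h3 : (((k : K) + 1) * ξ w) • lf ξ ^ k ∈ M.toSubmodule.map dv :=
          h1 ▸ ⟨_, hpow (k + 1), rfl⟩
        exact (Submodule.smul_mem_iff _ (mul_ne_zero (Nat.cast_add_one_ne_zero k) h0)).1 h3
    · rintro _ ⟨Z, hZ, rfl⟩ η v
      rw [← lin_smulRight_apply, ← dv_lie_lin]
      exact ⟨_, M.lie_mem (hlin _) hZ, rfl⟩
  have hn : 0 < n := by
    rcases Nat.eq_zero_or_pos n with rfl | h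
    · exact absurd (Subsingleton.elim w 0) hw
    · exact h
  rw [eq_top_iff]
  intro D _
  obtain ⟨Z, hZ, hZD⟩ : dv D ∈ M.toSubmodule.map dv := hdv ▸ Submodule.mem_top
  suffices h : D - Z ∈ M by
    have := M.add_mem h hZ
    rwa [sub_add_cancel] at this
  have h0 : dv (D - Z) = 0 := by rw [map_sub, hZD, sub_self]
  have h1 : (n : K) • (D - Z) + ⁅euler K n, D - Z⁆ ∈ M.toSubmodule := by
    have := sum_ham (D - Z)
    rw [h0, zero_smul, sub_zero] at this
    rw [← this]
    exact M.toSubmodule.sum_mem fun i _ => M.toSubmodule.sum_mem fun j _ => hham _ _ _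
  refine mem_of_cmpt_mem (M := M.toSubmodule) fun k => ?_
  have h2 := cmpt_mem_of_euler_stable (M := M.toSubmodule) (fun D hD => M.lie_mem he hD) h1 k
  rw [map_add, map_smul, cmpt_euler_lie] at h2
  have h3 : (n : K) • cmpt k (D - Z) + ((k : K) - 1) • cmpt k (D - Z) =
      (((n - 1 + k : ℕ) : K)) • cmpt k (D - Z) := by
    have h4 : ((n - 1 + k : ℕ) : K) = (n : K) + ((k : K) - 1) := by
      push_cast [Nat.cast_sub (show 1 ≤ n from hn)]; ring
    rw [h4]; exact (add_smul _ _ (cmpt k (D - Z))).symm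
  rw [h3] at h2
  rcases Nat.eq_zero_or_pos k with rfl | hk
  · obtain ⟨v, hv⟩ := mem_H_zero.1 (cmpt_mem 0 (D - Z))
    rw [hv]; exact hcst v
  · exact (Submodule.smul_mem_iff _ (Nat.cast_ne_zero.2 (by omega))).1 h2

end Fill

/-! ### Maximality over an algebraically closed field -/

section Closed

variable {K : Type*} [Field K] {n : ℕ}

/-- Over an algebraically closed field, the conditions `Std` force maximality. -/
theorem Std.maximal [CharZero K] [IsAlgClosed K] (hn : 0 < n) {L : LieSubalgebra K (Vect K n)}
    [FiniteDimensional K L] (h : Std L) (hgr : ∀ D ∈ L, ∀ k, cmpt k D ∈ L)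
    {M : LieSubalgebra K (Vect K n)} (hLM : L ≤ M) : M = L ∨ M = ⊤ := by
  by_cases hfd : FiniteDimensional K M
  · exact Or.inl (h.eq_of_finiteDimensional hgr hLM)
  right
  have he : euler K n ∈ M := hLM (h.euler_mem hgr)
  have hS := h.mono hLM
  have hM : ∀ v : Fin n → K, ∀ D ∈ M.toSubmodule, ⁅cst v, D⁆ ∈ M.toSubmodule :=
    fun v D hD => M.lie_mem (hS.cst_mem v) hD
  have hgrM : ∀ D ∈ M.toSubmodule, ∀ l, cmpt l D ∈ M.toSubmodule := fun D hD l =>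
    cmpt_mem_of_euler_stable (M := M.toSubmodule) (fun D hD => M.lie_mem he hD) hD l
  obtain ⟨ξ, w, hξ, hw, hpow⟩ := exists_pow_smul_cst hM hgrM
    (exists_mem_H_of_infinite hM hgrM hfd)
  obtain ⟨x, hxL, hx2, htau⟩ := h.exists_tau_ne_zero hgr hn hw
  have hx : x ∈ M := hLM hxL
  -- the rank one element `ξ ∂_w` of the linear part of `M` forces it to be all of `gl n`
  let g : Submodule K (Module.End K (Fin n → K)) := M.toSubmodule.comap lin
  have hg : ∀ A, A ∈ g ↔ lin A ∈ M := fun A => Iff.rfl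
  choose Xf hXf using fun v : Fin n → K =>
    mem_H_one.1 (lie_mem_H (PolyVect.cst_mem v) hx2 (c := 1) (by omega))
  have hgtop : g = ⊤ := by
    refine eq_top_of_op_mem (g := g) (w := w) (ξ := ξ) ?_ ?_ ?_ hw hξ ?_ Xf ?_ ?_ ?_
    · intro A hA B hB
      have h1 := M.lie_mem ((hg B).1 hB) ((hg A).1 hA)
      rw [lie_lin_lin] at h1
      exact h1
    · exact fun F hF => hS.irr F hF
    · rw [hg, lin_one]; exact he
    · rw [hg, lin_smulRight]
      simpa using hpow 1
    · intro v
      rw [hg, ← hXf]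
      exact hM v x hx
    · intro u v
      apply cst_injective
      rw [← lie_cst_lin, ← lie_cst_lin, ← hXf, ← hXf, leibniz_lieV (cst v), lie_cst_cst, zero_lieV,
        zero_add]
    · rw [← tau_lin, ← hXf]; exact htau
  exact eq_top_of_pow_smul_cst_mem hS.cst_mem (fun A => (hg A).1 (hgtop ▸ Submodule.mem_top)) hξ hw
    hpow hx hx2 htau

end Closed

/-! ### Complexification -/

section Complexification

variable {K : Type*} [Field K] {n : ℕ} {F : Type*} [Field F]

/-- Extension of scalars of a vector field along a field homomorphism. -/
noncomputable def extV (j : K →+* F) : Vect K n →+ Vect F n where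
  toFun D := mkDerivation F fun i => map j (D (X i))
  map_zero' := by apply derivation_ext; intro i; simp
  map_add' D D' := by apply derivation_ext; intro i; simp

@[simp] theorem extV_X (j : K →+* F) (D : Vect K n) (i : Fin n) :
    extV j D (X i) = map j (D (X i)) := by simp [extV]

theorem extV_map (j : K →+* F) (D : Vect K n) (p : MvPolynomial (Fin n) K) :
    extV j D (map j p) = map j (D p) := by
  induction p using MvPolynomial.induction_on with
  | C a =>
    have h1 : D (C a) = 0 := D.map_algebraMap a
    have h2 : extV j D (C (j a)) = 0 := (extV j D).map_algebraMap (j a)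
    rw [map_C, h1, h2, map_zero]
  | add p q hp hq => simp only [map_add, hp, hq]
  | mul_X p i hp =>
    simp only [map_mul, map_X, Derivation.leibniz, smul_eq_mul, map_add, hp, extV_X]

theorem extV_smul (j : K →+* F) (a : K) (D : Vect K n) : extV j (a • D) = j a • extV j D := by
  apply derivation_ext; intro i
  simp [smul_eq_C_mul]

theorem extV_lie (j : K →+* F) (D D' : Vect K n) : extV j ⁅D, D'⁆ = ⁅extV j D, extV j D'⁆ := by
  apply derivation_ext; intro i
  simp only [extV_X, lie_X, extV_map, map_sub]

theorem extV_cst (j : K →+* F) (v : Fin n → K) : extV j (cst v) = cst fun i => j (v i) := by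
  apply derivation_ext; intro i; simp

theorem extV_mem_H (j : K →+* F) {D : Vect K n} {k : ℕ} (h : D ∈ H K n k) :
    extV j D ∈ H F n k := fun i => by
  rw [extV_X]; exact (h i).map j

theorem extV_injective (j : K →+* F) : Function.Injective (extV j : Vect K n →+ Vect F n) := by
  intro D D' h
  apply derivation_ext; intro i
  apply map_injective j j.injective
  rw [← extV_X, ← extV_X, h]

theorem cmpt_extV (j : K →+* F) (k : ℕ) (D : Vect K n) : cmpt k (extV j D) = extV j (cmpt k D) := by
  apply derivation_ext; intro i
  rw [cmpt_X, extV_X, extV_X, cmpt_X]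
  ext m
  simp only [coeff_homogeneousComponent, coeff_map]
  split_ifs <;> simp

/-- Extension of scalars of an endomorphism of `Kⁿ`. -/
noncomputable def extE (j : K →+* F) (A : Module.End K (Fin n → K)) : Module.End F (Fin n → F) :=
  Matrix.toLin' ((LinearMap.toMatrix' A).map j)

theorem extE_apply (j : K →+* F) (A : Module.End K (Fin n → K)) (v : Fin n → K) :
    extE j A (fun i => j (v i)) = fun i => j (A v i) := by
  funext i
  have h := RingHom.map_mulVec j (LinearMap.toMatrix' A) v i
  rw [LinearMap.toMatrix'_mulVec] at h
  rw [h, extE, Matrix.toLin'_apply]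
  rfl

theorem extV_lin (j : K →+* F) (A : Module.End K (Fin n → K)) :
    extV j (lin A) = lin (extE j A) := by
  apply derivation_ext; intro i
  have h : ∀ l : Fin n, extE j A (Pi.single l (1 : F)) i = j (A (Pi.single l (1 : K)) i) := by
    intro l
    have := congrFun (extE_apply j A (Pi.single l (1 : K))) i
    rw [← this]
    refine congrFun (congrArg (extE j A) (funext fun m => ?_)) i
    by_cases hm : m = l
    · subst hm; simp
    · simp [hm]
  rw [extV_X, lin_X, lin_X, lf_apply, lf_apply, map_sum]
  refine Finset.sum_congr rfl fun l _ => ?_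
  simp [h]

/-- A field homomorphism `j : K → F` exhibiting `F` as `K ⊕ I K` with `I² = -1`. -/
structure IsCplx (j : K →+* F) (I : F) : Prop where
  sq : I * I = -1
  ex : ∀ z, ∃ a b, z = j a + I * j b
  unique : ∀ a b, j a + I * j b = 0 → a = 0 ∧ b = 0

theorem IsCplx.vect_unique {j : K →+* F} {I : F} (hI : IsCplx j I) {A B : Vect K n}
    (h : extV j A + I • extV j B = 0) : A = 0 ∧ B = 0 := by
  have key : ∀ (i : Fin n) (m : Fin n →₀ ℕ), coeff m (A (X i)) = 0 ∧ coeff m (B (X i)) = 0 := by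
    intro i m
    apply hI.unique
    have := congrArg (fun D : Vect F n => coeff m (D (X i))) h
    rw [← coeff_map, ← coeff_map]
    simpa using this
  constructor <;> apply derivation_ext <;> intro i <;> ext m
  · simpa using (key i m).1
  · simpa using (key i m).2

/-- The complexification `L ⊕ I L` of a subalgebra `L`. -/
noncomputable def cplx {j : K →+* F} {I : F} (hI : IsCplx j I) (L : LieSubalgebra K (Vect K n)) :
    LieSubalgebra F (Vect F n) where
  carrier := {D | ∃ A ∈ L, ∃ B ∈ L, D = extV j A + I • extV j B}
  add_mem' := by
    rintro _ _ ⟨A, hA, B, hB, rfl⟩ ⟨A', hA', B', hB', rfl⟩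
    refine ⟨A + A', L.add_mem hA hA', B + B', L.add_mem hB hB', ?_⟩
    rw [map_add, map_add, smul_add]; abel
  zero_mem' := ⟨0, L.zero_mem, 0, L.zero_mem, by simp⟩
  smul_mem' := by
    rintro z _ ⟨A, hA, B, hB, rfl⟩
    obtain ⟨a, b, rfl⟩ := hI.ex z
    refine ⟨a • A - b • B, L.sub_mem (L.smul_mem a hA) (L.smul_mem b hB), a • B + b • A,
      L.add_mem (L.smul_mem a hB) (L.smul_mem b hA), ?_⟩
    rw [map_add, map_sub, extV_smul, extV_smul, extV_smul, extV_smul]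
    have hC : (C I : MvPolynomial (Fin n) F) * C I = -1 := by
      rw [← C_mul, hI.sq]; simp
    ext1 f
    simp only [Derivation.smul_apply, Derivation.add_apply, Derivation.sub_apply, smul_eq_C_mul,
      C_add, C_mul]
    linear_combination (C (j b) * extV j B (X f)) * hC
  lie_mem' := by
    rintro _ _ ⟨A, hA, B, hB, rfl⟩ ⟨A', hA', B', hB', rfl⟩
    refine ⟨⁅A, A'⁆ - ⁅B, B'⁆, L.sub_mem (L.lie_mem hA hA') (L.lie_mem hB hB'), ⁅A, B'⁆ + ⁅B, A'⁆,
      L.add_mem (L.lie_mem hA hB') (L.lie_mem hB hA'), ?_⟩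
    rw [map_add, map_sub, extV_lie, extV_lie, extV_lie, extV_lie, add_lieV, lie_addV, lie_addV,
      lie_smulV, smul_lieV, smul_lieV, lie_smulV]
    have hC : (C I : MvPolynomial (Fin n) F) * C I = -1 := by
      rw [← C_mul, hI.sq]; simp
    ext1 f
    simp only [Derivation.smul_apply, Derivation.add_apply, Derivation.sub_apply, smul_eq_C_mul]
    linear_combination (⁅extV j B, extV j B'⁆ (X f)) * hC

theorem mem_cplx {j : K →+* F} {I : F} {hI : IsCplx j I} {L : LieSubalgebra K (Vect K n)}
    {D : Vect F n} : D ∈ cplx hI L ↔ ∃ A ∈ L, ∃ B ∈ L, D = extV j A + I • extV j B := Iff.rfl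

theorem extV_mem_cplx {j : K →+* F} {I : F} {hI : IsCplx j I} {L : LieSubalgebra K (Vect K n)}
    {D : Vect K n} : extV j D ∈ cplx hI L ↔ D ∈ L := by
  constructor
  · rintro ⟨A, hA, B, hB, h⟩
    have : extV j (A - D) + I • extV j B = 0 := by
      rw [map_sub, h]; abel
    rw [← sub_eq_zero.1 (hI.vect_unique this).1]
    exact hA
  · intro h
    exact ⟨D, h, 0, L.zero_mem, by simp⟩

theorem cplx_mono {j : K →+* F} {I : F} {hI : IsCplx j I} {L M : LieSubalgebra K (Vect K n)}
    (h : L ≤ M) : cplx hI L ≤ cplx hI M := by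
  rintro _ ⟨A, hA, B, hB, rfl⟩
  exact ⟨A, h hA, B, h hB, rfl⟩

theorem cmpt_mem_cplx {j : K →+* F} {I : F} {hI : IsCplx j I} {L : LieSubalgebra K (Vect K n)}
    (hgr : ∀ D ∈ L, ∀ k, cmpt k D ∈ L) : ∀ D ∈ cplx hI L, ∀ k, cmpt k D ∈ cplx hI L := by
  rintro _ ⟨A, hA, B, hB, rfl⟩ k
  exact ⟨_, hgr A hA k, _, hgr B hB k, by rw [map_add, LinearMap.map_smul, cmpt_extV, cmpt_extV]⟩

theorem finiteDimensional_cplx {j : K →+* F} {I : F} (hI : IsCplx j I)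
    (L : LieSubalgebra K (Vect K n)) [FiniteDimensional K L] :
    FiniteDimensional F (cplx hI L) := by
  have hL : FiniteDimensional K L.toSubmodule := ‹_›
  obtain ⟨N, hN⟩ := le_degLT_of_finiteDimensional L.toSubmodule
  have := finiteDimensional_degLT (K := F) (n := n) N
  have hle : (cplx hI L).toSubmodule ≤ degLT F n N := by
    rintro _ ⟨A, hA, B, hB, rfl⟩ k hk
    rw [map_add, LinearMap.map_smul, cmpt_extV, cmpt_extV, hN hA k hk, hN hB k hk]
    simp
  exact Submodule.finiteDimensional_of_le hle

/-- If a set `S` of operators acts irreducibly on `Kⁿ` without a complex structure, its extension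
to `Fⁿ` acts irreducibly. -/
theorem irr_cplx {j : K →+* F} {I : F} (hI : IsCplx j I) (S : Set (Module.End K (Fin n → K)))
    (irr : ∀ W : Submodule K (Fin n → K), (∀ A ∈ S, ∀ u ∈ W, A u ∈ W) → W = ⊥ ∨ W = ⊤)
    (hJ : ¬ ∃ J : Module.End K (Fin n → K), (∀ v, J (J v) = -v) ∧ ∀ A ∈ S, ∀ u, J (A u) = A (J u))
    (W : Submodule F (Fin n → F)) (hW : ∀ A ∈ S, ∀ u ∈ W, extE j A u ∈ W) : W = ⊥ ∨ W = ⊤ := by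
  let e : (Fin n → K) → (Fin n → F) := fun v i => j (v i)
  have e_zero : e 0 = 0 := by funext i; simp [e]
  have e_add : ∀ u v, e (u + v) = e u + e v := fun u v => by funext i; simp [e]
  have e_neg : ∀ u, e (-u) = -e u := fun u => by funext i; simp [e]
  have e_smul : ∀ (a : K) v, e (a • v) = j a • e v := fun a v => by funext i; simp [e]
  have e_ex : ∀ w : Fin n → F, ∃ x y, w = e x + I • e y := by
    intro w
    choose x y h using fun i => hI.ex (w i)
    exact ⟨x, y, funext fun i => by simpa [e] using h i⟩
  have hext : ∀ A v, extE j A (e v) = e (A v) := fun A v => extE_apply j A v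
  have hII : ∀ w : Fin n → F, I • I • w = -w := fun w => by rw [smul_smul, hI.sq]; simp
  -- multiplication by `-I`
  have hrot : ∀ x y, e x + I • e y ∈ W → e y + I • e (-x) ∈ W := by
    intro x y h
    have h' := W.neg_mem (W.smul_mem I h)
    rw [smul_add, hII] at h'
    convert h' using 1
    rw [e_neg, smul_neg]; abel
  let W₀ : Submodule K (Fin n → K) :=
    { carrier := {x | e x ∈ W}
      add_mem' := fun {u v} hu hv => by
        change e (u + v) ∈ W
        rw [e_add]; exact W.add_mem hu hv
      zero_mem' := by change e 0 ∈ W; rw [e_zero]; exact W.zero_mem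
      smul_mem' := fun a v hv => by
        change e (a • v) ∈ W
        rw [e_smul]; exact W.smul_mem _ hv }
  let W₁ : Submodule K (Fin n → K) :=
    { carrier := {x | ∃ y, e x + I • e y ∈ W}
      add_mem' := by
        rintro u v ⟨y, hy⟩ ⟨y', hy'⟩
        refine ⟨y + y', ?_⟩
        convert W.add_mem hy hy' using 1
        rw [e_add, e_add, smul_add]; abel
      zero_mem' := ⟨0, by rw [e_zero]; simp⟩
      smul_mem' := by
        rintro a v ⟨y, hy⟩
        refine ⟨a • y, ?_⟩
        convert W.smul_mem (j a) hy using 1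
        rw [e_smul, e_smul, smul_add, smul_comm I (j a)] }
  have h₀ : ∀ A ∈ S, ∀ u ∈ W₀, A u ∈ W₀ := fun A hA u hu => by
    change e (A u) ∈ W
    rw [← hext]; exact hW A hA _ hu
  have hpair : ∀ A ∈ S, ∀ x y, e x + I • e y ∈ W → e (A x) + I • e (A y) ∈ W := by
    intro A hA x y h
    have := hW A hA _ h
    rwa [map_add, map_smul, hext, hext] at this
  have h₁ : ∀ A ∈ S, ∀ u ∈ W₁, A u ∈ W₁ := by
    rintro A hA u ⟨y, hy⟩
    exact ⟨A y, hpair A hA u y hy⟩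
  rcases irr W₀ h₀ with hbot | htop
  swap
  · right
    have hall : ∀ x, e x ∈ W := fun x => by
      have : x ∈ W₀ := htop ▸ Submodule.mem_top
      exact this
    refine eq_top_iff.2 fun w _ => ?_
    obtain ⟨x, y, rfl⟩ := e_ex w
    exact W.add_mem (hall x) (W.smul_mem I (hall y))
  rcases irr W₁ h₁ with hbot₁ | htop₁
  · left
    refine (Submodule.eq_bot_iff _).2 fun w hw => ?_
    obtain ⟨x, y, rfl⟩ := e_ex w
    have hx : x ∈ W₁ := ⟨y, hw⟩
    have hy : y ∈ W₁ := ⟨-x, hrot x y hw⟩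
    rw [hbot₁, Submodule.mem_bot] at hx hy
    rw [hx, hy, e_zero]; simp
  · -- `W` is the graph of a complex structure
    exfalso
    have hex : ∀ x, ∃ y, e x + I • e y ∈ W := fun x => by
      have : x ∈ W₁ := htop₁ ▸ Submodule.mem_top
      exact this
    have huniq : ∀ x y y', e x + I • e y ∈ W → e x + I • e y' ∈ W → y = y' := by
      intro x y y' h h'
      have h2 := W.sub_mem h h'
      have h3 : e 0 + I • e (y - y') ∈ W := by
        convert h2 using 1
        rw [e_zero, sub_eq_add_neg y, e_add, e_neg, smul_add, smul_neg]; abel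
      have h4 : y - y' ∈ W₀ := by
        have := hrot _ _ h3
        rw [neg_zero, e_zero, smul_zero, add_zero] at this
        exact this
      rw [hbot, Submodule.mem_bot] at h4
      exact sub_eq_zero.1 h4
    choose J hJW using hex
    refine hJ ⟨{ toFun := J, map_add' := fun u v => ?_, map_smul' := fun a v => ?_ },
      fun v => ?_, fun A hA u => ?_⟩
    · refine huniq (u + v) _ _ (hJW _) ?_
      convert W.add_mem (hJW u) (hJW v) using 1
      rw [e_add, e_add, smul_add]; abel
    · refine huniq (a • v) _ _ (hJW _) ?_
      convert W.smul_mem (j a) (hJW v) using 1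
      rw [RingHom.id_apply, e_smul, e_smul, smul_add, smul_comm I (j a)]
    · exact huniq (J v) _ _ (hJW _) (hrot _ _ (hJW v))
    · exact huniq (A u) _ _ (hJW _) (hpair A hA _ _ (hJW u))

theorem Std.cplx {j : K →+* F} {I : F} (hI : IsCplx j I) {L : LieSubalgebra K (Vect K n)}
    (h : Std L)
    (hJ : ¬ ∃ J : Module.End K (Fin n → K), (∀ v, J (J v) = -v) ∧
      ∀ A, lin A ∈ L → ∀ u, J (A u) = A (J u)) : Std (cplx hI L) where
  cst_mem w := by
    choose x y hxy using fun i => hI.ex (w i)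
    refine ⟨cst x, h.cst_mem x, cst y, h.cst_mem y, ?_⟩
    rw [extV_cst, extV_cst, ← map_smul, ← map_add]
    congr 1
    funext i
    simpa using hxy i
  irr W hW := by
    refine irr_cplx hI {A | lin A ∈ L} h.irr hJ W fun A hA u hu => hW _ ?_ u hu
    rw [← extV_lin]
    exact extV_mem_cplx.2 hA
  quad := by
    obtain ⟨D, hD, h2, h0⟩ := h.quad
    refine ⟨extV j D, extV_mem_cplx.2 hD, extV_mem_H j h2, fun h' => h0 ?_⟩
    apply extV_injective j
    rw [h', map_zero]

/-- The conditions `Std`, together with the absence of a complex structure, force maximality over a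
field whose complexification is algebraically closed. -/
theorem Std.maximal_of_cplx [CharZero F] [IsAlgClosed F] (hn : 0 < n) {j : K →+* F} {I : F}
    (hI : IsCplx j I) {L : LieSubalgebra K (Vect K n)} [FiniteDimensional K L] (h : Std L)
    (hgr : ∀ D ∈ L, ∀ k, cmpt k D ∈ L)
    (hJ : ¬ ∃ J : Module.End K (Fin n → K), (∀ v, J (J v) = -v) ∧
      ∀ A, lin A ∈ L → ∀ u, J (A u) = A (J u))
    {M : LieSubalgebra K (Vect K n)} (hLM : L ≤ M) : M = L ∨ M = ⊤ := by
  have := finiteDimensional_cplx hI L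
  rcases (h.cplx hI hJ).maximal hn (cmpt_mem_cplx hgr) (cplx_mono (hI := hI) hLM) with hM | hM
  · left
    refine le_antisymm (fun D hD => ?_) hLM
    rw [← extV_mem_cplx (hI := hI), ← hM]
    exact extV_mem_cplx.2 hD
  · right
    refine eq_top_iff.2 fun D _ => ?_
    rw [← extV_mem_cplx (hI := hI), hM]
    exact LieSubalgebra.mem_top _

end Complexification

/-! ### The conditions on the graded pieces in coordinates -/

section Translation

variable {K : Type*} [Field K] {n : ℕ}

/-- The value of a vector field at the origin. -/
noncomputable def atZero : Vect K n →ₗ[K] (Fin n → K) where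
  toFun D i := coeff 0 (D (X i))
  map_add' D D' := by funext i; simp
  map_smul' a D := by funext i; simp

theorem atZero_cst (v : Fin n → K) : atZero (cst v) = v := by
  funext i; simp [atZero]

variable [CharZero K]

theorem VectP_neg_one : VectP K n (-1) = H K n 0 := VectP_eq 0 _ (by norm_num)

theorem VectP_zero : VectP K n 0 = H K n 1 := VectP_eq 1 _ (by norm_num)

theorem VectP_one : VectP K n 1 = H K n 2 := VectP_eq 2 _ (by norm_num)

theorem inf_VectP_neg_one_iff {L : LieSubalgebra K (Vect K n)} :
    L.toSubmodule ⊓ VectP K n (-1) = VectP K n (-1) ↔ ∀ v : Fin n → K, cst v ∈ L := by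
  rw [inf_eq_right, VectP_neg_one]
  constructor
  · intro h v
    exact h (cst_mem v)
  · intro h D hD
    obtain ⟨v, rfl⟩ := mem_H_zero.1 hD
    exact h v

theorem inf_VectP_one_iff {L : LieSubalgebra K (Vect K n)} :
    L.toSubmodule ⊓ VectP K n 1 ≠ ⊥ ↔ ∃ D ∈ L, D ∈ H K n 2 ∧ D ≠ 0 := by
  rw [VectP_one, Submodule.ne_bot_iff]
  constructor
  · rintro ⟨D, ⟨hD, h2⟩, h0⟩
    exact ⟨D, hD, h2, h0⟩
  · rintro ⟨D, hD, h2, h0⟩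
    exact ⟨D, ⟨hD, h2⟩, h0⟩

theorem isIrreducibleRep_iff (hn : 0 < n) {L : LieSubalgebra K (Vect K n)}
    (hc : ∀ v : Fin n → K, cst v ∈ L) : IsIrreducibleRep K n L ↔
      ∀ F : Submodule K (Fin n → K), (∀ A, lin A ∈ L → ∀ u ∈ F, A u ∈ F) → F = ⊥ ∨ F = ⊤ := by
  rw [IsIrreducibleRep, inf_VectP_neg_one_iff.2 hc, VectP_neg_one, VectP_zero]
  constructor
  · rintro ⟨-, h⟩ F hF
    have hmap : ∀ v, cst v ∈ F.map cst ↔ v ∈ F := fun v =>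
      (cst_injective.mem_set_image : cst v ∈ Set.image cst (F : Set (Fin n → K)) ↔ _)
    have hle : F.map cst ≤ H K n 0 := by
      rintro _ ⟨v, -, rfl⟩
      exact cst_mem v
    have hst : ∀ x ∈ L.toSubmodule ⊓ H K n 1, ∀ y ∈ F.map cst, ⁅x, y⁆ ∈ F.map cst := by
      rintro x ⟨hx, hx1⟩ _ ⟨v, hv, rfl⟩
      obtain ⟨A, rfl⟩ := mem_H_one.1 hx1
      rw [lie_lin_cst, ← map_neg]
      exact (hmap _).2 (F.neg_mem (hF A hx v hv))
    rcases h (F.map cst) hle hst with h' | h'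
    · left
      refine (Submodule.eq_bot_iff _).2 fun v hv => ?_
      have := (hmap v).2 hv
      rw [h', Submodule.mem_bot] at this
      exact cst_injective (by rw [this, map_zero])
    · right
      refine eq_top_iff.2 fun v _ => ?_
      rw [← hmap, h']
      exact cst_mem v
  · intro h
    refine ⟨?_, fun F hF hFL => ?_⟩
    · rw [Submodule.ne_bot_iff]
      refine ⟨cst fun _ => 1, cst_mem _, fun h0 => ?_⟩
      have : (fun _ => (1 : K)) = (0 : Fin n → K) := cst_injective (by rw [h0, map_zero])
      exact one_ne_zero (congrFun this ⟨0, hn⟩)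
    · have hst : ∀ A, lin A ∈ L → ∀ u ∈ F.comap cst, A u ∈ F.comap cst := by
        intro A hA u hu
        have := F.neg_mem (hFL (lin A) ⟨hA, lin_mem A⟩ _ hu)
        rwa [lie_lin_cst, neg_neg] at this
      rcases h (F.comap cst) hst with h' | h'
      · left
        refine (Submodule.eq_bot_iff _).2 fun D hD => ?_
        obtain ⟨v, rfl⟩ := mem_H_zero.1 (hF hD)
        have : v ∈ F.comap cst := hD
        rw [h', Submodule.mem_bot] at this
        rw [this, map_zero]
      · right
        refine le_antisymm hF fun D hD => ?_
        obtain ⟨v, rfl⟩ := mem_H_zero.1 hD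
        have : v ∈ F.comap cst := h' ▸ Submodule.mem_top
        exact this

theorem hasComplexStructureRep_iff {L : LieSubalgebra K (Vect K n)}
    (hc : ∀ v : Fin n → K, cst v ∈ L) : HasComplexStructureRep K n L ↔
      ∃ J : Module.End K (Fin n → K), (∀ v, J (J v) = -v) ∧
        ∀ A, lin A ∈ L → ∀ u, J (A u) = A (J u) := by
  rw [HasComplexStructureRep, inf_VectP_neg_one_iff.2 hc, VectP_neg_one, VectP_zero]
  constructor
  · rintro ⟨J, h1, h2, h3⟩
    have hJ : ∀ v, cst (atZero (J (cst v))) = J (cst v) := by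
      intro v
      obtain ⟨w, hw⟩ := mem_H_zero.1 (h1 _ (cst_mem v))
      rw [hw, atZero_cst]
    refine ⟨atZero ∘ₗ J ∘ₗ cst, fun v => cst_injective ?_, fun A hA u => cst_injective ?_⟩
    · simp only [LinearMap.comp_apply]
      rw [hJ, hJ, h2 _ (cst_mem v), map_neg]
    · simp only [LinearMap.comp_apply]
      have h := h3 (lin A) ⟨hA, lin_mem A⟩ (cst u) (cst_mem u)
      rw [lie_lin_cst, ← hJ u, lie_lin_cst, LinearMap.map_neg J] at h
      rw [hJ]
      exact neg_injective h
  · rintro ⟨J, h1, h2⟩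
    refine ⟨cst ∘ₗ J ∘ₗ atZero, fun _ _ => cst_mem _, fun D hD => ?_, fun x hx D hD => ?_⟩
    · obtain ⟨v, rfl⟩ := mem_H_zero.1 hD
      simp only [LinearMap.comp_apply, atZero_cst]
      rw [h1, map_neg]
    · obtain ⟨v, rfl⟩ := mem_H_zero.1 hD
      obtain ⟨hx, hx1⟩ := hx
      obtain ⟨A, rfl⟩ := mem_H_one.1 hx1
      simp only [LinearMap.comp_apply]
      rw [lie_lin_cst, atZero_cst, lie_lin_cst, ← map_neg cst, atZero_cst, map_neg J, h2 A hx,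
        map_neg cst]

end Translation

section Scalars

variable (𝕜 : Type) [RCLike 𝕜]

theorem isAlgClosed_of_I_ne_zero (h : (RCLike.I : 𝕜) ≠ 0) : IsAlgClosed 𝕜 := by
  have him := (RCLike.I_eq_zero_or_im_I_eq_one (K := 𝕜)).resolve_left h
  exact IsAlgClosed.of_ringEquiv ℂ 𝕜 (RCLike.complexRingEquiv him).symm

theorem isCplx_of_I_eq_zero (h : (RCLike.I : 𝕜) = 0) :
    IsCplx (Complex.ofRealHom.comp (RCLike.realRingEquiv h : 𝕜 →+* ℝ)) Complex.I where
  sq := Complex.I_mul_I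
  ex z := ⟨(RCLike.realRingEquiv h).symm z.re, (RCLike.realRingEquiv h).symm z.im, by
    apply Complex.ext <;> simp⟩
  unique a b hab := by
    have h1 := congrArg Complex.re hab
    have h2 := congrArg Complex.im hab
    constructor
    · apply (RCLike.realRingEquiv h).injective
      simpa using h1
    · apply (RCLike.realRingEquiv h).injective
      simpa using h2

theorem mul_self_ne_neg_one_of_I_eq_zero (h : (RCLike.I : 𝕜) = 0) (c : 𝕜) : c * c ≠ -1 := by
  intro hc
  have := congrArg (RCLike.realRingEquiv h) hc
  rw [map_mul, map_neg, map_one] at this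
  nlinarith [mul_self_nonneg (RCLike.realRingEquiv h c)]

end Scalars

end PolyVect

open PolyVect

/-- **Main theorem.** A finite-dimensional graded Lie subalgebra
`L = L₋₁ ⊕ L₀ ⊕ ⋯ ⊕ L_k` of `Vect_pol(E)` (`𝕜 = ℝ` or `ℂ`, i.e. `RCLike 𝕜`) is maximal iff
(1) `L₋₁ = Vect₋₁(E)`, (2) `L` is irreducible, (3) `L₁ ≠ 0`, and (4) in the real case
(characterized among `RCLike` fields by `RCLike.I = 0`), the representation `(L₋₁, ad|_{L₀})`
admits no complex structure. -/
theorem statement0 (𝕜 : Type) [RCLike 𝕜] (n : ℕ) (hn : 0 < n)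
    (L : LieSubalgebra 𝕜 (Vect 𝕜 n))
    (hgraded : IsGradedSubalg 𝕜 n L)
    (hfd : FiniteDimensional 𝕜 L) :
    IsMaxSubalg 𝕜 n L ↔
      (L.toSubmodule ⊓ VectP 𝕜 n (-1) = VectP 𝕜 n (-1) ∧
       IsIrreducibleRep 𝕜 n L ∧
       L.toSubmodule ⊓ VectP 𝕜 n 1 ≠ ⊥ ∧
       ((RCLike.I : 𝕜) = 0 → ¬ HasComplexStructureRep 𝕜 n L)) := by

  have hgr : ∀ D ∈ L, ∀ k, cmpt k D ∈ L := fun D hD k => cmpt_mem_of_graded hgraded hD k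
  constructor
  · intro hmax
    have hc : ∀ v, cst v ∈ L := cst_mem_of_maximal L hgr hmax
    refine ⟨inf_VectP_neg_one_iff.2 hc,
      (isIrreducibleRep_iff hn hc).2 (irreducible_of_maximal L hgr hmax hc),
      inf_VectP_one_iff.2 (exists_H_two_of_maximal hn L hgr hmax hc), fun hI hJ => ?_⟩
    obtain ⟨J, hJ, hJL⟩ := (hasComplexStructureRep_iff hc).1 hJ
    exact not_complex_of_maximal hn (mul_self_ne_neg_one_of_I_eq_zero 𝕜 hI) L hgr hmax hc J hJ hJL
  · rintro ⟨h1, h2, h3, h4⟩ M hLM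
    have hc := inf_VectP_neg_one_iff.1 h1
    have hS : Std L := ⟨hc, (isIrreducibleRep_iff hn hc).1 h2, inf_VectP_one_iff.1 h3⟩
    by_cases hI : (RCLike.I : 𝕜) = 0
    · exact hS.maximal_of_cplx hn (isCplx_of_I_eq_zero 𝕜 hI) hgr
        (fun hJ => h4 hI ((hasComplexStructureRep_iff hc).2 hJ)) hLM
    · have := isAlgClosed_of_I_ne_zero 𝕜 hI
      exact hS.maximal hn hgr hLM
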